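/- arXiv:1511.01290 — 3 statements merged into one kernel-verified Lean document; each statement's English description precedes it below -/
import Mathlib

section
/- There exist parameters k ≥ 0, ℓ ≥ −1/2, L₀ > 0, a constant E₀ > 0, radii 0 < R₀ < R₁ < ∞, and a C¹ function y : [0,∞) → ℝ such that: (i) with ϱ and p given by the ansatz integral formulas for 0 < r ≤ R₁ and defined to be 0 for r > R₁, and m the Hawking mass, one has 2m(r)/r < 1 and y′(r) = −(1 − 2m(r)/r)^{−1}[4πr p(r) + m(r)/r²] for all r > 0; (ii) ϱ and p vanish on [0,R₀] and on [R₁,∞), and ϱ(r) > 0 for some r ∈ (R₀,R₁); (iii) the solution is asymptotically flat, i.e. lim_{r→∞} y(r) = ln E₀; and (iv) 4/5 < sup_{r>0} 2m(r)/r < 8/9. (These are static, spherically symmetric, asymptotically flat solutions of the massless Einstein–Vlasov system with compactly supported matter.) -/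
open MeasureTheory Real Set Filter

/-- The constant `c_ℓ = 2π ∫₀¹ s^ℓ (1-s)^{-1/2} ds`. -/
noncomputable def cConst (ℓ : ℝ) : ℝ :=
  2 * π * ∫ s in Set.Ioc (0 : ℝ) 1, s ^ ℓ / Real.sqrt (1 - s)

/-- Energy density of the massless Einstein--Vlasov ansatz. -/
noncomputable def rho (k ℓ L0 : ℝ) (y : ℝ → ℝ) (r : ℝ) : ℝ :=
  cConst ℓ * r ^ (2 * ℓ) *
    ∫ ε in Set.Ioc (Real.sqrt L0 / r) (Real.exp (y r)),
      (1 - ε * Real.exp (-(y r))) ^ k * ε ^ 2 * (ε ^ 2 - L0 / r ^ 2) ^ (ℓ + 1 / 2)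

/-- Radial pressure of the massless Einstein--Vlasov ansatz. -/
noncomputable def pres (k ℓ L0 : ℝ) (y : ℝ → ℝ) (r : ℝ) : ℝ :=
  (cConst ℓ / (2 * ℓ + 3)) * r ^ (2 * ℓ) *
    ∫ ε in Set.Ioc (Real.sqrt L0 / r) (Real.exp (y r)),
      (1 - ε * Real.exp (-(y r))) ^ k * (ε ^ 2 - L0 / r ^ 2) ^ (ℓ + 3 / 2)

/-- The Hawking mass `m(r) = 4π ∫₀ʳ s² ϱ(s) ds`. -/
noncomputable def hawkingMass (k ℓ L0 : ℝ) (y : ℝ → ℝ) (r : ℝ) : ℝ :=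
  4 * π * ∫ s in Set.Ioc (0 : ℝ) r, s ^ 2 * rho k ℓ L0 y s

/-- The characteristic function `γ(r) = y(r) - (1/2) ln (L₀ / r²)`. -/
noncomputable def charFn (L0 : ℝ) (y : ℝ → ℝ) (r : ℝ) : ℝ :=
  y r - (1 / 2) * Real.log (L0 / r ^ 2)

/-- The inner radius `R₀ = √L₀ e^{-y(0)}`. -/
noncomputable def innerRadius (L0 : ℝ) (y : ℝ → ℝ) : ℝ :=
  Real.sqrt L0 * Real.exp (-(y 0))

/-- A quasi shell solution of the massless Einstein--Vlasov system. -/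
def QuasiShell (k ℓ L0 : ℝ) (y : ℝ → ℝ) : Prop :=
  ContDiffOn ℝ 1 y (Set.Ici 0) ∧
  ∀ r > 0, 2 * hawkingMass k ℓ L0 y r / r < 1 ∧
    HasDerivAt y
      (-(1 - 2 * hawkingMass k ℓ L0 y r / r)⁻¹ *
        (4 * π * r * pres k ℓ L0 y r + hawkingMass k ℓ L0 y r / r ^ 2)) r


noncomputable def Df (u r : ℝ) : ℝ := 10 ^ 14 * (u ^ 3 - 1) / r ^ 2
noncomputable def Yf (u r : ℝ) : ℝ := 10 ^ 14 / 2 * (u ^ 3 - 3 * u + 2) / r ^ 2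
noncomputable def Uf (r u M : ℝ) : ℝ :=
  u / r * (1 - (M / r + Yf u r) / (2 * (1 - M / r)))

lemma mean_lower {f f' : ℝ → ℝ} {a b c : ℝ} (hab : a ≤ b)
    (hf : ∀ r ∈ Icc a b, HasDerivWithinAt f (f' r) (Icc a b) r)
    (hc : ∀ r ∈ Icc a b, c ≤ f' r) : c * (b - a) ≤ f b - f a := by
  have h := image_le_of_deriv_right_le_deriv_boundary (f := fun r => c * (r - a) + f a)
    (f' := fun _ => c) (a := a) (b := b) (B := f) (B' := f') (by fun_prop)
    (fun x _ => by
      have := (((hasDerivAt_id x).sub_const a).const_mul c).add_const (f a)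
      simpa using this.hasDerivWithinAt) (by simp)
    (fun x hx => (hf x hx).continuousWithinAt)
    (fun x hx => (hf x (Ico_subset_Icc_self hx)).mono_of_mem_nhdsWithin
      (Icc_mem_nhdsGE_of_mem hx))
    (fun x hx => hc x (Ico_subset_Icc_self hx))
  have := h (right_mem_Icc.2 hab)
  linarith

lemma mean_upper {f f' : ℝ → ℝ} {a b c : ℝ} (hab : a ≤ b)
    (hf : ∀ r ∈ Icc a b, HasDerivWithinAt f (f' r) (Icc a b) r)
    (hc : ∀ r ∈ Icc a b, f' r ≤ c) : f b - f a ≤ c * (b - a) := by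
  have := mean_lower (f := fun r => - f r) (f' := fun r => - f' r) (c := -c) hab
    (fun r hr => (hf r hr).neg) (fun r hr => neg_le_neg (hc r hr))
  linarith

/-- a solution of the system on `[1,R]` inside the admissible box -/
structure Sol (u M : ℝ → ℝ) (R : ℝ) : Prop where
  hR : 1 ≤ R
  hR' : R ≤ 1 + 1 / 10000
  du : ∀ r ∈ Icc 1 R, HasDerivWithinAt u (Uf r (u r) (M r)) (Icc 1 R) r
  dM : ∀ r ∈ Icc 1 R, HasDerivWithinAt M (Df (u r) r) (Icc 1 R) r
  u1 : u 1 = 1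
  M1 : M 1 = 0
  ul : ∀ r ∈ Icc 1 R, 1 ≤ u r
  uu : ∀ r ∈ Icc 1 R, u r ≤ 2
  Ml : ∀ r ∈ Icc 1 R, 0 ≤ M r
  Mu : ∀ r ∈ Icc 1 R, M r ≤ 19 / 20

lemma Yf_nonneg {u r : ℝ} (hu : 1 ≤ u) : 0 ≤ Yf u r := by
  unfold Yf
  have : u ^ 3 - 3 * u + 2 = (u - 1) ^ 2 * (u + 2) := by ring
  rw [this]
  have : 0 ≤ u + 2 := by linarith
  positivity

lemma Df_nonneg {u r : ℝ} (hu : 1 ≤ u) : 0 ≤ Df u r := by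
  unfold Df
  have : 0 ≤ u ^ 3 - 1 := by nlinarith [one_le_pow₀ hu (n := 3)]
  positivity

noncomputable def Qf (x Y : ℝ) : ℝ := 9 * x ^ 2 + Y ^ 2 - 8 * x + 8 * Y - 6 * x * Y

lemma deriv_x {u M : ℝ → ℝ} {R : ℝ} {r : ℝ} (hr : r ∈ Icc 1 R)
    (dM : HasDerivWithinAt M (Df (u r) r) (Icc 1 R) r) :
    HasDerivWithinAt (fun s => M s / s) ((Df (u r) r - M r / r) / r) (Icc 1 R) r := by
  have hr0 : r ≠ 0 := by linarith [hr.1]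
  have := dM.div (hasDerivWithinAt_id r _) hr0
  convert! this using 1
  simp only [id]
  field_simp

lemma deriv_Y {u M : ℝ → ℝ} {R : ℝ} {r : ℝ} (hr : r ∈ Icc 1 R) 
    (du : HasDerivWithinAt u (Uf r (u r) (M r)) (Icc 1 R) r) :
    HasDerivWithinAt (fun s => Yf (u s) s)
      ((Df (u r) r - Yf (u r) r - (Df (u r) r + Yf (u r) r) * (M r / r + Yf (u r) r)
        / (2 * (1 - M r / r))) / r) (Icc 1 R) r := by
  have hr0 : r ≠ 0 := by linarith [hr.1]
  have h1 := ((((du.pow 3).sub (du.const_mul 3)).add_const 2).const_mul ((10:ℝ)^14/2)).div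
    ((hasDerivWithinAt_id r (Icc 1 R)).pow 2) (pow_ne_zero 2 hr0)
  have e : (fun s => Yf (u s) s) = (fun s => (10:ℝ)^14/2 * ((u s)^3 - 3 * u s + 2) / s^2) := by
    funext s; rfl
  rw [e]
  convert! h1 using 1
  simp only [id, Pi.pow_apply, Pi.sub_apply]
  have hU : Uf r (u r) (M r) = u r / r * (1 - (M r / r + Yf (u r) r) / (2 * (1 - M r / r))) := rfl
  rw [hU]
  set w := (M r / r + Yf (u r) r) / (2 * (1 - M r / r)) with hw
  have : (Df (u r) r + Yf (u r) r) * (M r / r + Yf (u r) r) / (2 * (1 - M r / r))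
    = (Df (u r) r + Yf (u r) r) * w := by rw [hw]; ring
  rw [this]
  clear_value w
  unfold Df Yf
  field_simp
  ring

noncomputable def Gf (x Y : ℝ) : ℝ := Qf x Y / (1 - x)

lemma deriv_G {x Y : ℝ → ℝ} {D r : ℝ} {s : Set ℝ} (hr : 1 ≤ r) (hx : 1 - x r ≠ 0)
    (dx : HasDerivWithinAt x ((D - x r) / r) s r)
    (dY : HasDerivWithinAt Y ((D - Y r - (D + Y r) * (x r + Y r) / (2 * (1 - x r))) / r) s r) :
    HasDerivWithinAt (fun t => Gf (x t) (Y t))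
      (- (4 - 3 * x r + Y r) * (Qf (x r) (Y r) + 3 * (x r + Y r) ^ 2) / 4 / (1 - x r) ^ 2 / r)
      s r := by
  have hr0 : r ≠ 0 := by linarith
  have h1 := ((((((dx.pow 2).const_mul 9).add (dY.pow 2)).sub (dx.const_mul 8)).add
    (dY.const_mul 8)).sub ((dx.const_mul 6).mul dY)).div (dx.const_sub 1) hx
  convert! h1 using 1
  simp only [Pi.pow_apply, Pi.sub_apply, Pi.add_apply, Pi.mul_apply]
  unfold Qf
  generalize x r = a at *
  generalize Y r = b at *
  field_simp
  ring

namespace Sol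
variable {u M : ℝ → ℝ} {R : ℝ}

lemma xl (h : Sol u M R) {r} (hr : r ∈ Icc 1 R) : 0 ≤ M r / r :=
  div_nonneg (h.Ml r hr) (by linarith [hr.1])

lemma xu (h : Sol u M R) {r} (hr : r ∈ Icc 1 R) : M r / r ≤ 19 / 20 := by
  rw [div_le_iff₀ (by linarith [hr.1])]
  nlinarith [h.Mu r hr, hr.1]

lemma dG (h : Sol u M R) {r} (hr : r ∈ Icc 1 R) :
    HasDerivWithinAt (fun t => Gf (M t / t) (Yf (u t) t))
      (- (4 - 3 * (M r / r) + Yf (u r) r) * (Qf (M r / r) (Yf (u r) r)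
        + 3 * (M r / r + Yf (u r) r) ^ 2) / 4 / (1 - M r / r) ^ 2 / r) (Icc 1 R) r := by
  have hx : 1 - M r / r ≠ 0 := by have := h.xu hr; intro h'; linarith
  exact deriv_G (x := fun t => M t / t) (Y := fun t => Yf (u t) t) hr.1 hx
    (deriv_x hr (h.dM r hr)) (deriv_Y hr (h.du r hr))

lemma G1 (h : Sol u M R) : Gf (M 1 / 1) (Yf (u 1) 1) = 0 := by
  rw [h.M1, h.u1]; unfold Gf Qf Yf; norm_num

lemma G_nonpos (h : Sol u M R) {r} (hr : r ∈ Icc 1 R) : Gf (M r / r) (Yf (u r) r) ≤ 0 := by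
  have key : ∀ e > 0, Gf (M r / r) (Yf (u r) r) ≤ e * (r - 1) := by
    intro e he
    refine image_le_of_deriv_right_lt_deriv_boundary (a := 1) (b := R)
      (f := fun t => Gf (M t / t) (Yf (u t) t)) (B := fun t => e * (t - 1)) (B' := fun _ => e)
      (fun t ht => (h.dG ht).continuousWithinAt)
      (fun t ht => (h.dG (Ico_subset_Icc_self ht)).mono_of_mem_nhdsWithin
        (Icc_mem_nhdsGE_of_mem ht)) (by
        have := h.G1
        linarith) ?_ ?_ hr
    · intro t
      simpa using ((hasDerivAt_id t).sub_const 1).const_mul e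
    · intro t ht heq
      have ht' := Ico_subset_Icc_self ht
      refine lt_of_le_of_lt ?_ he
      have h0 : 0 ≤ Gf (M t / t) (Yf (u t) t) := by
        rw [heq]; exact mul_nonneg he.le (by linarith [ht.1])
      have hx := h.xu ht'
      have hx0 := h.xl ht'
      have hY := Yf_nonneg (r := t) (h.ul t ht')
      have hQ : 0 ≤ Qf (M t / t) (Yf (u t) t) := by
        unfold Gf at h0
        by_contra hn
        push Not at hn
        have := div_neg_of_neg_of_pos hn (by linarith : 0 < 1 - M t / t)
        linarith
      have h4 : 0 ≤ 4 - 3 * (M t / t) + Yf (u t) t := by linarith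
      have ht0 : 0 ≤ t := by linarith [ht.1]
      have : 0 ≤ (4 - 3 * (M t / t) + Yf (u t) t) * (Qf (M t / t) (Yf (u t) t)
        + 3 * (M t / t + Yf (u t) t) ^ 2) / 4 / (1 - M t / t) ^ 2 / t := by positivity
      have e2 : ∀ a b c d : ℝ, -a * b / 4 / c / d = -(a * b / 4 / c / d) := by intros; ring
      rw [e2]; linarith
  refine le_of_forall_pos_le_add fun e he => ?_
  have := key e he
  have : e * (r - 1) ≤ e := by nlinarith [hr.2, h.hR']
  linarith

lemma Q_nonpos (h : Sol u M R) {r} (hr : r ∈ Icc 1 R) : Qf (M r / r) (Yf (u r) r) ≤ 0 := by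
  have h1 := h.G_nonpos hr
  have hx := h.xu hr
  by_contra hn
  push Not at hn
  have := div_pos hn (by linarith : 0 < 1 - M r / r)
  unfold Gf at h1
  linarith

lemma Y_le (h : Sol u M R) {r} (hr : r ∈ Icc 1 R) : Yf (u r) r ≤ 2 / 3 := by
  have h1 := h.Q_nonpos hr
  have hx := h.xu hr
  have hx0 := h.xl hr
  have hY := Yf_nonneg (r := r) (h.ul r hr)
  unfold Qf at h1
  generalize M r / r = x at *
  generalize Yf (u r) r = Y at *
  by_contra hn
  push Not at hn
  nlinarith [sq_nonneg (9 * x - 4), mul_nonneg hY (sub_nonneg.2 hx)]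

lemma x_le (h : Sol u M R) {r} (hr : r ∈ Icc 1 R) : M r / r ≤ 8 / 9 := by
  have h1 := h.Q_nonpos hr
  have hx := h.xu hr
  have hx0 := h.xl hr
  have hY := Yf_nonneg (r := r) (h.ul r hr)
  unfold Qf at h1
  generalize M r / r = x at *
  generalize Yf (u r) r = Y at *
  by_contra hn
  push Not at hn
  nlinarith [mul_nonneg hY (sub_nonneg.2 hx)]

lemma G_lower (h : Sol u M R) {r} (hr : r ∈ Icc 1 R) :
    - (1 / 4) ≤ Gf (M r / r) (Yf (u r) r) := by
  have sub : Icc 1 r ⊆ Icc 1 R := Icc_subset_Icc_right hr.2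
  have := mean_lower (f := fun t => Gf (M t / t) (Yf (u t) t)) (c := -2000) hr.1
    (fun t ht => (h.dG (sub ht)).mono sub) (fun t ht => by
      have hx := h.x_le (sub ht)
      have hx0 := h.xl (sub ht)
      have hY := Yf_nonneg (r := t) (h.ul t (sub ht))
      have hYu := h.Y_le (sub ht)
      have hQ := h.Q_nonpos (sub ht)
      have ht1 := ht.1
      generalize M t / t = x at *
      generalize Yf (u t) t = Y at *
      generalize Qf x Y = Q at *
      have e2 : ∀ a b c d : ℝ, -a * b / 4 / c / d = -(a * b / 4 / c / d) := by intros; ring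
      rw [e2, neg_le_neg_iff]
      have ht0 : 0 < t := by linarith
      have h1x : 1 / 9 ≤ 1 - x := by linarith
      have hsq : 1 / 81 ≤ (1 - x) ^ 2 := by nlinarith
      rw [div_le_iff₀ ht0, div_le_iff₀ (by linarith)]
      have A : (4 - 3 * x + Y) * (Q + 3 * (x + Y) ^ 2) ≤ 5 * (3 * (14 / 9) ^ 2) := by
        have : (x + Y) ^ 2 ≤ (14 / 9) ^ 2 := by gcongr; linarith
        have h4 : 0 ≤ 4 - 3 * x + Y := by linarith
        have h5 : 4 - 3 * x + Y ≤ 5 := by linarith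
        calc _ ≤ (4 - 3 * x + Y) * (3 * (14 / 9) ^ 2) := by gcongr; linarith
          _ ≤ _ := by gcongr
      nlinarith)
  simp only [h.G1] at this
  have := h.hR'
  have := hr.2
  linarith

lemma Q_lower (h : Sol u M R) {r} (hr : r ∈ Icc 1 R) :
    - (1 / 4) * (1 - M r / r) ≤ Qf (M r / r) (Yf (u r) r) := by
  have h1 := h.G_lower hr
  have hx := h.xu hr
  unfold Gf at h1
  rwa [le_div_iff₀ (by linarith)] at h1

lemma u_le (h : Sol u M R) {r} (hr : r ∈ Icc 1 R) : u r ≤ 1 + 1 / 10 ^ 7 := by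
  have h1 := h.Y_le hr
  have h2 := h.ul r hr
  have hr1 := hr.1
  have hr2 := hr.2.trans h.hR'
  unfold Yf at h1
  rw [div_le_iff₀ (by positivity)] at h1
  have : u r ^ 3 - 3 * u r + 2 = (u r - 1) ^ 2 * (u r + 2) := by ring
  rw [this] at h1
  have hr3 : r ^ 2 ≤ 2 := by nlinarith
  have : (u r - 1) ^ 2 * 3 ≤ (u r - 1) ^ 2 * (u r + 2) := by gcongr; linarith
  have : (u r - 1) ^ 2 ≤ (1 / 10 ^ 7) ^ 2 := by norm_num at *; linarith
  have := abs_le_of_sq_le_sq this (by positivity)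
  linarith [(abs_le.1 this).2]

lemma D_ge (h : Sol u M R) {r} (hr : r ∈ Icc 1 R) : 2 * 10 ^ 7 * Yf (u r) r ≤ Df (u r) r := by
  have h1 := h.u_le hr
  have h2 := h.ul r hr
  unfold Df Yf
  rw [← mul_div_assoc]
  gcongr ?_ / _
  have e1 : u r ^ 3 - 3 * u r + 2 = (u r - 1) * ((u r - 1) * (u r + 2)) := by ring
  have e2 : u r ^ 3 - 1 = (u r - 1) * (u r ^ 2 + u r + 1) := by ring
  rw [e1, e2]
  have : (10:ℝ) ^ 7 * ((u r - 1) * (u r + 2)) ≤ u r ^ 2 + u r + 1 := by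
    norm_num at h1 ⊢
    nlinarith
  have h3 : 0 ≤ u r - 1 := by linarith
  have := mul_le_mul_of_nonneg_left this h3
  linarith

lemma M_mono (h : Sol u M R) {a b} (ha : 1 ≤ a) (hab : a ≤ b) (hb : b ≤ R) : M a ≤ M b := by
  have sub : Icc a b ⊆ Icc 1 R := Icc_subset_Icc ha hb
  have := mean_lower (f := M) (c := 0) hab (fun t ht => (h.dM t (sub ht)).mono sub)
    (fun t ht => Df_nonneg (h.ul t (sub ht)))
  linarith

/-- the solution cannot stay in the admissible box up to `1 + 1/10000` -/
lemma contra (h : Sol u M (1 + 1 / 10000)) : False := by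
  -- step c
  have hc : 1 / 3 ≤ M (1 + 1 / 30000) := by
    by_contra hn
    push Not at hn
    have sub : Icc (1:ℝ) (1 + 1 / 30000) ⊆ Icc 1 (1 + 1 / 10000) :=
      Icc_subset_Icc_right (by norm_num)
    have := mean_lower (f := u) (c := 2 / 5) (by norm_num) (fun t ht => (h.du t (sub ht)).mono sub)
      (fun t ht => by
        have hM := h.M_mono ht.1 ht.2 (by norm_num)
        have hxx : M t / t < 1 / 3 := by
          rw [div_lt_iff₀ (by linarith [ht.1])]; linarith [ht.1]
        have hx0 := h.xl (sub ht)
        have hu := h.ul t (sub ht)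
        have hY := Yf_nonneg (r := t) hu
        have hQ := h.Q_nonpos (sub ht)
        have ht1 := ht.1
        have ht2 := ht.2
        unfold Uf
        unfold Qf at hQ
        generalize M t / t = x at *
        generalize Yf (u t) t = Y at *
        have hY2 : Y ≤ 5 / 18 := by nlinarith
        have a1 : (x + Y) / (2 * (1 - x)) ≤ 1 / 2 := by
          rw [div_le_iff₀ (by linarith)]; linarith
        have a2 : 4 / 5 ≤ u t / t := by rw [le_div_iff₀ (by linarith)]; linarith
        calc (2:ℝ) / 5 = 4 / 5 * (1 / 2) := by norm_num
          _ ≤ _ := by gcongr; linarith)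
    have h1 := h.u_le (r := 1 + 1 / 30000) ⟨by norm_num, by norm_num⟩
    rw [h.u1] at this
    norm_num at *
    linarith
  -- step d
  have hd : 87 / 100 ≤ M (1 + 2 / 30000) := by
    by_contra hn
    push Not at hn
    have sub : Icc (1 + 1 / 30000 : ℝ) (1 + 2 / 30000) ⊆ Icc 1 (1 + 1 / 10000) :=
      Icc_subset_Icc (by norm_num) (by norm_num)
    have := mean_lower (f := M) (c := 2 * 10 ^ 5) (by norm_num)
      (fun t ht => (h.dM t (sub ht)).mono sub)
      (fun t ht => by
        have hM := h.M_mono (sub ht).1 ht.2 (by norm_num)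
        have hM' := h.M_mono (by norm_num) ht.1 (sub ht).2
        have ht1 := ht.1
        have ht2 := ht.2
        have hxx : M t / t < 87 / 100 := by
          rw [div_lt_iff₀ (by linarith [ht.1])]; linarith [ht.1]
        have hxl : 33 / 100 < M t / t := by
          rw [lt_div_iff₀ (by linarith [ht.1])]; norm_num at *; linarith [ht.1]
        have hu := h.ul t (sub ht)
        have hY := Yf_nonneg (r := t) hu
        have hQ := h.Q_lower (sub ht)
        have hD := h.D_ge (sub ht)
        unfold Qf at hQ
        generalize M t / t = x at *
        generalize Yf (u t) t = Y at *
        have hY2 : 1 / 100 ≤ Y := by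
          by_contra hn'
          push Not at hn'
          nlinarith
        norm_num at *
        linarith)
    have h1 := h.Mu (1 + 2 / 30000) ⟨by norm_num, by norm_num⟩
    have h2 := h.Ml (1 + 1 / 30000) ⟨by norm_num, by norm_num⟩
    norm_num at *
    linarith
  -- step e
  have sub : Icc (1 + 2 / 30000 : ℝ) (1 + 1 / 10000) ⊆ Icc 1 (1 + 1 / 10000) :=
      Icc_subset_Icc (by norm_num) (by norm_num)
  have := mean_upper (f := u) (c := -1) (by norm_num) (fun t ht => (h.du t (sub ht)).mono sub)
      (fun t ht => by
        have hM' := h.M_mono (by norm_num) ht.1 (sub ht).2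
        have ht1 := (sub ht).1
        have ht2 := ht.2
        have hxl : 86 / 100 < M t / t := by
          rw [lt_div_iff₀ (by linarith)]; linarith
        have hxu := h.xu (sub ht)
        have hu := h.ul t (sub ht)
        have hY := Yf_nonneg (r := t) hu
        unfold Uf
        generalize M t / t = x at *
        generalize Yf (u t) t = Y at *
        have a1 : 3 ≤ (x + Y) / (2 * (1 - x)) := by
          rw [le_div_iff₀ (by linarith)]; linarith
        have a2 : 1 / 2 ≤ u t / t := by rw [le_div_iff₀ (by linarith)]; linarith
        nlinarith)
  have h1 := h.ul (1 + 1 / 10000) ⟨by norm_num, by norm_num⟩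
  have h2 := h.u_le (r := 1 + 2 / 30000) ⟨by norm_num, by norm_num⟩
  norm_num at *
  linarith

/-- strictness -/
lemma x_lt (h : Sol u M R) {r} (hr : r ∈ Icc 1 R) : M r / r < 8 / 9 := by
  rcases hr.1.eq_or_lt with h1 | h1
  · rw [← h1, h.M1]; norm_num
  by_contra hn
  have hx : M r / r = 8 / 9 := le_antisymm (h.x_le hr) (not_lt.1 hn)
  have hQ := h.Q_nonpos hr
  have hY := Yf_nonneg (r := r) (h.ul r hr)
  have hY0 : Yf (u r) r = 0 := by
    rw [hx] at hQ; unfold Qf at hQ; nlinarith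
  have hd := (h.dG hr)
  rw [hx, hY0] at hd
  have sub : Icc 1 r ⊆ Icc 1 R := Icc_subset_Icc_right hr.2
  have hd2 : HasDerivWithinAt _ _ (Iic r) r :=
    (hd.mono sub).mono_of_mem_nhdsWithin (Icc_mem_nhdsLE h1)
  have hG0 : Gf (M r / r) (Yf (u r) r) = 0 := by
    rw [hx, hY0]; unfold Gf Qf; norm_num
  have hd3 := hd2.mono (Iio_subset_Iic_self)
  rw [hasDerivWithinAt_iff_tendsto_slope' (by simp)] at hd3
  have : 0 ≤ -(4 - 3 * (8 / 9) + 0) * (Qf (8 / 9) 0 + 3 * (8 / 9 + 0) ^ 2) / 4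
      / (1 - (8 : ℝ) / 9) ^ 2 / r := by
    refine ge_of_tendsto hd3 ?_
    filter_upwards [Ico_mem_nhdsLT h1] with t ht
    rw [slope_def_field, hG0]
    apply div_nonneg_of_nonpos
    · have := h.G_nonpos (r := t) ⟨ht.1, ht.2.le.trans hr.2⟩
      linarith
    · linarith [ht.2]
  have h2 : -(4 - 3 * (8 / 9) + 0) * (Qf (8 / 9) 0 + 3 * (8 / 9 + 0) ^ 2) / 4
      / (1 - (8 : ℝ) / 9) ^ 2 / r < 0 := by
    apply div_neg_of_neg_of_pos
    · unfold Qf; norm_num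
    · linarith
  linarith

/-- at a return point -/
lemma x_gt (h : Sol u M R) (h1 : 1 < R) (hu : u R = 1) : 4 / 5 < M R / R := by
  have hR : R ∈ Icc 1 R := right_mem_Icc.2 h.hR
  have hY0 : Yf (u R) R = 0 := by rw [hu]; unfold Yf; norm_num
  have hd2 := ((h.du R hR).mono_of_mem_nhdsWithin (Icc_mem_nhdsLE h1)).mono
    (Iio_subset_Iic_self)
  rw [hasDerivWithinAt_iff_tendsto_slope' (by simp)] at hd2
  have : Uf R (u R) (M R) ≤ 0 := by
    refine le_of_tendsto hd2 ?_
    filter_upwards [Ico_mem_nhdsLT h1] with t ht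
    rw [slope_def_field, hu]
    apply div_nonpos_of_nonneg_of_nonpos
    · have := h.ul t ⟨ht.1, ht.2.le⟩
      linarith
    · linarith [ht.2]
  unfold Uf at this
  rw [hY0, hu] at this
  have hx := h.x_le hR
  have hQ := h.Q_lower hR
  rw [hY0] at hQ
  unfold Qf at hQ
  generalize M R / R = x at *
  have hR0 : 0 < 1 / R := by positivity
  have h2 : 1 - (x + 0) / (2 * (1 - x)) ≤ 0 := by
    by_contra hn
    push Not at hn
    have := mul_pos hR0 hn
    linarith
  have h3 : 1 ≤ (x + 0) / (2 * (1 - x)) := by linarith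
  rw [le_div_iff₀ (by linarith)] at h3
  by_contra hn
  push Not at hn
  nlinarith

end Sol

noncomputable def cl (a b x : ℝ) : ℝ := max a (min b x)

lemma cl_mem {a b : ℝ} (hab : a ≤ b) (x : ℝ) : cl a b x ∈ Icc a b := by
  unfold cl
  exact ⟨le_max_left _ _, max_le hab (min_le_left _ _)⟩

lemma cl_eq {a b x : ℝ} (hx : x ∈ Icc a b) : cl a b x = x := by
  unfold cl
  rw [min_eq_right hx.2, max_eq_right hx.1]

lemma cl_lip (a b : ℝ) : LipschitzWith 1 (cl a b) := by
  unfold cl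
  exact (LipschitzWith.id.const_min b).const_max a

lemma exists_trunc : ∃ u M : ℝ → ℝ, u 1 = 1 ∧ M 1 = 0 ∧ ∀ r ∈ Icc (1:ℝ) (1 + 1 / 10000),
    HasDerivWithinAt u (Uf r (cl 1 2 (u r)) (cl 0 (19 / 20) (M r))) (Icc 1 (1 + 1 / 10000)) r ∧
    HasDerivWithinAt M (Df (cl 1 2 (u r)) r) (Icc 1 (1 + 1 / 10000)) r := by
  let F : ℝ × ℝ × ℝ → ℝ × ℝ := fun p => (Uf p.1 p.2.1 p.2.2, Df p.2.1 p.1)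
  let K : Set (ℝ × ℝ × ℝ) := Icc 1 (1 + 1 / 10000) ×ˢ (Icc 1 2 ×ˢ Icc 0 (19 / 20))
  have hKc : IsCompact K := isCompact_Icc.prod (isCompact_Icc.prod isCompact_Icc)
  have hKv : Convex ℝ K := (convex_Icc _ _).prod ((convex_Icc _ _).prod (convex_Icc _ _))
  have hF : ContDiffOn ℝ 1 F K := by
    have h0 : ∀ p ∈ K, p.1 ≠ 0 := fun p hp => by
      have := hp.1.1
      intro h; linarith
    have h1 : ∀ p ∈ K, 2 * (1 - p.2.2 / p.1) ≠ 0 := fun p hp => by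
      have h1 := hp.1.1
      have h2 := hp.2.2.2
      have : p.2.2 / p.1 ≤ 19 / 20 := by
        rw [div_le_iff₀ (by linarith)]; linarith
      intro h; linarith
    have h2 : ∀ p ∈ K, p.1 ^ 2 ≠ 0 := fun p hp => pow_ne_zero _ (h0 p hp)
    have c1 : ContDiffOn ℝ 1 (fun p : ℝ × ℝ × ℝ => p.1) K := contDiff_fst.contDiffOn
    have c2 : ContDiffOn ℝ 1 (fun p : ℝ × ℝ × ℝ => p.2.1) K := by fun_prop
    have c3 : ContDiffOn ℝ 1 (fun p : ℝ × ℝ × ℝ => p.2.2) K := by fun_prop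
    refine ContDiffOn.prodMk ?_ ?_
    · unfold Uf Yf
      refine (c2.div c1 h0).mul (contDiffOn_const.sub (ContDiffOn.div ?_ ?_ h1))
      · refine (c3.div c1 h0).add (ContDiffOn.div ?_ ?_ h2) <;> fun_prop
      · exact contDiffOn_const.mul (contDiffOn_const.sub (c3.div c1 h0))
    · unfold Df
      refine ContDiffOn.div ?_ ?_ h2 <;> fun_prop
  obtain ⟨C, hC⟩ := hF.exists_lipschitzOnWith one_ne_zero hKv hKc
  obtain ⟨L, hL⟩ := hKc.exists_bound_of_continuousOn hF.continuousOn
  let f : ℝ → ℝ × ℝ → ℝ × ℝ := fun r z => F (r, cl 1 2 z.1, cl 0 (19 / 20) z.2)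
  have hmem : ∀ r ∈ Icc (1:ℝ) (1 + 1 / 10000), ∀ z : ℝ × ℝ,
      (r, cl 1 2 z.1, cl 0 (19 / 20) z.2) ∈ K := fun r hr z =>
    ⟨hr, cl_mem (by norm_num) _, cl_mem (by norm_num) _⟩
  have hT : (1:ℝ) ∈ Icc (1:ℝ) (1 + 1 / 10000) := ⟨le_rfl, by norm_num⟩
  have hL0 : 0 ≤ L := (norm_nonneg _).trans (hL _ (hmem 1 hT (0, 0)))
  have hP : IsPicardLindelof f (⟨1, hT⟩ : Icc (1:ℝ) (1 + 1 / 10000)) ((1, 0) : ℝ × ℝ)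
      (⟨L, hL0⟩ : NNReal) 0 ⟨L, hL0⟩ C := by
    refine ⟨?_, ?_, ?_, ?_⟩
    · intro t ht
      refine LipschitzOnWith.of_dist_le_mul fun z _ w _ => ?_
      refine (hC.dist_le_mul _ (hmem t ht z) _ (hmem t ht w)).trans ?_
      gcongr
      rw [Prod.dist_eq, Prod.dist_eq, Prod.dist_eq]
      simp only [dist_self]
      have a1 := (cl_lip 1 2).dist_le_mul z.1 w.1
      have a2 := (cl_lip 0 (19 / 20)).dist_le_mul z.2 w.2
      simp only [NNReal.coe_one, one_mul] at a1 a2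
      refine max_le (le_max_of_le_left dist_nonneg) (max_le_max a1 a2)
    · intro z _
      exact hF.continuousOn.comp (by fun_prop) (fun t ht => hmem t ht z)
    · intro t ht z _
      exact hL _ (hmem t ht z)
    · simp only [NNReal.coe_zero, sub_zero, sub_self]
      rw [max_eq_left (by norm_num)]
      linarith
  obtain ⟨α, h1, h2⟩ := hP.exists_eq_forall_mem_Icc_hasDerivWithinAt₀
  refine ⟨fun r => (α r).1, fun r => (α r).2, by simpa using congrArg Prod.fst h1,
    by simpa using congrArg Prod.snd h1, fun r hr => ⟨?_, ?_⟩⟩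
  · exact (h2 r hr).fst
  · exact (h2 r hr).snd

lemma exists_sol : ∃ (u M : ℝ → ℝ) (R : ℝ), 1 < R ∧ Sol u M R ∧ u R = 1 ∧
    ∃ r, 1 < r ∧ r < R ∧ 1 < u r := by
  obtain ⟨u, M, u1, M1, hd⟩ := exists_trunc
  set T : ℝ := 1 + 1 / 10000 with hTdef
  have hT : 1 < T := by rw [hTdef]; norm_num
  have cu : ContinuousOn u (Icc 1 T) := fun r hr => (hd r hr).1.continuousWithinAt
  have cM : ContinuousOn M (Icc 1 T) := fun r hr => (hd r hr).2.continuousWithinAt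
  have h1T : (1:ℝ) ∈ Icc 1 T := ⟨le_rfl, hT.le⟩
  -- build a Sol from weak bounds
  have mk : ∀ R, 1 ≤ R → R ≤ T → (∀ r ∈ Icc 1 R, 1 ≤ u r ∧ u r ≤ 2 ∧ M r ≤ 19 / 20) →
      Sol u M R := by
    intro R hR1 hRT hb
    have sub : Icc 1 R ⊆ Icc 1 T := Icc_subset_Icc_right hRT
    have hM0 : ∀ r ∈ Icc 1 R, 0 ≤ M r := by
      intro r hr
      have sub' : Icc 1 r ⊆ Icc 1 T := Icc_subset_Icc_right (hr.2.trans hRT)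
      have := mean_lower (f := M) (c := 0) hr.1 (fun t ht => (hd t (sub' ht)).2.mono sub')
        (fun t ht => Df_nonneg (cl_mem (by norm_num) _).1)
      rw [M1] at this
      linarith
    refine ⟨hR1, hRT, fun r hr => ?_, fun r hr => ?_, u1, M1, fun r hr => (hb r hr).1,
      fun r hr => (hb r hr).2.1, hM0, fun r hr => (hb r hr).2.2⟩
    · have := (hd r (sub hr)).1.mono sub
      rwa [cl_eq ⟨(hb r hr).1, (hb r hr).2.1⟩, cl_eq ⟨hM0 r hr, (hb r hr).2.2⟩] at this
    · have := (hd r (sub hr)).2.mono sub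
      rwa [cl_eq ⟨(hb r hr).1, (hb r hr).2.1⟩] at this
  -- near 1
  have near : ∀ᶠ r in nhdsWithin 1 (Ioi 1), 1 < u r ∧ u r < 2 ∧ M r < 19 / 20 := by
    have hmem : Icc 1 T ∈ nhdsWithin (1:ℝ) (Ioi 1) := Icc_mem_nhdsGT_of_mem ⟨le_rfl, hT⟩
    have t1 : Tendsto u (nhdsWithin 1 (Ioi 1)) (nhds 1) := by
      have := (cu 1 h1T).mono_of_mem_nhdsWithin hmem
      rw [ContinuousWithinAt, u1] at this
      exact this
    have t2 : Tendsto M (nhdsWithin 1 (Ioi 1)) (nhds 0) := by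
      have := (cM 1 h1T).mono_of_mem_nhdsWithin hmem
      rw [ContinuousWithinAt, M1] at this
      exact this
    have d1 := ((hd 1 h1T).1.mono_of_mem_nhdsWithin hmem)
    rw [hasDerivWithinAt_iff_tendsto_slope' (by simp)] at d1
    have e1 : Uf 1 (cl 1 2 (u 1)) (cl 0 (19 / 20) (M 1)) = 1 := by
      rw [u1, M1, cl_eq (by norm_num), cl_eq (by norm_num)]
      unfold Uf Yf; norm_num
    rw [e1] at d1
    have := d1.eventually (lt_mem_nhds (zero_lt_one))
    filter_upwards [this, t1.eventually (gt_mem_nhds (by norm_num : (1:ℝ) < 2)),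
      t2.eventually (gt_mem_nhds (by norm_num : (0:ℝ) < 19 / 20)), self_mem_nhdsWithin]
      with r h1 h2 h3 h4
    refine ⟨?_, h2, h3⟩
    rw [slope_def_field, u1] at h1
    have h4' : 0 < r - 1 := sub_pos.2 h4
    have := (div_pos_iff_of_pos_right h4').1 h1
    linarith
  obtain ⟨r0, hr0, hr0'⟩ := (mem_nhdsGT_iff_exists_Ioc_subset).1 near
  have hr0 : 1 < r0 := hr0
  have good0 : ∀ r, 1 < r → r ≤ r0 → 1 < u r ∧ u r < 2 ∧ M r < 19 / 20 :=
    fun r h1 h2 => hr0' ⟨h1, h2⟩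
  let Bad : Set ℝ := {r | r ∈ Icc (min r0 T) T ∧ (u r ≤ 1 ∨ 2 ≤ u r ∨ 19 / 20 ≤ M r)}
  have hm1 : 1 < min r0 T := lt_min hr0 hT
  have subT : Icc (min r0 T) T ⊆ Icc 1 T := Icc_subset_Icc_left hm1.le
  have hBad : IsCompact Bad := by
    have e : Bad = (Icc (min r0 T) T ∩ u ⁻¹' Iic 1) ∪ ((Icc (min r0 T) T ∩ u ⁻¹' Ici 2) ∪
        (Icc (min r0 T) T ∩ M ⁻¹' Ici (19 / 20))) := by
      ext r
      simp only [Bad, mem_ofPred_eq, mem_union, mem_inter_iff, mem_preimage, mem_Iic]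
      simp only [mem_Ici]
      tauto
    have hc : IsClosed Bad := by
      rw [e]
      exact ((cu.mono subT).preimage_isClosed_of_isClosed isClosed_Icc isClosed_Iic).union
        (((cu.mono subT).preimage_isClosed_of_isClosed isClosed_Icc isClosed_Ici).union
        ((cM.mono subT).preimage_isClosed_of_isClosed isClosed_Icc isClosed_Ici))
    exact isCompact_Icc.of_isClosed_subset hc (fun r hr => hr.1)
  have good : ∀ r, 1 < r → r ≤ T → (∀ s ∈ Bad, r < s) → 1 < u r ∧ u r < 2 ∧ M r < 19 / 20 := by
    intro r h1 h2 h3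
    by_cases h : r ≤ min r0 T
    · exact good0 r h1 (h.trans (min_le_left _ _))
    · by_contra hn
      have : r ∈ Bad := by
        refine ⟨⟨(not_le.1 h).le, h2⟩, ?_⟩
        by_contra hn2
        push Not at hn2
        exact hn hn2
      exact lt_irrefl _ (h3 r this)
  have good1 : 1 ≤ u 1 ∧ u 1 ≤ 2 ∧ M 1 ≤ 19 / 20 := by rw [u1, M1]; norm_num
  rcases Bad.eq_empty_or_nonempty with hemp | hne
  · exfalso
    refine (mk T hT.le le_rfl fun r hr => ?_).contra
    rcases hr.1.eq_or_lt with h | h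
    · rw [← h]; exact good1
    · have := good r h hr.2 (by simp [hemp])
      exact ⟨this.1.le, this.2.1.le, this.2.2.le⟩
  · obtain ⟨R, hR, hRl⟩ := hBad.exists_isLeast hne
    have hR1 : 1 < R := hm1.trans_le hR.1.1
    have hRT : R ≤ T := hR.1.2
    have goodR : ∀ r, 1 < r → r < R → 1 < u r ∧ u r < 2 ∧ M r < 19 / 20 := fun r h1 h2 =>
      good r h1 (h2.le.trans hRT) (fun s hs => h2.trans_le (hRl hs))
    have hRm : R ∈ Icc 1 T := ⟨hR1.le, hRT⟩
    have hmem : Icc 1 T ∈ nhdsWithin R (Iio R) :=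
      mem_of_superset (Ioo_mem_nhdsLT hR1) (fun x hx => ⟨hx.1.le, hx.2.le.trans hRT⟩)
    have t1 : Tendsto u (nhdsWithin R (Iio R)) (nhds (u R)) :=
      (cu R hRm).mono_of_mem_nhdsWithin hmem
    have t2 : Tendsto M (nhdsWithin R (Iio R)) (nhds (M R)) :=
      (cM R hRm).mono_of_mem_nhdsWithin hmem
    have ev : ∀ᶠ r in nhdsWithin R (Iio R), 1 < u r ∧ u r < 2 ∧ M r < 19 / 20 := by
      filter_upwards [Ioo_mem_nhdsLT hR1] with r hr using goodR r hr.1 hr.2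
    have b1 : 1 ≤ u R := ge_of_tendsto t1 (ev.mono fun r h => h.1.le)
    have b2 : u R ≤ 2 := le_of_tendsto t1 (ev.mono fun r h => h.2.1.le)
    have b3 : M R ≤ 19 / 20 := le_of_tendsto t2 (ev.mono fun r h => h.2.2.le)
    have S : Sol u M R := mk R hR1.le hRT (fun r hr => by
      rcases hr.1.eq_or_lt with h | h
      · rw [← h]; exact good1
      rcases hr.2.eq_or_lt with h' | h'
      · rw [h']; exact ⟨b1, b2, b3⟩
      have := goodR r h h'
      exact ⟨this.1.le, this.2.1.le, this.2.2.le⟩)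
    have hRR : R ∈ Icc 1 R := ⟨hR1.le, le_rfl⟩
    have c1 := S.u_le hRR
    have c2 := S.x_le hRR
    have c3 : M R < 19 / 20 := by
      rw [div_le_iff₀ (by linarith)] at c2
      have := S.hR'
      norm_num at this
      linarith
    refine ⟨u, M, R, hR1, S, ?_, (1 + R) / 2, by linarith, by linarith,
      (goodR _ (by linarith) (by linarith)).1⟩
    rcases hR.2 with h | h | h
    · exact le_antisymm h b1
    · norm_num at c1; linarith
    · linarith

lemma cConst_pos : 0 < cConst (-(1 / 2)) := by
  unfold cConst
  have hint : IntegrableOn (fun s : ℝ => s ^ (-(1 / 2) : ℝ) / Real.sqrt (1 - s)) (Ioc 0 1) := by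
    have h := Complex.betaIntegral_convergent (u := 1 / 2) (v := 1 / 2) (by norm_num) (by norm_num)
    rw [intervalIntegrable_iff_integrableOn_Ioo_of_le (by norm_num)] at h
    rw [integrableOn_Ioc_iff_integrableOn_Ioo]
    have h' : IntegrableOn (fun s : ℝ => ‖(s : ℂ) ^ ((1 / 2 : ℂ) - 1) *
      (1 - (s : ℂ)) ^ ((1 / 2 : ℂ) - 1)‖) (Ioo 0 1) := h.norm
    refine h'.congr_fun (fun s hs => ?_) measurableSet_Ioo
    have h1 : 0 < s := hs.1
    have h2 : 0 < 1 - s := by linarith [hs.2]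
    simp only [norm_mul]
    have e : (1 - (s:ℂ)) = ((1 - s : ℝ) : ℂ) := by push_cast; ring
    rw [e, Complex.norm_cpow_eq_rpow_re_of_pos h1, Complex.norm_cpow_eq_rpow_re_of_pos h2,
      Real.sqrt_eq_rpow, div_eq_mul_inv (s ^ _), ← Real.rpow_neg h2.le]
    norm_num
  have h1 : ∫ s in Ioc (0:ℝ) 1, (1:ℝ) ≤ ∫ s in Ioc (0:ℝ) 1, s ^ (-(1 / 2) : ℝ) / Real.sqrt (1 - s) := by
    rw [integral_Ioc_eq_integral_Ioo, integral_Ioc_eq_integral_Ioo]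
    refine setIntegral_mono_on (by simp) (hint.mono_set Ioo_subset_Ioc_self) measurableSet_Ioo ?_
    intro s hs
    have h1 : 0 < s := hs.1
    have h2 : 0 < 1 - s := by linarith [hs.2]
    rw [le_div_iff₀ (Real.sqrt_pos.2 h2), one_mul]
    calc Real.sqrt (1 - s) ≤ 1 := Real.sqrt_le_one.2 (by linarith)
      _ ≤ _ := Real.one_le_rpow_of_pos_of_le_one_of_nonpos h1 hs.2.le (by norm_num)
  have h2 : ∫ s in Ioc (0:ℝ) 1, (1:ℝ) = 1 := by simp
  rw [h2] at h1
  have := Real.pi_pos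
  have : 0 < ∫ s in Ioc (0:ℝ) 1, s ^ (-(1 / 2) : ℝ) / Real.sqrt (1 - s) := by linarith
  positivity

lemma rho_eq_zero {k l L0 : ℝ} {y : ℝ → ℝ} {r : ℝ} (h : exp (y r) ≤ √L0 / r) :
    rho k l L0 y r = 0 ∧ pres k l L0 y r = 0 := by
  unfold rho pres
  rw [Ioc_eq_empty (not_lt.2 h)]
  simp

lemma rho_eq {lam : ℝ} (hl : 0 < lam) {y : ℝ → ℝ} {r u : ℝ} (hr : 0 < r) (hu : 1 ≤ u)
    (hy : exp (y r) = lam * u / r) :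
    rho 0 (-(1 / 2)) (lam ^ 2) y r
      = cConst (-(1 / 2)) * (lam ^ 3 * (u ^ 3 - 1) / (3 * r ^ 4)) ∧
    pres 0 (-(1 / 2)) (lam ^ 2) y r
      = cConst (-(1 / 2)) / 2 * (lam ^ 3 * (u ^ 3 - 3 * u + 2) / (3 * r ^ 4)) := by
  have hle : lam / r ≤ lam * u / r := by gcongr; nlinarith
  have hrp : r ^ (2 * (-(1 / 2)) : ℝ) = r⁻¹ := by
    rw [show (2 * (-(1 / 2)) : ℝ) = -1 by norm_num, Real.rpow_neg_one]
  unfold rho pres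
  rw [hy, Real.sqrt_sq hl.le, hrp, ← intervalIntegral.integral_of_le hle,
    ← intervalIntegral.integral_of_le hle]
  have e1 : (-(1 / 2) + 1 / 2 : ℝ) = 0 := by norm_num
  have e2 : (-(1 / 2) + 3 / 2 : ℝ) = 1 := by norm_num
  have e3 : (2 * (-(1 / 2)) + 3 : ℝ) = 2 := by norm_num
  simp only [e1, e2, e3, Real.rpow_zero, Real.rpow_one, one_mul, mul_one]
  constructor
  · rw [integral_pow]
    norm_num
    field_simp
  · rw [intervalIntegral.integral_sub (by simp) (by simp), integral_pow,
      intervalIntegral.integral_const]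
    norm_num
    field_simp
    ring

section assembly
variable {u M : ℝ → ℝ} {R : ℝ}

noncomputable def Ut (u : ℝ → ℝ) (R r : ℝ) : ℝ := u (cl 1 R r)
noncomputable def Dt (u : ℝ → ℝ) (R r : ℝ) : ℝ := Df (Ut u R r) (max r 1)
noncomputable def Yt (u : ℝ → ℝ) (R r : ℝ) : ℝ := Yf (Ut u R r) (max r 1)
noncomputable def gt (u M : ℝ → ℝ) (R r : ℝ) : ℝ :=
  -(1 - Ut M R r / max r 1)⁻¹ * (Yt u R r / (2 * max r 1) + Ut M R r / (2 * max r 1 ^ 2))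

lemma cl_low {R r : ℝ} (hr : r ≤ 1) (hR : 1 ≤ R) : cl 1 R r = 1 := by
  unfold cl; rw [min_eq_right (hr.trans hR), max_eq_left hr]

lemma cl_high {R r : ℝ} (hr : R ≤ r) (hR : 1 ≤ R) : cl 1 R r = R := by
  unfold cl; rw [min_eq_left hr, max_eq_right hR]

lemma cont_Ut {f : ℝ → ℝ} (hf : ContinuousOn f (Icc 1 R)) (hR : 1 ≤ R) :
    Continuous (Ut f R) := by
  have := hf.comp_continuous (cl_lip 1 R).continuous (fun x => cl_mem hR x)
  exact this

lemma max_pos' (r : ℝ) : 0 < max r 1 := lt_max_of_lt_right one_pos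

lemma cont_Dt (h : Sol u M R) : Continuous (Dt u R) := by
  have hu := cont_Ut (f := u) (fun r hr => (h.du r hr).continuousWithinAt) h.hR
  unfold Dt Df
  refine Continuous.div (by fun_prop) (by fun_prop) (fun r => (pow_pos (max_pos' r) 2).ne')

lemma cont_Yt (h : Sol u M R) : Continuous (Yt u R) := by
  have hu := cont_Ut (f := u) (fun r hr => (h.du r hr).continuousWithinAt) h.hR
  unfold Yt Yf
  refine Continuous.div (by fun_prop) (by fun_prop) (fun r => (pow_pos (max_pos' r) 2).ne')

lemma xt_lt (h : Sol u M R) (r : ℝ) : Ut M R r / max r 1 < 8 / 9 := by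
  unfold Ut
  have hc := cl_mem h.hR r
  have h1 := h.x_lt hc
  refine lt_of_le_of_lt ?_ h1
  have h0 := h.Ml _ hc
  have : cl 1 R r ≤ max r 1 := by
    unfold cl; exact max_le (le_max_right _ _) ((min_le_right _ _).trans (le_max_left _ _))
  have : 0 < cl 1 R r := by linarith [hc.1]
  gcongr

lemma cont_gt (h : Sol u M R) : Continuous (gt u M R) := by
  have hM := cont_Ut (f := M) (fun r hr => (h.dM r hr).continuousWithinAt) h.hR
  have hY := cont_Yt h
  have c : Continuous (fun r => Ut M R r / max r 1) :=
    hM.div (by fun_prop) (fun r => (max_pos' r).ne')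
  unfold gt
  refine Continuous.mul (Continuous.neg (Continuous.inv₀ (by fun_prop) fun r => ?_)) ?_
  · have := xt_lt h r
    intro h'; linarith
  · refine (hY.div (by fun_prop) fun r => ?_).add (hM.div (by fun_prop) fun r => ?_)
    · have := max_pos' r; positivity
    · have := max_pos' r; positivity

lemma Ut_mid {f : ℝ → ℝ} {r} (hr : r ∈ Icc 1 R) : Ut f R r = f r := by
  unfold Ut; rw [cl_eq hr]

lemma Ut_low {f : ℝ → ℝ} {r} (hR : 1 ≤ R) (hr : r ≤ 1) : Ut f R r = f 1 := by
  unfold Ut; rw [cl_low hr hR]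

lemma Ut_high {f : ℝ → ℝ} {r} (hR : 1 ≤ R) (hr : R ≤ r) : Ut f R r = f R := by
  unfold Ut; rw [cl_high hr hR]

lemma Df_one (r : ℝ) : Df 1 r = 0 := by unfold Df; norm_num
lemma Yf_one (r : ℝ) : Yf 1 r = 0 := by unfold Yf; norm_num

lemma int_Dt (h : Sol u M R) (huR : u R = 1) {r : ℝ} (hr : 0 ≤ r) :
    ∫ s in (0:ℝ)..r, Dt u R s = Ut M R r := by
  have hM := cont_Ut (f := M) (fun r hr => (h.dM r hr).continuousWithinAt) h.hR
  have := intervalIntegral.integral_eq_sub_of_hasDeriv_right_of_le (f := Ut M R) hr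
    hM.continuousOn (f' := Dt u R) ?_ ((cont_Dt h).intervalIntegrable _ _)
  · rw [this, Ut_low h.hR (zero_le_one), h.M1, sub_zero]
  intro x _
  have const : ∀ {c : ℝ}, (Ut M R =ᶠ[nhdsWithin x (Ioi x)] fun _ => c) → Ut M R x = c →
      Ut u R x = 1 → HasDerivWithinAt (Ut M R) (Dt u R x) (Ioi x) x := by
    intro c e1 e2 e3
    have : Dt u R x = 0 := by unfold Dt; rw [e3, Df_one]
    rw [this]
    exact (hasDerivWithinAt_const x _ c).congr_of_eventuallyEq e1 e2
  rcases lt_or_ge x 1 with h1 | h1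
  · refine const (c := M 1) ?_ (Ut_low h.hR h1.le) (by rw [Ut_low h.hR h1.le, h.u1])
    filter_upwards [Ioo_mem_nhdsGT h1] with t ht using Ut_low h.hR ht.2.le
  rcases lt_or_ge x R with h2 | h2
  · have hx : x ∈ Icc 1 R := ⟨h1, h2.le⟩
    have e : Dt u R x = Df (u x) x := by unfold Dt; rw [Ut_mid hx, max_eq_left h1]
    rw [e]
    refine ((h.dM x hx).mono_of_mem_nhdsWithin
      (Icc_mem_nhdsGT_of_mem ⟨h1, h2⟩)).congr_of_eventuallyEq ?_ (Ut_mid hx)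
    filter_upwards [Ioo_mem_nhdsGT h2] with t ht using Ut_mid ⟨h1.trans ht.1.le, ht.2.le⟩
  · refine const (c := M R) ?_ (Ut_high h.hR h2) (by rw [Ut_high h.hR h2, huR])
    filter_upwards [self_mem_nhdsWithin] with t ht using Ut_high h.hR (h2.trans (le_of_lt ht))

lemma gt_low (h : Sol u M R) {r : ℝ} (hr : r ≤ 1) : gt u M R r = 0 := by
  unfold gt Yt
  rw [Ut_low h.hR hr, Ut_low h.hR hr, h.u1, h.M1, Yf_one]; simp

lemma int_gt_low (h : Sol u M R) {r : ℝ} (hr : r ≤ 1) : ∫ s in (1:ℝ)..r, gt u M R s = 0 := by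
  rw [intervalIntegral.integral_symm, intervalIntegral.integral_of_le hr,
    setIntegral_congr_fun measurableSet_Ioc (g := fun _ => 0)
      (fun s hs => gt_low h hs.2)]
  simp

lemma int_gt_mid (h : Sol u M R) {r : ℝ} (hr : r ∈ Icc 1 R) :
    ∫ s in (1:ℝ)..r, gt u M R s = log (u r / r) := by
  have sub : Icc 1 r ⊆ Icc 1 R := Icc_subset_Icc_right hr.2
  have d : ∀ x ∈ Icc 1 r, HasDerivWithinAt (fun s => log (u s / s)) (gt u M R x) (Icc 1 R) x := by
    intro x hx
    have hx' := sub hx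
    have hx0 : 0 < x := by linarith [hx.1]
    have hu := h.ul x hx'
    have := ((h.du x hx').div (hasDerivWithinAt_id x (Icc 1 R)) hx0.ne').log
      (div_pos (by linarith) hx0).ne'
    convert! this using 1
    unfold gt Yt Uf
    rw [Ut_mid hx', Ut_mid hx', max_eq_left hx.1]
    have hxx := h.x_le hx'
    have h1 : 1 - M x / x ≠ 0 := by intro h'; linarith
    have hu0 : u x ≠ 0 := by linarith
    simp only [Pi.div_apply, id]
    generalize Yf (u x) x = Y
    have h2 : x - M x ≠ 0 := by
      intro h'
      apply h1
      have : M x = x := by linarith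
      rw [this, div_self hx0.ne', sub_self]
    have h3 : (1 - M x / x) = (x - M x) / x := by field_simp
    rw [h3]
    field_simp
    ring
  have := intervalIntegral.integral_eq_sub_of_hasDeriv_right_of_le
    (f := fun s => log (u s / s)) hr.1
    (fun x hx => ((d x hx).mono sub).continuousWithinAt) (f' := gt u M R)
    (fun x hx => (d x (Ioo_subset_Icc_self hx)).mono_of_mem_nhdsWithin
      (Icc_mem_nhdsGT_of_mem ⟨hx.1.le, hx.2.trans_le hr.2⟩))
    ((cont_gt h).intervalIntegrable _ _)
  rw [this, h.u1]; simp

lemma int_gt_high (h : Sol u M R) (huR : u R = 1) {r : ℝ} (hr : R ≤ r) :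
    ∫ s in R..r, gt u M R s = - (1 / 2) * log (1 - M R / r) + 1 / 2 * log (1 - M R / R) := by
  have hR := h.hR
  have d : ∀ x ∈ Icc R r, HasDerivAt (fun s => - (1 / 2) * log (1 - M R / s)) (gt u M R x) x := by
    intro x hx
    have hx1 : 1 ≤ x := hR.trans hx.1
    have hx0 : 0 < x := by linarith
    have hlt := xt_lt h x
    rw [Ut_high hR hx.1, max_eq_left hx1] at hlt
    have h1 : 1 - M R / x ≠ 0 := by intro h'; linarith
    have := (((((hasDerivAt_id x).inv hx0.ne').const_mul (M R)).const_sub 1).log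
      (by simpa [div_eq_mul_inv] using h1)).const_mul (-(1 / 2))
    convert! this using 1
    unfold gt Yt
    rw [Ut_high hR hx.1, Ut_high hR hx.1, max_eq_left hx1, huR, Yf_one]
    simp only [Pi.inv_apply, id, div_eq_mul_inv]
    have h3 : 1 - M R * x⁻¹ ≠ 0 := by simpa [div_eq_mul_inv] using h1
    generalize 1 - M R * x⁻¹ = z at *
    field_simp
    ring
  have := intervalIntegral.integral_eq_sub_of_hasDeriv_right_of_le
    (f := fun s => - (1 / 2) * log (1 - M R / s)) hr
    (fun x hx => (d x hx).continuousAt.continuousWithinAt) (f' := gt u M R)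
    (fun x hx => (d x (Ioo_subset_Icc_self hx)).hasDerivWithinAt)
    ((cont_gt h).intervalIntegrable _ _)
  rw [this]; ring

end assembly

/-- Existence of static, spherically symmetric, asymptotically flat
solutions of the massless Einstein--Vlasov system with compactly supported matter,
which are highly relativistic: `4/5 < sup 2m/r < 8/9`. -/
theorem photon_shell_existence :
    ∃ (k ℓ L0 E0 R0 R1 : ℝ) (y ϱ p m : ℝ → ℝ),
      0 ≤ k ∧ -(1 / 2) ≤ ℓ ∧ 0 < L0 ∧ 0 < E0 ∧ 0 < R0 ∧ R0 < R1 ∧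
      ContDiffOn ℝ 1 y (Set.Ici 0) ∧
      -- (i) matter quantities given by the ansatz for 0 < r ≤ R₁ and zero beyond,
      (∀ r, 0 < r → r ≤ R1 → ϱ r = rho k ℓ L0 y r ∧ p r = pres k ℓ L0 y r) ∧
      (∀ r, R1 < r → ϱ r = 0 ∧ p r = 0) ∧
      (∀ r, m r = 4 * π * ∫ s in Set.Ioc (0 : ℝ) r, s ^ 2 * ϱ s) ∧
      -- the field equation for y holds with 2m/r < 1,
      (∀ r, 0 < r → 2 * m r / r < 1 ∧
        HasDerivAt y (-(1 - 2 * m r / r)⁻¹ * (4 * π * r * p r + m r / r ^ 2)) r) ∧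
      -- (ii) the matter quantities vanish on [0,R₀] and on [R₁,∞) and are nontrivial,
      (∀ r, 0 ≤ r → r ≤ R0 → ϱ r = 0 ∧ p r = 0) ∧
      (∀ r, R1 ≤ r → ϱ r = 0 ∧ p r = 0) ∧
      (∃ r, R0 < r ∧ r < R1 ∧ 0 < ϱ r) ∧
      -- (iii) asymptotic flatness: y(r) → ln E₀ as r → ∞,
      Filter.Tendsto y Filter.atTop (nhds (Real.log E0)) ∧
      -- (iv) the solution is highly relativistic.
      (4 / 5 < ⨆ r : {t : ℝ // 0 < t}, 2 * m r.1 / r.1) ∧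
      (⨆ r : {t : ℝ // 0 < t}, 2 * m r.1 / r.1) < 8 / 9 := by
  obtain ⟨u, M, R, hR1, h, huR, r', hr1, hr2, hr3⟩ := exists_sol
  have hR := h.hR
  have hpi := Real.pi_pos
  set c := cConst (-(1 / 2)) with hcdef
  have hc : 0 < c := cConst_pos
  obtain ⟨lam, hl, hl3⟩ : ∃ lam : ℝ, 0 < lam ∧ lam ^ 3 = 3 * 10 ^ 14 / (8 * π * c) := by
    refine ⟨(3 * 10 ^ 14 / (8 * π * c)) ^ (1 / 3 : ℝ), by positivity, ?_⟩
    rw [← Real.rpow_natCast, ← Real.rpow_mul (by positivity)]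
    norm_num
  let y : ℝ → ℝ := fun r => log lam + ∫ s in (1:ℝ)..r, gt u M R s
  let ϱ : ℝ → ℝ := fun r => Dt u R r / (8 * π * r ^ 2)
  let p : ℝ → ℝ := fun r => Yt u R r / (8 * π * r ^ 2)
  let m : ℝ → ℝ := fun r => 4 * π * ∫ s in Set.Ioc (0 : ℝ) r, s ^ 2 * ϱ s
  have hg := cont_gt h
  have hy : ∀ r, HasDerivAt y (gt u M R r) r := fun r =>
    (intervalIntegral.integral_hasDerivAt_right (hg.intervalIntegrable _ _)
      (hg.stronglyMeasurableAtFilter _ _) hg.continuousAt).const_add _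
  have hm : ∀ r, 0 < r → m r = Ut M R r / 2 := by
    intro r hr
    rw [← int_Dt h huR hr.le, intervalIntegral.integral_of_le hr.le]
    simp only [m]
    rw [setIntegral_congr_fun measurableSet_Ioc (g := fun s => 1 / (8 * π) * Dt u R s)
      (fun s hs => by
        have : s ≠ 0 := hs.1.ne'
        simp only [ϱ]
        field_simp), integral_const_mul]
    field_simp
    ring
  have hzero : ∀ r, Ut u R r = 1 → ϱ r = 0 ∧ p r = 0 := by
    intro r hr
    simp only [ϱ, p, Dt, Yt]
    rw [hr, Df_one, Yf_one]; simp
  have hx : ∀ r, 0 < r → 2 * m r / r = Ut M R r / max r 1 := by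
    intro r hr
    rw [hm r hr]
    rcases le_total r 1 with h1 | h1
    · rw [Ut_low hR h1, h.M1]; simp
    · rw [max_eq_left h1]; ring
  -- maximum of 2m/r
  obtain ⟨s0, hs0, hs0max⟩ := isCompact_Icc.exists_isMaxOn (nonempty_Icc.2 hR)
    (f := fun r => M r / r) (ContinuousOn.div (fun r hr => (h.dM r hr).continuousWithinAt)
      continuousOn_id (fun r hr => by have := hr.1; exact (by linarith : (0:ℝ) < r).ne'))
  have hxb : ∀ r, 0 < r → 2 * m r / r ≤ M s0 / s0 := by
    intro r hr
    rw [hx r hr]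
    have hcm := cl_mem hR r
    refine le_trans ?_ (hs0max hcm)
    have h0 := h.Ml _ hcm
    have : cl 1 R r ≤ max r 1 := by
      unfold cl; exact max_le (le_max_right _ _) ((min_le_right _ _).trans (le_max_left _ _))
    have : 0 < cl 1 R r := by linarith [hcm.1]
    unfold Ut
    simp only
    gcongr
  have hbdd : BddAbove (Set.range fun r : {t : ℝ // 0 < t} => 2 * m r.1 / r.1) := by
    refine ⟨M s0 / s0, ?_⟩
    rintro _ ⟨r, rfl⟩
    exact hxb r.1 r.2
  have hRpos : 0 < R := by linarith
  let C : ℝ := y R + 1 / 2 * log (1 - M R / R)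
  refine ⟨0, -(1 / 2), lam ^ 2, exp C, 1, R, y, ϱ, p, m, le_rfl, le_rfl, by positivity,
    exp_pos _, one_pos, hR1, ?_, ?_, ?_, fun r => rfl, ?_, ?_, ?_, ?_, ?_, ?_, ?_⟩
  · have : ContDiff ℝ 1 y := by
      rw [contDiff_one_iff_deriv]
      refine ⟨fun r => (hy r).differentiableAt, ?_⟩
      have : deriv y = gt u M R := funext fun r => (hy r).deriv
      rw [this]; exact hg
    exact this.contDiffOn
  · intro r hr hrR
    rcases le_or_gt r 1 with h1 | h1
    · have h0 := rho_eq_zero (k := 0) (l := -(1 / 2)) (L0 := lam ^ 2) (y := y) (r := r) (by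
        simp only [y]
        rw [int_gt_low h h1, add_zero, exp_log hl, Real.sqrt_sq hl.le, le_div_iff₀ hr]
        nlinarith)
      rw [h0.1, h0.2]
      exact hzero r (by rw [Ut_low hR h1, h.u1])
    · have hrm : r ∈ Icc 1 R := ⟨h1.le, hrR⟩
      have hu := h.ul r hrm
      have h0 := rho_eq hl (y := y) (r := r) (u := u r) hr hu (by
        simp only [y]
        rw [int_gt_mid h hrm, exp_add, exp_log hl, exp_log (by positivity)]
        ring)
      rw [h0.1, h0.2, ← hcdef, hl3]
      simp only [ϱ, p, Dt, Yt, Df, Yf]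
      rw [Ut_mid hrm, max_eq_left h1.le]
      constructor <;> field_simp
  · intro r hr
    exact hzero r (by rw [Ut_high hR hr.le, huR])
  · intro r hr
    refine ⟨?_, ?_⟩
    · rw [hx r hr]; linarith [xt_lt h r]
    · convert! hy r using 1
      rw [hx r hr, hm r hr]
      unfold gt
      simp only [p]
      rcases le_total r 1 with h1 | h1
      · rw [Ut_low hR h1, h.M1]
        unfold Yt
        rw [Ut_low hR h1, h.u1, Yf_one]; simp
      · rw [max_eq_left h1]
        congr 1
        field_simp
        ring
  · intro r _ hr
    exact hzero r (by rw [Ut_low hR hr, h.u1])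
  · intro r hr
    exact hzero r (by rw [Ut_high hR hr, huR])
  · refine ⟨r', hr1, hr2, ?_⟩
    simp only [ϱ, Dt, Df]
    rw [Ut_mid ⟨hr1.le, hr2.le⟩, max_eq_left hr1.le]
    have : 0 < u r' ^ 3 - 1 := by
      have := one_lt_pow₀ hr3 (n := 3) (by norm_num)
      linarith
    have : 0 < r' := by linarith
    positivity
  · rw [Real.log_exp]
    have e : y =ᶠ[atTop] fun r => C - 1 / 2 * log (1 - M R / r) := by
      filter_upwards [eventually_ge_atTop R] with r hr
      have e1 : y r = y R + ∫ s in R..r, gt u M R s := by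
        simp only [y]
        rw [add_assoc, intervalIntegral.integral_add_adjacent_intervals
          (hg.intervalIntegrable _ _) (hg.intervalIntegrable _ _)]
      rw [e1, int_gt_high h huR hr]
      simp only [C]
      ring
    rw [tendsto_congr' e]
    have t1 : Tendsto (fun r : ℝ => 1 - M R / r) atTop (nhds (1 - 0)) :=
      tendsto_const_nhds.sub (tendsto_const_nhds.div_atTop tendsto_id)
    have t2 := (t1.log (by norm_num)).const_mul (1 / 2)
    have t3 := (tendsto_const_nhds (x := C)).sub t2
    simpa using t3
  · have h1 := h.x_gt hR1 huR
    refine h1.trans_le ?_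
    have := le_ciSup hbdd ⟨R, hRpos⟩
    refine le_trans (le_of_eq ?_) this
    simp only
    rw [hx R hRpos, Ut_high hR le_rfl, max_eq_left hR]
  · have : Nonempty {t : ℝ // 0 < t} := ⟨⟨1, one_pos⟩⟩
    refine lt_of_le_of_lt (ciSup_le fun r => hxb r.1 r.2) ?_
    exact h.x_lt hs0
end

section
/- There exist positive constants B₀, B₁, B₂ and ε > 0, depending only on k, ℓ and L₀, with the following property: if y is a quasi shell solution satisfying 2m(r)/r ≤ 8/9 for all r > 0 whose inner radius satisfies 0 < R₀ ≤ ε, then ϱ(r) > 0 for all r with R₀ < r ≤ R₀(1 + B₀R₀^{2/(q+1)}), and there exists a radius r₁ with R₀(1 + B₀R₀^{2/(q+1)}) < r₁ ≤ R₀(1 + B₂R₀^{1/(q+1)})/(1 − B₁R₀^{2/(q+1)}) such that γ(r₁) ≤ 0, hence ϱ(r₁) = p(r₁) = 0. -/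
open MeasureTheory Real Set Filter

lemma incr_le {f f' : ℝ → ℝ} {a b C : ℝ} (hab : a ≤ b)
    (hf : ∀ t ∈ Icc a b, HasDerivAt f (f' t) t) (hC : ∀ t ∈ Ioo a b, f' t ≤ C) :
    f b - f a ≤ C * (b - a) := by
  have := (convex_Icc a b).image_sub_le_mul_sub_of_deriv_le (f := f) (C := C)
    (fun t ht => (hf t ht).continuousAt.continuousWithinAt)
    (fun t ht => (hf t (interior_subset ht)).differentiableAt.differentiableWithinAt)
    (fun t ht => by
      rw [(hf t (interior_subset ht)).deriv]
      rw [interior_Icc] at ht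
      exact hC t ht) a (left_mem_Icc.2 hab) b (right_mem_Icc.2 hab) hab
  exact this

lemma incr_ge {f f' : ℝ → ℝ} {a b C : ℝ} (hab : a ≤ b)
    (hf : ∀ t ∈ Icc a b, HasDerivAt f (f' t) t) (hC : ∀ t ∈ Ioo a b, C ≤ f' t) :
    C * (b - a) ≤ f b - f a := by
  have := incr_le (f := fun t => - f t) (f' := fun t => - f' t) (C := -C) hab
    (fun t ht => (hf t ht).neg) (fun t ht => neg_le_neg (hC t ht))
  linarith

/-- algebraic bounds for the right-hand side -/
lemma rhs_le_one {s M Q : ℝ} (hs : 1 ≤ s) (hM : 0 ≤ M) (hM' : M ≤ 4 / 9 * s) (hQ : 0 ≤ Q) :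
    1 / s - (1 - 2 * M / s)⁻¹ * (Q + M / s ^ 2) ≤ 1 := by
  have h1 : 1 / s ≤ 1 := by rw [div_le_one (by linarith)]; exact hs
  have h2 : 2 * M / s ≤ 8 / 9 := by rw [div_le_iff₀ (by linarith)]; linarith
  have h3 : 0 ≤ (1 - 2 * M / s)⁻¹ := inv_nonneg.2 (by linarith)
  have : 0 ≤ (1 - 2 * M / s)⁻¹ * (Q + M / s ^ 2) := by positivity
  linarith

lemma rhs_ge {s M Q : ℝ} (hs : 1 ≤ s) (hM : 0 ≤ M) (hM' : M ≤ 4 / 9 * s) (hQ : 0 ≤ Q) :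
    1 / s - 9 * (Q + M) ≤ 1 / s - (1 - 2 * M / s)⁻¹ * (Q + M / s ^ 2) := by
  have h2 : 2 * M / s ≤ 8 / 9 := by rw [div_le_iff₀ (by linarith)]; linarith
  have h3 : (1 - 2 * M / s)⁻¹ ≤ 9 := by
    rw [inv_le_comm₀ (by linarith) (by norm_num)]; linarith
  have h4 : M / s ^ 2 ≤ M := div_le_self hM (by nlinarith)
  have h5 : 0 ≤ M / s ^ 2 := by positivity
  have : (1 - 2 * M / s)⁻¹ * (Q + M / s ^ 2) ≤ 9 * (Q + M) :=
    mul_le_mul h3 (by linarith) (by linarith) (by norm_num)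
  linarith

lemma rhs_ge' {s M Q : ℝ} (hs : 1 ≤ s) (hM' : M ≤ 1 / 3 * s) (hQ : 0 ≤ Q) :
    - 3 * Q ≤ 1 / s - (1 - 2 * M / s)⁻¹ * (Q + M / s ^ 2) := by
  have hs0 : 0 < s := by linarith
  set μ := M / s with hμ
  have hμ3 : μ ≤ 1 / 3 := by rw [hμ, div_le_iff₀ hs0]; linarith
  have e1 : 2 * M / s = 2 * μ := by rw [hμ]; ring
  have e2 : M / s ^ 2 = μ * (1 / s) := by rw [hμ]; field_simp
  rw [e1, e2]
  have hpos : 0 < 1 - 2 * μ := by linarith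
  have h3 : (1 - 2 * μ)⁻¹ ≤ 3 := by
    rw [inv_le_comm₀ (by linarith) (by norm_num)]; linarith
  have hi : 0 < 1 / s := by positivity
  have h4 : (1 - 2 * μ)⁻¹ * μ ≤ 1 := by
    rw [inv_mul_le_iff₀ hpos]; linarith
  have h5 : (1 - 2 * μ)⁻¹ * Q ≤ 3 * Q := mul_le_mul_of_nonneg_right h3 hQ
  have h6 : (1 - 2 * μ)⁻¹ * μ * (1 / s) ≤ 1 * (1 / s) := mul_le_mul_of_nonneg_right h4 hi.le
  nlinarith

lemma rhs_le_neg {s M Q η : ℝ} (hη : 0 ≤ η) (hs : 1 ≤ s) (hs2 : s ≤ 2)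
    (hM1 : (1 / 3 + η) * s ≤ M) (hM' : M ≤ 4 / 9 * s)
    (hQ : 0 ≤ Q) :
    1 / s - (1 - 2 * M / s)⁻¹ * (Q + M / s ^ 2) ≤ - (3 * η / 2) := by
  have hs0 : 0 < s := by linarith
  set μ := M / s with hμ
  have hμ3 : 1 / 3 + η ≤ μ := by rw [hμ, le_div_iff₀ hs0]; linarith
  have hμ4 : μ ≤ 4 / 9 := by rw [hμ, div_le_iff₀ hs0]; linarith
  have e1 : 2 * M / s = 2 * μ := by rw [hμ]; ring
  have e2 : M / s ^ 2 = μ * (1 / s) := by rw [hμ]; field_simp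
  rw [e1, e2]
  have hpos : 0 < 1 - 2 * μ := by linarith
  have hi : 1 / 2 ≤ 1 / s := one_div_le_one_div_of_le hs0 hs2
  have h4 : 1 + 3 * η ≤ (1 - 2 * μ)⁻¹ * μ := by
    rw [inv_mul_eq_div, le_div_iff₀ hpos]; nlinarith
  have h5 : 0 ≤ (1 - 2 * μ)⁻¹ * Q := by positivity
  have h6 : (1 + 3 * η) * (1 / s) ≤ (1 - 2 * μ)⁻¹ * μ * (1 / s) :=
    mul_le_mul_of_nonneg_right h4 (by linarith)
  nlinarith

set_option maxHeartbeats 1600000 in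
lemma ode_lemma (q a1 a2 b : ℝ) (hq : 1 ≤ q) (ha1 : 0 < a1) (ha2 : 0 < a2) (hb : 0 < b) :
    ∃ t0 T δ0 : ℝ, 0 < t0 ∧ t0 < T ∧ 0 < δ0 ∧ δ0 * T ≤ 1 ∧
      ∀ δ : ℝ, 0 < δ → δ ≤ δ0 → ∀ G M Mp Q : ℝ → ℝ, G 0 = 0 → M 0 = 0 →
        (∀ t ∈ Icc 0 T, HasDerivAt G (1 / (1 + t * δ) -
          (1 - 2 * M t / (1 + t * δ))⁻¹ * (Q t + M t / (1 + t * δ) ^ 2)) t) →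
        (∀ t ∈ Icc 0 T, HasDerivAt M (Mp t) t) →
        (∀ t ∈ Icc 0 T, 0 ≤ Q t) → (∀ t ∈ Icc 0 T, 0 ≤ Mp t) →
        (∀ t ∈ Icc 0 T, 0 ≤ M t) → (∀ t ∈ Icc 0 T, M t ≤ 4 / 9 * (1 + t * δ)) →
        (∀ t ∈ Icc 0 T, G t ≤ t → a1 * max (G t) 0 ^ q ≤ Mp t ∧ Mp t ≤ a2 * max (G t) 0 ^ q ∧
          Q t ≤ b * max (G t) 0 ^ (q + 1)) →
        (∀ t, 0 < t → t ≤ t0 → 0 < G t) ∧ ∃ t1, t0 < t1 ∧ t1 ≤ T ∧ G t1 ≤ 0 := by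
  set t0 : ℝ := min 1 (1 / (36 * (b + a2))) with ht0
  have ht0p : 0 < t0 := by positivity
  have ht01 : t0 ≤ 1 := min_le_left _ _
  have ht02 : 9 * (b * t0 + a2 * t0) ≤ 1 / 4 := by
    have : t0 ≤ 1 / (36 * (b + a2)) := min_le_right _ _
    rw [le_div_iff₀ (by positivity)] at this
    linarith
  set b' : ℝ := b / a1 with hb'
  have hb'p : 0 < b' := by positivity
  set c3 : ℝ := t0 / 4 * Real.exp (-(3 * b')) with hc3
  have hc3p : 0 < c3 := by positivity
  set T1 : ℝ := 1 / (a1 * c3 ^ q) with hT1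
  have hT1p : 0 < T1 := by positivity
  set T3 : ℝ := t0 + T1 + 1 with hT3
  set K : ℝ := 9 * (b * T3 ^ (q + 1) + 1) with hK
  have hT3p : 0 < T3 := by positivity
  have hKp : 0 < K := by positivity
  set τ : ℝ := min 1 (c3 / (2 * K)) with hτ
  have hτp : 0 < τ := by positivity
  have hτ1 : τ ≤ 1 := min_le_left _ _
  have hτ2 : K * τ ≤ c3 / 2 := by
    have : τ ≤ c3 / (2 * K) := min_le_right _ _
    rw [le_div_iff₀ (by positivity)] at this
    linarith
  set η : ℝ := a1 * (c3 / 2) ^ q * τ / 2 with hη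
  have hηp : 0 < η := by positivity
  set T : ℝ := T3 + T3 / η with hT
  have hTT3 : T3 < T := by rw [hT]; linarith [div_pos hT3p hηp]
  have hTp : 0 < T := by linarith
  have hηT : η * (T - T3) = T3 := by rw [hT]; field_simp; ring
  set δ0 : ℝ := min (1 / T) (η / (T * (1 / 3 + η))) with hδ0
  have hδ0p : 0 < δ0 := by positivity
  have hδ0T : δ0 * T ≤ 1 := by
    have : δ0 ≤ 1 / T := min_le_left _ _
    rwa [le_div_iff₀ hTp] at this
  have hδ0η : δ0 * T * (1 / 3 + η) ≤ η := by
    have : δ0 ≤ η / (T * (1 / 3 + η)) := min_le_right _ _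
    rw [le_div_iff₀ (by positivity)] at this
    linarith
  refine ⟨t0, T, δ0, ht0p, by linarith, hδ0p, hδ0T, ?_⟩
  intro δ hδ hδle G M Mp Q hG0 hM0 hG hM hQ hMp hMnn hMle hbd
  have hsub : ∀ {u v : ℝ}, 0 ≤ u → v ≤ T → ∀ t ∈ Icc u v, t ∈ Icc 0 T :=
    fun hu hv t ht => ⟨hu.trans ht.1, ht.2.trans hv⟩
  have hs1 : ∀ t ∈ Icc 0 T, 1 ≤ 1 + t * δ := fun t ht => by
    have := mul_nonneg ht.1 hδ.le; linarith
  have hs2' : ∀ t ∈ Icc 0 T, t * δ ≤ δ0 * T := fun t ht => by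
    rw [mul_comm]; exact mul_le_mul hδle ht.2 ht.1 hδ0p.le
  have hs2 : ∀ t ∈ Icc 0 T, 1 + t * δ ≤ 2 := fun t ht => by linarith [hs2' t ht]
  have hM1 : ∀ t ∈ Icc 0 T, M t < 1 := fun t ht => by linarith [hMle t ht, hs2 t ht]
  have hGt : ∀ t ∈ Icc 0 T, G t ≤ t := fun t ht => by
    have := incr_le (C := 1) ht.1 (fun u hu => hG u (hsub le_rfl ht.2 u hu)) (fun u hu => by
      have hu' := hsub le_rfl ht.2 u (Ioo_subset_Icc_self hu)
      exact rhs_le_one (hs1 u hu') (hMnn u hu') (hMle u hu') (hQ u hu'))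
    rw [hG0] at this; linarith
  have hmaxt : ∀ t ∈ Icc 0 T, max (G t) 0 ≤ t := fun t ht => max_le (hGt t ht) ht.1
  have hT0 : t0 ≤ T := by linarith
  -- Phase A
  have hpow : ∀ p : ℝ, 1 ≤ p → ∀ t ∈ Icc 0 t0, max (G t) 0 ^ p ≤ t0 := fun p hp t ht => by
    have h1 := hmaxt t (hsub le_rfl hT0 t ht)
    have h0 : 0 ≤ max (G t) 0 := le_max_right _ _
    calc max (G t) 0 ^ p ≤ max (G t) 0 ^ (1 : ℝ) :=
          Real.rpow_le_rpow_of_exponent_ge' h0 (by linarith [ht.2]) (by norm_num) hp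
      _ = max (G t) 0 := Real.rpow_one _
      _ ≤ t0 := by linarith [ht.2]
  have hMA : ∀ t ∈ Icc 0 t0, M t ≤ a2 * t0 := fun t ht => by
    have := incr_le (C := a2 * t0) ht.1
      (fun u hu => hM u (hsub le_rfl (ht.2.trans hT0) u hu)) (fun u hu => by
      have hu' := hsub le_rfl (ht.2.trans hT0) u (Ioo_subset_Icc_self hu)
      refine (hbd u hu' (hGt u hu')).2.1.trans ?_
      exact mul_le_mul_of_nonneg_left (hpow q hq u ⟨hu.1.le, hu.2.le.trans ht.2⟩) ha2.le)
    rw [hM0] at this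
    have h2 : a2 * t0 * (t - 0) ≤ a2 * t0 * 1 :=
      mul_le_mul_of_nonneg_left (by linarith [ht.2]) (by positivity)
    linarith
  have hGA : ∀ t ∈ Icc 0 t0, t / 4 ≤ G t := fun t ht => by
    have := incr_ge (C := 1 / 4) ht.1
      (fun u hu => hG u (hsub le_rfl (ht.2.trans hT0) u hu)) (fun u hu => by
      have hu' := hsub le_rfl (ht.2.trans hT0) u (Ioo_subset_Icc_self hu)
      have hu0 : u ∈ Icc 0 t0 := ⟨hu.1.le, hu.2.le.trans ht.2⟩
      refine le_trans ?_ (rhs_ge (hs1 u hu') (hMnn u hu') (hMle u hu') (hQ u hu'))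
      have h1 := (hbd u hu' (hGt u hu')).2.2
      have h2 := mul_le_mul_of_nonneg_left (hpow (q + 1) (by linarith) u hu0) hb.le
      have h3 := hMA u hu0
      have h4 : 1 / 2 ≤ 1 / (1 + u * δ) :=
        one_div_le_one_div_of_le (by linarith [hs1 u hu']) (hs2 u hu')
      linarith)
    rw [hG0] at this; linarith
  refine ⟨fun t h0 h1 => lt_of_lt_of_le (by positivity) (hGA t ⟨h0.le, h1⟩), ?_⟩
  by_contra hcon
  push Not at hcon
  have hGpos : ∀ t, t0 ≤ t → t ≤ T → 0 < G t := fun t h1 h2 => by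
    rcases h1.eq_or_lt with h | h
    · subst h; exact lt_of_lt_of_le (by positivity) (hGA t0 ⟨ht0p.le, le_rfl⟩)
    · exact hcon t h h2
  have hmono : ∀ u v, 0 ≤ u → u ≤ v → v ≤ T → M u ≤ M v := fun u v h0 huv hv => by
    have := incr_ge (C := 0) huv (fun t ht => hM t (hsub h0 hv t ht)) (fun t ht =>
      hMp t (hsub h0 hv t (Ioo_subset_Icc_self ht)))
    linarith
  -- Phase B
  have hB : ∀ v, t0 ≤ v → v ≤ T → (∀ t ∈ Ioo t0 v, M t ≤ 1 / 3 * (1 + t * δ)) → c3 ≤ G v := by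
    intro v hv hvT hlt
    have hd : ∀ t ∈ Icc t0 v, HasDerivAt (fun t => G t * Real.exp (3 * b' * M t))
        ((1 / (1 + t * δ) -
          (1 - 2 * M t / (1 + t * δ))⁻¹ * (Q t + M t / (1 + t * δ) ^ 2)) *
          Real.exp (3 * b' * M t) + G t * (Real.exp (3 * b' * M t) * (3 * b' * Mp t))) t :=
      fun t ht => by
        have ht' := hsub ht0p.le hvT t ht
        exact (hG t ht').mul (((hM t ht').const_mul (3 * b')).exp)
    have := incr_ge (C := 0) hv hd (fun t ht => by
      have ht' := hsub ht0p.le hvT t (Ioo_subset_Icc_self ht)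
      have h1 := rhs_ge' (hs1 t ht') (hlt t ht) (hQ t ht')
      obtain ⟨h2, -, h3⟩ := hbd t ht' (hGt t ht')
      have hg := hGpos t ht.1.le ht'.2
      rw [max_eq_left hg.le] at h2 h3
      rw [Real.rpow_add hg, Real.rpow_one] at h3
      have h4 : Q t ≤ b' * Mp t * G t := by
        refine h3.trans ?_
        have : b * G t ^ q ≤ b' * Mp t := by
          calc b * G t ^ q = b' * (a1 * G t ^ q) := by rw [hb']; field_simp
            _ ≤ _ := mul_le_mul_of_nonneg_left h2 hb'p.le
        calc b * (G t ^ q * G t) = b * G t ^ q * G t := by ring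
          _ ≤ _ := mul_le_mul_of_nonneg_right this hg.le
      have he : 0 < Real.exp (3 * b' * M t) := Real.exp_pos _
      have h5 : -(3 * (b' * Mp t * G t)) ≤ 1 / (1 + t * δ) -
          (1 - 2 * M t / (1 + t * δ))⁻¹ * (Q t + M t / (1 + t * δ) ^ 2) := by linarith
      have h6 := mul_le_mul_of_nonneg_right h5 he.le
      linarith)
    have hvI : v ∈ Icc 0 T := ⟨by linarith, hvT⟩
    have h7 : t0 / 4 ≤ G v * Real.exp (3 * b' * M v) := by
      have h8 : t0 / 4 ≤ G t0 * Real.exp (3 * b' * M t0) := by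
        have h9 := hGA t0 ⟨ht0p.le, le_rfl⟩
        have h10 : 1 ≤ Real.exp (3 * b' * M t0) :=
          Real.one_le_exp (mul_nonneg (by positivity) (hMnn t0 ⟨ht0p.le, hT0⟩))
        nlinarith
      linarith
    have h11 : Real.exp (3 * b' * M v) ≤ Real.exp (3 * b') := Real.exp_le_exp.2 (by
      have := mul_le_mul_of_nonneg_left (hM1 v hvI).le (by positivity : 0 ≤ 3 * b')
      linarith)
    have h12 : t0 / 4 ≤ G v * Real.exp (3 * b') :=
      h7.trans (mul_le_mul_of_nonneg_left h11 (hGpos v hv hvT).le)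
    rw [hc3, Real.exp_neg, ← div_eq_mul_inv, div_le_iff₀ (Real.exp_pos _)]
    exact h12
  -- first time with M ≥ s/3
  have hex : ∃ t2, t0 ≤ t2 ∧ t2 ≤ t0 + T1 ∧ 1 / 3 * (1 + t2 * δ) ≤ M t2 ∧ c3 ≤ G t2 := by
    set S : Set ℝ := Icc t0 (t0 + T1) ∩ {t | 0 ≤ M t - 1 / 3 * (1 + t * δ)} with hS
    have hcont : ContinuousOn (fun t => M t - 1 / 3 * (1 + t * δ)) (Icc t0 (t0 + T1)) := by
      apply ContinuousOn.sub
      · intro t ht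
        exact (hM t (hsub ht0p.le (by linarith) t ht)).continuousAt.continuousWithinAt
      · fun_prop
    have hcl : IsClosed S := hcont.preimage_isClosed_of_isClosed isClosed_Icc isClosed_Ici
    have hcpt : IsCompact S := isCompact_Icc.of_isClosed_subset hcl inter_subset_left
    have hne : S.Nonempty := by
      by_contra hemp
      rw [not_nonempty_iff_eq_empty] at hemp
      have hlt : ∀ t ∈ Icc t0 (t0 + T1), M t < 1 / 3 * (1 + t * δ) := fun t ht => by
        by_contra hge
        have : t ∈ S := ⟨ht, by simp only [mem_ofPred_eq]; linarith⟩
        rw [hemp] at this; exact this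
      have hge : ∀ v ∈ Icc t0 (t0 + T1), c3 ≤ G v := fun v hv =>
        hB v hv.1 (by linarith [hv.2]) (fun t ht => (hlt t ⟨ht.1.le, ht.2.le.trans hv.2⟩).le)
      have := incr_ge (f := M) (C := a1 * c3 ^ q) (show t0 ≤ t0 + T1 by linarith)
        (fun t ht => hM t (hsub ht0p.le (by linarith) t ht)) (fun t ht => by
        have ht' := hsub ht0p.le (show t0 + T1 ≤ T by linarith) t (Ioo_subset_Icc_self ht)
        refine le_trans ?_ (hbd t ht' (hGt t ht')).1
        exact mul_le_mul_of_nonneg_left (Real.rpow_le_rpow hc3p.le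
          ((hge t (Ioo_subset_Icc_self ht)).trans (le_max_left _ _)) (by linarith)) ha1.le)
      have h1 : a1 * c3 ^ q * (t0 + T1 - t0) = 1 := by
        rw [hT1]; field_simp; ring
      have h2 := hMnn t0 ⟨ht0p.le, hT0⟩
      have h3 := hM1 (t0 + T1) ⟨by linarith, by linarith⟩
      linarith
    obtain ⟨t2, ht2, hleast⟩ := hcpt.exists_isLeast hne
    refine ⟨t2, ht2.1.1, ht2.1.2, by have := ht2.2; simp only [mem_ofPred_eq] at this; linarith, ?_⟩
    refine hB t2 ht2.1.1 (by linarith [ht2.1.2]) (fun t ht => ?_)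
    by_contra hge
    push Not at hge
    have : t ∈ S := ⟨⟨ht.1.le, ht.2.le.trans ht2.1.2⟩, by simp only [mem_ofPred_eq]; linarith⟩
    linarith [hleast this, ht.2]
  obtain ⟨t2, h20, h21, hM2, hG2⟩ := hex
  set t3 := t2 + τ with ht3
  have h3T3 : t3 ≤ T3 := by linarith
  have hGB : ∀ v ∈ Icc t2 t3, c3 / 2 ≤ G v := fun v hv => by
    have := incr_ge (C := -K) hv.1
      (fun u hu => hG u (hsub (by linarith) (by linarith [hv.2]) u hu)) (fun u hu => by
      have hu' : u ∈ Icc 0 T := ⟨by linarith [hu.1], by linarith [hu.2, hv.2]⟩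
      refine le_trans ?_ (rhs_ge (hs1 u hu') (hMnn u hu') (hMle u hu') (hQ u hu'))
      have h1 := (hbd u hu' (hGt u hu')).2.2
      have h2 : max (G u) 0 ^ (q + 1) ≤ T3 ^ (q + 1) :=
        Real.rpow_le_rpow (le_max_right _ _)
          ((hmaxt u hu').trans (by linarith [hu.2, hv.2])) (by linarith)
      have h2' := mul_le_mul_of_nonneg_left h2 hb.le
      have h3 := hM1 u hu'
      have h4 : 0 < 1 / (1 + u * δ) := by
        have := hs1 u hu'
        positivity
      rw [hK]
      linarith)
    have h5 : K * (v - t2) ≤ K * τ := mul_le_mul_of_nonneg_left (by linarith [hv.2]) hKp.le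
    linarith
  have hM3 : 1 / 3 + 2 * η ≤ M t3 := by
    have := incr_ge (f := M) (C := a1 * (c3 / 2) ^ q) (show t2 ≤ t3 by linarith)
      (fun t ht => hM t (hsub (by linarith) (by linarith) t ht)) (fun t ht => by
      have ht' := hsub (show 0 ≤ t2 by linarith) (show t3 ≤ T by linarith) t
        (Ioo_subset_Icc_self ht)
      refine le_trans ?_ (hbd t ht' (hGt t ht')).1
      exact mul_le_mul_of_nonneg_left (Real.rpow_le_rpow (by positivity)
        ((hGB t (Ioo_subset_Icc_self ht)).trans (le_max_left _ _)) (by linarith)) ha1.le)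
    have h1 : t3 - t2 = τ := by rw [ht3]; ring
    rw [h1] at this
    have h2 := hs1 t2 ⟨by linarith, by linarith⟩
    rw [hη]; linarith
  -- Phase C
  have hfin := incr_le (f := G) (C := -(3 * η / 2)) (show t3 ≤ T by linarith)
    (fun t ht => hG t (hsub (by linarith) le_rfl t ht)) (fun t ht => by
    have ht' : t ∈ Icc 0 T := ⟨by linarith [ht.1], ht.2.le⟩
    refine rhs_le_neg hηp.le (hs1 t ht') (hs2 t ht') ?_ (hMle t ht') (hQ t ht')
    have h1 := hmono t3 t (by linarith) ht.1.le ht.2.le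
    have h2 : t * δ * (1 / 3 + η) ≤ δ0 * T * (1 / 3 + η) :=
      mul_le_mul_of_nonneg_right (hs2' t ht') (by positivity)
    linarith)
  have h1 := hGt t3 ⟨by linarith, by linarith⟩
  have h2 := hGpos T hT0 le_rfl
  have h3 : η * (T - T3) ≤ η * (T - t3) := mul_le_mul_of_nonneg_left (by linarith) hηp.le
  nlinarith

lemma cConst_pos_s1 {ℓ : ℝ} (hl : -(1 / 2) ≤ ℓ) : 0 < cConst ℓ := by
  have hint : IntervalIntegrable (fun s : ℝ => s ^ ℓ / Real.sqrt (1 - s)) volume 0 1 := by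
    have h := Complex.betaIntegral_convergent (u := ((ℓ + 1 : ℝ) : ℂ)) (v := ((1 / 2 : ℝ) : ℂ))
      (by rw [Complex.ofReal_re]; linarith) (by rw [Complex.ofReal_re]; norm_num)
    refine h.norm.congr ?_
    intro s hs
    rw [uIoc_of_le zero_le_one] at hs
    rcases hs.2.eq_or_lt with h1 | h1
    · subst h1
      simp
      norm_num
    · have h1' : 0 < 1 - s := by linarith
      simp only [norm_mul]
      rw [show (1 : ℂ) - (s : ℂ) = ((1 - s : ℝ) : ℂ) by push_cast; ring,
        Complex.norm_cpow_eq_rpow_re_of_pos hs.1, Complex.norm_cpow_eq_rpow_re_of_pos h1',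
        Real.sqrt_eq_rpow, div_eq_mul_inv (s ^ ℓ), ← Real.rpow_neg h1'.le]
      have e1 : (((ℓ + 1 : ℝ) : ℂ) - 1).re = ℓ := by simp
      have e2 : (((1 / 2 : ℝ) : ℂ) - 1).re = -(1 / 2) := by
        rw [Complex.sub_re, Complex.ofReal_re, Complex.one_re]; norm_num
      rw [e1, e2]
  have := intervalIntegral.intervalIntegral_pos_of_pos_on hint (fun s hs => by
    have h1 : 0 < 1 - s := by linarith [hs.2]
    have h2 := hs.1
    positivity) zero_lt_one
  rw [intervalIntegral.integral_of_le zero_le_one] at this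
  unfold cConst
  have := Real.pi_pos
  positivity

/-- The rescaled matter integral. -/
noncomputable def jInt (k α : ℝ) (n : ℕ) (z : ℝ) : ℝ :=
  ∫ v in (0 : ℝ)..1, (1 - v) ^ k * v ^ α * (1 + z * v) ^ n * (2 + z * v) ^ α

/-- The matter function in the variable `z = e^γ - 1`. -/
noncomputable def gInt (k α : ℝ) (n : ℕ) (z : ℝ) : ℝ :=
  z ^ (k + α + 1) * ((1 + z) ^ k)⁻¹ * jInt k α n z

lemma integrand_cont {k α : ℝ} (hk : 0 ≤ k) (hα : 0 ≤ α) (n : ℕ) :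
    Continuous (fun w : ℝ × ℝ => (1 - w.2) ^ k * w.2 ^ α * (1 + w.1 * w.2) ^ n *
      (2 + w.1 * w.2) ^ α) := by
  have h1 : Continuous (fun w : ℝ × ℝ => (1 - w.2) ^ k) :=
    (continuous_const.sub continuous_snd).rpow_const (fun _ => Or.inr hk)
  have h2 : Continuous (fun w : ℝ × ℝ => w.2 ^ α) :=
    continuous_snd.rpow_const (fun _ => Or.inr hα)
  have h3 : Continuous (fun w : ℝ × ℝ => (2 + w.1 * w.2) ^ α) :=
    (continuous_const.add (continuous_fst.mul continuous_snd)).rpow_const (fun _ => Or.inr hα)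
  exact ((h1.mul h2).mul (by fun_prop)).mul h3

lemma jInt_cont {k α : ℝ} (hk : 0 ≤ k) (hα : 0 ≤ α) (n : ℕ) : Continuous (jInt k α n) :=
  intervalIntegral.continuous_parametric_intervalIntegral_of_continuous' (f := fun z v : ℝ =>
    (1 - v) ^ k * v ^ α * (1 + z * v) ^ n * (2 + z * v) ^ α) (integrand_cont hk hα n) 0 1

lemma gInt_contOn {k α : ℝ} (hk : 0 ≤ k) (hα : 0 ≤ α) (n : ℕ) :
    ContinuousOn (gInt k α n) (Ici 0) := by
  unfold gInt
  refine ContinuousOn.mul (ContinuousOn.mul ?_ ?_) (jInt_cont hk hα n).continuousOn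
  · exact (continuous_id.rpow_const (fun _ => Or.inr (by linarith))).continuousOn
  · refine ContinuousOn.inv₀ ?_ ?_
    · exact ((continuous_const.add continuous_id).rpow_const (fun _ => Or.inr hk)).continuousOn
    · intro z hz
      have : (0 : ℝ) ≤ z := hz
      positivity

/-- The base integral. -/
noncomputable def jBase (k α : ℝ) : ℝ := ∫ v in (0 : ℝ)..1, (1 - v) ^ k * v ^ α

lemma jBase_cont {k α : ℝ} (hk : 0 ≤ k) (hα : 0 ≤ α) :
    Continuous (fun v : ℝ => (1 - v) ^ k * v ^ α) :=
  ((continuous_const.sub continuous_id).rpow_const (fun _ => Or.inr hk)).mul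
    (continuous_id.rpow_const (fun _ => Or.inr hα))

lemma jBase_pos {k α : ℝ} (hk : 0 ≤ k) (hα : 0 ≤ α) : 0 < jBase k α := by
  refine intervalIntegral.intervalIntegral_pos_of_pos_on
    ((jBase_cont hk hα).intervalIntegrable _ _) (fun v hv => ?_) zero_lt_one
  have h1 : 0 < 1 - v := by linarith [hv.2]
  have h2 := hv.1
  positivity

lemma jInt_ge {k α : ℝ} (hk : 0 ≤ k) (hα : 0 ≤ α) (n : ℕ) {z : ℝ} (hz : 0 ≤ z) :
    jBase k α ≤ jInt k α n z := by
  refine intervalIntegral.integral_mono_on zero_le_one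
    ((jBase_cont hk hα).intervalIntegrable _ _)
    (((integrand_cont hk hα n).comp (Continuous.prodMk_right z)).intervalIntegrable _ _)
    (fun v hv => ?_)
  have h1 : 0 ≤ 1 - v := by linarith [hv.2]
  have h2 := hv.1
  have h3 : 1 ≤ (1 + z * v) ^ n := one_le_pow₀ (by nlinarith)
  have h4 : 1 ≤ (2 + z * v) ^ α := Real.one_le_rpow (by nlinarith) hα
  have h5 : 0 ≤ (1 - v) ^ k * v ^ α := by positivity
  calc (1 - v) ^ k * v ^ α = (1 - v) ^ k * v ^ α * 1 * 1 := by ring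
    _ ≤ _ := by gcongr

lemma jInt_le {k α : ℝ} (hk : 0 ≤ k) (hα : 0 ≤ α) (n : ℕ) {z : ℝ} (hz : 0 ≤ z) (hz2 : z ≤ 2) :
    jInt k α n z ≤ jBase k α * (3 ^ n * 4 ^ α) := by
  unfold jBase
  rw [← intervalIntegral.integral_mul_const]
  refine intervalIntegral.integral_mono_on zero_le_one
    (((integrand_cont hk hα n).comp (Continuous.prodMk_right z)).intervalIntegrable _ _)
    (((jBase_cont hk hα).mul continuous_const).intervalIntegrable _ _)
    (fun v hv => ?_)
  have h1 : 0 ≤ 1 - v := by linarith [hv.2]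
  have h2 := hv.1
  have hzv : z * v ≤ 2 := by nlinarith [hv.2]
  have hzv0 : 0 ≤ z * v := by positivity
  have h5 : 0 ≤ (1 - v) ^ k * v ^ α := by positivity
  rw [← mul_assoc]
  gcongr
  · linarith
  · linarith

lemma gInt_nonneg {k α : ℝ} (hk : 0 ≤ k) (hα : 0 ≤ α) (n : ℕ) {z : ℝ} (hz : 0 ≤ z) :
    0 ≤ gInt k α n z := by
  have := (jBase_pos hk hα).le.trans (jInt_ge hk hα n hz)
  unfold gInt
  positivity

lemma gInt_le {k α : ℝ} (hk : 0 ≤ k) (hα : 0 ≤ α) (n : ℕ) {z : ℝ} (hz : 0 ≤ z) (hz2 : z ≤ 2) :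
    gInt k α n z ≤ z ^ (k + α + 1) * (jBase k α * (3 ^ n * 4 ^ α)) := by
  have h0 := (jBase_pos hk hα).le.trans (jInt_ge hk hα n hz)
  have h1 := jInt_le hk hα n hz hz2
  have h2 : ((1 + z) ^ k)⁻¹ ≤ 1 := inv_le_one_of_one_le₀ (Real.one_le_rpow (by linarith) hk)
  unfold gInt
  calc z ^ (k + α + 1) * ((1 + z) ^ k)⁻¹ * jInt k α n z
      ≤ z ^ (k + α + 1) * 1 * (jBase k α * (3 ^ n * 4 ^ α)) := by gcongr
    _ = _ := by ring

lemma gInt_ge {k α : ℝ} (hk : 0 ≤ k) (hα : 0 ≤ α) (n : ℕ) {z : ℝ} (hz : 0 ≤ z) (hz2 : z ≤ 2) :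
    z ^ (k + α + 1) * (((3 : ℝ) ^ k)⁻¹ * jBase k α) ≤ gInt k α n z := by
  have h0 := (jBase_pos hk hα).le
  have h1 := jInt_ge hk hα n hz
  have h2 : ((3 : ℝ) ^ k)⁻¹ ≤ ((1 + z) ^ k)⁻¹ := by
    gcongr
    linarith
  unfold gInt
  rw [← mul_assoc]
  gcongr

lemma subst_int (k α : ℝ) (n : ℕ) {a b : ℝ} (ha : 0 < a) (hab : a < b) :
    ∫ ε in Ioc a b, (1 - ε * b⁻¹) ^ k * ε ^ n * (ε ^ 2 - a ^ 2) ^ α =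
      a ^ n * (a ^ 2) ^ α * a * gInt k α n ((b - a) / a) := by
  have hb : 0 < b := ha.trans hab
  set z := (b - a) / a with hz
  have hzp : 0 < z := div_pos (by linarith) ha
  have hbz : b = a * (1 + z) := by rw [hz]; field_simp; ring
  have hba : b - a = a * z := by rw [hbz]; ring
  rw [← intervalIntegral.integral_of_le hab.le]
  have key := intervalIntegral.smul_integral_comp_add_mul (a := 0) (b := 1)
    (fun ε : ℝ => (1 - ε * b⁻¹) ^ k * ε ^ n * (ε ^ 2 - a ^ 2) ^ α) (b - a) a
  rw [show a + (b - a) * 0 = a by ring, show a + (b - a) * 1 = b by ring] at key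
  rw [← key, smul_eq_mul]
  unfold gInt jInt
  rw [← intervalIntegral.integral_const_mul, ← intervalIntegral.integral_const_mul,
    ← intervalIntegral.integral_const_mul]
  apply intervalIntegral.integral_congr
  intro v hv
  rw [uIcc_of_le zero_le_one] at hv
  have h1 : 0 ≤ 1 - v := by linarith [hv.2]
  have h2 := hv.1
  have e1 : 1 - (a + (b - a) * v) * b⁻¹ = z * (1 + z)⁻¹ * (1 - v) := by
    rw [hba, hbz]; field_simp; ring
  have e2 : a + (b - a) * v = a * (1 + z * v) := by rw [hba]; ring
  have e3 : (a + (b - a) * v) ^ 2 - a ^ 2 = a ^ 2 * (z * (v * (2 + z * v))) := by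
    rw [hba]; ring
  simp only
  rw [e1, e3, e2, hba, Real.mul_rpow (by positivity) h1, Real.mul_rpow hzp.le (by positivity),
    Real.inv_rpow (by positivity), Real.mul_rpow (x := a ^ 2) (by positivity) (by positivity),
    Real.mul_rpow hzp.le (by positivity), Real.mul_rpow h2 (by positivity),
    Real.rpow_add hzp, Real.rpow_add hzp, Real.rpow_one, mul_pow]
  ring

/-- `z(r) = max (e^γ - 1) 0`. -/
noncomputable def zFn (L0 : ℝ) (y : ℝ → ℝ) (r : ℝ) : ℝ := max (Real.exp (charFn L0 y r) - 1) 0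

lemma charFn_eq {L0 : ℝ} (hL : 0 < L0) (y : ℝ → ℝ) {r : ℝ} (hr : 0 < r) :
    charFn L0 y r = y r + Real.log r - Real.log L0 / 2 := by
  unfold charFn
  rw [Real.log_div hL.ne' (by positivity), Real.log_pow]
  push_cast
  ring

lemma exp_charFn {L0 : ℝ} (hL : 0 < L0) (y : ℝ → ℝ) {r : ℝ} (hr : 0 < r) :
    Real.exp (charFn L0 y r) = Real.exp (y r) / (Real.sqrt L0 / r) := by
  rw [charFn_eq hL y hr, ← Real.log_sqrt hL.le, Real.exp_sub, Real.exp_add, Real.exp_log hr,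
    Real.exp_log (Real.sqrt_pos.2 hL)]
  field_simp

lemma matter_int {k α : ℝ} (hk : 0 ≤ k) (hα : 0 ≤ α) (n : ℕ) {L0 : ℝ} (hL : 0 < L0) (y : ℝ → ℝ)
    {r : ℝ} (hr : 0 < r) :
    ∫ ε in Set.Ioc (Real.sqrt L0 / r) (Real.exp (y r)),
      (1 - ε * Real.exp (-(y r))) ^ k * ε ^ n * (ε ^ 2 - L0 / r ^ 2) ^ α =
    (Real.sqrt L0 / r) ^ n * ((Real.sqrt L0 / r) ^ 2) ^ α * (Real.sqrt L0 / r) *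
      gInt k α n (zFn L0 y r) := by
  have ha : 0 < Real.sqrt L0 / r := div_pos (Real.sqrt_pos.2 hL) hr
  have e : L0 / r ^ 2 = (Real.sqrt L0 / r) ^ 2 := by rw [div_pow, Real.sq_sqrt hL.le]
  rcases lt_or_ge (Real.sqrt L0 / r) (Real.exp (y r)) with h | h
  · rw [e, Real.exp_neg, subst_int k α n ha h]
    unfold zFn
    rw [exp_charFn hL y hr, max_eq_left]
    · congr 2
      field_simp
    · rw [sub_nonneg, le_div_iff₀ ha]; linarith
  · rw [Ioc_eq_empty (not_lt.2 h)]
    have : zFn L0 y r = 0 := by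
      unfold zFn
      rw [exp_charFn hL y hr]
      apply max_eq_right
      rw [sub_nonpos, div_le_iff₀ ha]; linarith
    rw [this]
    unfold gInt
    rw [Real.zero_rpow (by linarith)]
    simp

lemma prefactor (ℓ : ℝ) {L0 r : ℝ} (hL : 0 < L0) (hr : 0 < r) :
    r ^ (2 * ℓ) * ((Real.sqrt L0 / r) ^ 2 * ((Real.sqrt L0 / r) ^ 2) ^ (ℓ + 1 / 2) *
      (Real.sqrt L0 / r)) = L0 ^ (ℓ + 2) / r ^ 4 := by
  have ha : 0 < Real.sqrt L0 / r := div_pos (Real.sqrt_pos.2 hL) hr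
  have e : (Real.sqrt L0 / r) ^ 2 = L0 / r ^ 2 := by rw [div_pow, Real.sq_sqrt hL.le]
  have e2 : (Real.sqrt L0 / r) ^ 2 * ((Real.sqrt L0 / r) ^ 2) ^ (ℓ + 1 / 2) *
      (Real.sqrt L0 / r) = ((Real.sqrt L0 / r) ^ 2) ^ (ℓ + 2) := by
    have h1 : (Real.sqrt L0 / r) = ((Real.sqrt L0 / r) ^ 2) ^ (1 / 2 : ℝ) := by
      rw [← Real.sqrt_eq_rpow, Real.sqrt_sq ha.le]
    have h2 : (0 : ℝ) < (Real.sqrt L0 / r) ^ 2 := by positivity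
    have h3 : ((Real.sqrt L0 / r) ^ 2) ^ (ℓ + 2) = ((Real.sqrt L0 / r) ^ 2) ^ (1 : ℝ) *
      ((Real.sqrt L0 / r) ^ 2) ^ (ℓ + 1 / 2) * ((Real.sqrt L0 / r) ^ 2) ^ (1 / 2 : ℝ) := by
      rw [← Real.rpow_add h2, ← Real.rpow_add h2]; congr 1; ring
    rw [h3, ← h1, Real.rpow_one]
  rw [e2, e, Real.div_rpow hL.le (by positivity), ← Real.rpow_natCast r 2, ← Real.rpow_mul hr.le,
    ← Real.rpow_natCast r 4, mul_div_assoc', div_eq_div_iff (by positivity) (by positivity)]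
  have : r ^ (((2 : ℕ) : ℝ) * (ℓ + 2)) = r ^ (2 * ℓ) * r ^ ((4 : ℕ) : ℝ) := by
    rw [← Real.rpow_add hr]; congr 1; push_cast; ring
  rw [this]; ring

lemma rho_eq_s1 {k ℓ L0 : ℝ} (hk : 0 ≤ k) (hl : -(1 / 2) ≤ ℓ) (hL : 0 < L0) (y : ℝ → ℝ)
    {r : ℝ} (hr : 0 < r) :
    rho k ℓ L0 y r = cConst ℓ * L0 ^ (ℓ + 2) / r ^ 4 * gInt k (ℓ + 1 / 2) 2 (zFn L0 y r) := by
  unfold rho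
  rw [matter_int hk (by linarith) 2 hL y hr]
  have := prefactor ℓ hL hr
  calc _ = cConst ℓ * (r ^ (2 * ℓ) * ((Real.sqrt L0 / r) ^ 2 *
        ((Real.sqrt L0 / r) ^ 2) ^ (ℓ + 1 / 2) * (Real.sqrt L0 / r))) *
        gInt k (ℓ + 1 / 2) 2 (zFn L0 y r) := by ring
    _ = _ := by rw [this]; ring

lemma pres_eq {k ℓ L0 : ℝ} (hk : 0 ≤ k) (hl : -(1 / 2) ≤ ℓ) (hL : 0 < L0) (y : ℝ → ℝ)
    {r : ℝ} (hr : 0 < r) :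
    pres k ℓ L0 y r = cConst ℓ / (2 * ℓ + 3) * L0 ^ (ℓ + 2) / r ^ 4 *
      gInt k (ℓ + 3 / 2) 0 (zFn L0 y r) := by
  have h1 := matter_int hk (show 0 ≤ ℓ + 3 / 2 by linarith) 0 hL y hr
  simp only [pow_zero, mul_one, one_mul] at h1
  unfold pres
  rw [h1]
  have := prefactor ℓ hL hr
  have ha : 0 < Real.sqrt L0 / r := div_pos (Real.sqrt_pos.2 hL) hr
  rw [show ℓ + 3 / 2 = 1 + (ℓ + 1 / 2) by ring, Real.rpow_add (by positivity), Real.rpow_one]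
  calc _ = cConst ℓ / (2 * ℓ + 3) * (r ^ (2 * ℓ) * ((Real.sqrt L0 / r) ^ 2 *
        ((Real.sqrt L0 / r) ^ 2) ^ (ℓ + 1 / 2) * (Real.sqrt L0 / r))) *
        gInt k (1 + (ℓ + 1 / 2)) 0 (zFn L0 y r) := by ring
    _ = _ := by rw [this]; ring

lemma zFn_nonneg (L0 : ℝ) (y : ℝ → ℝ) (r : ℝ) : 0 ≤ zFn L0 y r := le_max_right _ _

lemma zFn_zero {L0 : ℝ} {y : ℝ → ℝ} {r : ℝ} (h : charFn L0 y r ≤ 0) : zFn L0 y r = 0 := by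
  unfold zFn
  apply max_eq_right
  rw [sub_nonpos]
  exact Real.exp_le_one_iff.2 h

lemma le_zFn (L0 : ℝ) (y : ℝ → ℝ) (r : ℝ) : max (charFn L0 y r) 0 ≤ zFn L0 y r :=
  max_le_max (by linarith [Real.add_one_le_exp (charFn L0 y r)]) le_rfl

lemma zFn_le {L0 : ℝ} {y : ℝ → ℝ} {r : ℝ} (h : charFn L0 y r ≤ 1) :
    zFn L0 y r ≤ 2 * max (charFn L0 y r) 0 := by
  rcases le_total (charFn L0 y r) 0 with h0 | h0
  · rw [zFn_zero h0]; positivity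
  · rw [max_eq_left h0]
    have := Real.abs_exp_sub_one_le (x := charFn L0 y r) (by rw [abs_of_nonneg h0]; exact h)
    rw [abs_of_nonneg h0] at this
    exact max_le ((le_abs_self _).trans this) (by linarith)

lemma gInt_zero {k α : ℝ} (hk : 0 ≤ k) (hα : 0 ≤ α) (n : ℕ) : gInt k α n 0 = 0 := by
  unfold gInt
  rw [Real.zero_rpow (by linarith)]
  simp

lemma rho_nonneg {k ℓ L0 : ℝ} (hk : 0 ≤ k) (hl : -(1 / 2) ≤ ℓ) (hL : 0 < L0) (y : ℝ → ℝ)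
    {r : ℝ} (hr : 0 < r) : 0 ≤ rho k ℓ L0 y r := by
  rw [rho_eq_s1 hk hl hL y hr]
  have := cConst_pos_s1 hl
  have := gInt_nonneg hk (show 0 ≤ ℓ + 1 / 2 by linarith) 2 (zFn_nonneg L0 y r)
  positivity

lemma pres_nonneg {k ℓ L0 : ℝ} (hk : 0 ≤ k) (hl : -(1 / 2) ≤ ℓ) (hL : 0 < L0) (y : ℝ → ℝ)
    {r : ℝ} (hr : 0 < r) : 0 ≤ pres k ℓ L0 y r := by
  rw [pres_eq hk hl hL y hr]
  have := cConst_pos_s1 hl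
  have := gInt_nonneg hk (show 0 ≤ ℓ + 3 / 2 by linarith) 0 (zFn_nonneg L0 y r)
  have : 0 < 2 * ℓ + 3 := by linarith
  positivity

lemma rho_zero {k ℓ L0 : ℝ} (hk : 0 ≤ k) (hl : -(1 / 2) ≤ ℓ) (hL : 0 < L0) {y : ℝ → ℝ}
    {r : ℝ} (hr : 0 < r) (h : charFn L0 y r ≤ 0) : rho k ℓ L0 y r = 0 := by
  rw [rho_eq_s1 hk hl hL y hr, zFn_zero h, gInt_zero hk (by linarith), mul_zero]

lemma pres_zero {k ℓ L0 : ℝ} (hk : 0 ≤ k) (hl : -(1 / 2) ≤ ℓ) (hL : 0 < L0) {y : ℝ → ℝ}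
    {r : ℝ} (hr : 0 < r) (h : charFn L0 y r ≤ 0) : pres k ℓ L0 y r = 0 := by
  rw [pres_eq hk hl hL y hr, zFn_zero h, gInt_zero hk (by linarith), mul_zero]

lemma rho_contOn {k ℓ L0 : ℝ} (hk : 0 ≤ k) (hl : -(1 / 2) ≤ ℓ) (hL : 0 < L0) {y : ℝ → ℝ}
    (hy : ContinuousOn y (Ioi 0)) : ContinuousOn (rho k ℓ L0 y) (Ioi 0) := by
  have hz : ContinuousOn (zFn L0 y) (Ioi 0) := by
    have h1 : ContinuousOn (charFn L0 y) (Ioi 0) := by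
      have : ContinuousOn (fun r => y r + Real.log r - Real.log L0 / 2) (Ioi 0) :=
        (hy.add (Real.continuousOn_log.mono (fun x hx => (ne_of_gt hx)))).sub continuousOn_const
      exact this.congr (fun r hr => charFn_eq hL y hr)
    unfold zFn
    exact ContinuousOn.sup (ContinuousOn.sub (Real.continuous_exp.comp_continuousOn h1)
      continuousOn_const) continuousOn_const
  have h2 := (gInt_contOn hk (show 0 ≤ ℓ + 1 / 2 by linarith) 2).comp hz
    (fun r _ => zFn_nonneg L0 y r)
  have h3 : ContinuousOn (fun r : ℝ => cConst ℓ * L0 ^ (ℓ + 2) / r ^ 4) (Ioi 0) :=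
    continuousOn_const.div (by fun_prop) (fun r hr => by
      have : (0 : ℝ) < r := hr
      positivity)
  exact (h3.mul h2).congr (fun r hr => rho_eq_s1 hk hl hL y hr)

lemma mass_nonneg {k ℓ L0 : ℝ} (hk : 0 ≤ k) (hl : -(1 / 2) ≤ ℓ) (hL : 0 < L0) (y : ℝ → ℝ)
    (r : ℝ) : 0 ≤ hawkingMass k ℓ L0 y r := by
  unfold hawkingMass
  have : 0 ≤ ∫ s in Set.Ioc (0 : ℝ) r, s ^ 2 * rho k ℓ L0 y s :=
    setIntegral_nonneg measurableSet_Ioc (fun s hs =>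
      mul_nonneg (sq_nonneg s) (rho_nonneg hk hl hL y hs.1))
  have := Real.pi_pos
  positivity

lemma y_le {k ℓ L0 : ℝ} (hk : 0 ≤ k) (hl : -(1 / 2) ≤ ℓ) (hL : 0 < L0) {y : ℝ → ℝ}
    (hy : QuasiShell k ℓ L0 y) {r : ℝ} (hr : 0 ≤ r) : y r ≤ y 0 := by
  refine antitoneOn_of_deriv_nonpos (convex_Ici 0) hy.1.continuousOn ?_ ?_
    (mem_Ici.2 le_rfl) (mem_Ici.2 hr) hr
  · intro x hx
    rw [interior_Ici] at hx
    exact (hy.2 x hx).2.differentiableAt.differentiableWithinAt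
  · intro x hx
    rw [interior_Ici] at hx
    have hx' : 0 < x := hx
    obtain ⟨h1, h2⟩ := hy.2 x hx
    rw [h2.deriv]
    have h3 := mass_nonneg hk hl hL y x
    have h4 := pres_nonneg hk hl hL y hx'
    have h5 : 0 ≤ (1 - 2 * hawkingMass k ℓ L0 y x / x)⁻¹ := inv_nonneg.2 (by linarith)
    have := Real.pi_pos
    have : 0 ≤ (1 - 2 * hawkingMass k ℓ L0 y x / x)⁻¹ *
      (4 * π * x * pres k ℓ L0 y x + hawkingMass k ℓ L0 y x / x ^ 2) := by positivity
    linarith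

lemma log_inner {L0 : ℝ} (hL : 0 < L0) (y : ℝ → ℝ) :
    Real.log (innerRadius L0 y) = Real.log L0 / 2 - y 0 := by
  unfold innerRadius
  rw [Real.log_mul (Real.sqrt_pos.2 hL).ne' (Real.exp_pos _).ne', Real.log_exp,
    Real.log_sqrt hL.le]
  ring

lemma char_inner_nonpos {k ℓ L0 : ℝ} (hk : 0 ≤ k) (hl : -(1 / 2) ≤ ℓ) (hL : 0 < L0) {y : ℝ → ℝ}
    (hy : QuasiShell k ℓ L0 y) {r : ℝ} (hr : 0 < r) (hrR : r ≤ innerRadius L0 y) :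
    charFn L0 y r ≤ 0 := by
  rw [charFn_eq hL y hr]
  have h1 := y_le hk hl hL hy hr.le
  have h2 := Real.log_le_log hr hrR
  rw [log_inner hL] at h2
  linarith

lemma mass_inner {k ℓ L0 : ℝ} (hk : 0 ≤ k) (hl : -(1 / 2) ≤ ℓ) (hL : 0 < L0) {y : ℝ → ℝ}
    (hy : QuasiShell k ℓ L0 y) {r : ℝ} (hrR : r ≤ innerRadius L0 y) :
    hawkingMass k ℓ L0 y r = 0 := by
  unfold hawkingMass
  rw [setIntegral_congr_fun (g := fun _ => (0 : ℝ)) measurableSet_Ioc (fun s hs => by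
    simp only
    rw [rho_zero hk hl hL hs.1 (char_inner_nonpos hk hl hL hy hs.1 (hs.2.trans hrR)), mul_zero])]
  simp

lemma char_inner {k ℓ L0 : ℝ} (hk : 0 ≤ k) (hl : -(1 / 2) ≤ ℓ) (hL : 0 < L0) {y : ℝ → ℝ}
    (hy : QuasiShell k ℓ L0 y) (hR : 0 < innerRadius L0 y) :
    charFn L0 y (innerRadius L0 y) = 0 := by
  have hc : y 0 ≤ y (innerRadius L0 y) := by
    refine monotoneOn_of_deriv_nonneg (convex_Icc 0 (innerRadius L0 y))
      (hy.1.continuousOn.mono Icc_subset_Ici_self) ?_ ?_ (left_mem_Icc.2 hR.le)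
      (right_mem_Icc.2 hR.le) hR.le
    · intro x hx
      rw [interior_Icc] at hx
      exact (hy.2 x hx.1).2.differentiableAt.differentiableWithinAt
    · intro x hx
      rw [interior_Icc] at hx
      rw [(hy.2 x hx.1).2.deriv, mass_inner hk hl hL hy hx.2.le,
        pres_zero hk hl hL hx.1 (char_inner_nonpos hk hl hL hy hx.1 hx.2.le)]
      simp
  have := y_le hk hl hL hy hR.le
  rw [charFn_eq hL y hR, log_inner hL]
  linarith

lemma mass_deriv {k ℓ L0 : ℝ} (hk : 0 ≤ k) (hl : -(1 / 2) ≤ ℓ) (hL : 0 < L0) {y : ℝ → ℝ}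
    (hy : QuasiShell k ℓ L0 y) (hR : 0 < innerRadius L0 y) {r : ℝ} (hr : 0 < r) :
    HasDerivAt (hawkingMass k ℓ L0 y) (4 * π * (r ^ 2 * rho k ℓ L0 y r)) r := by
  have hyc : ContinuousOn y (Ioi 0) := fun x hx => (hy.2 x hx).2.continuousAt.continuousWithinAt
  have hf : ContinuousOn (fun s => s ^ 2 * rho k ℓ L0 y s) (Ioi 0) :=
    (by fun_prop : ContinuousOn (fun s : ℝ => s ^ 2) (Ioi 0)).mul (rho_contOn hk hl hL hyc)
  have hint : IntervalIntegrable (fun s => s ^ 2 * rho k ℓ L0 y s) volume 0 r := by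
    refine IntervalIntegrable.trans (b := innerRadius L0 y) ?_ ?_
    · refine (intervalIntegrable_const (c := (0 : ℝ))).congr (fun s hs => ?_)
      rw [uIoc_of_le hR.le] at hs
      rw [rho_zero hk hl hL hs.1 (char_inner_nonpos hk hl hL hy hs.1 hs.2), mul_zero]
    · refine ContinuousOn.intervalIntegrable (hf.mono (fun s hs => ?_))
      exact lt_of_lt_of_le (lt_min hR hr) hs.1
  have hmeas : StronglyMeasurableAtFilter (fun s => s ^ 2 * rho k ℓ L0 y s) (nhds r) volume :=
    hf.stronglyMeasurableAtFilter isOpen_Ioi r hr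
  have hd := (intervalIntegral.integral_hasDerivAt_right hint hmeas
    (hf.continuousAt (Ioi_mem_nhds hr))).const_mul (4 * π)
  refine hd.congr_of_eventuallyEq ?_
  filter_upwards [Ioi_mem_nhds hr] with u hu
  unfold hawkingMass
  rw [intervalIntegral.integral_of_le (le_of_lt hu)]

lemma char_deriv {L0 : ℝ} (hL : 0 < L0) {y : ℝ → ℝ} {d r : ℝ} (hr : 0 < r)
    (h : HasDerivAt y d r) : HasDerivAt (charFn L0 y) (d + r⁻¹) r := by
  have h1 := (h.add (Real.hasDerivAt_log hr.ne')).sub_const (Real.log L0 / 2)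
  refine h1.congr_of_eventuallyEq ?_
  filter_upwards [Ioi_mem_nhds hr] with u hu
  exact charFn_eq hL y hu

lemma matter_bounds {k ℓ L0 : ℝ} (hk : 0 ≤ k) (hl : -(1 / 2) ≤ ℓ) (hL : 0 < L0) (y : ℝ → ℝ)
    {R δ s g q : ℝ} (hq : q = k + ℓ + 3 / 2) (hR : 0 < R) (hδ : 0 < δ) (hδq : δ ^ (q + 1) = R ^ 2)
    (hs1 : 1 ≤ s) (hs2 : s ≤ 2)
    (hg : charFn L0 y (R * s) = δ * g) (hg1 : δ * g ≤ 1) :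
    (4 * π * (cConst ℓ * L0 ^ (ℓ + 2)) * (((3 : ℝ) ^ k)⁻¹ * jBase k (ℓ + 1 / 2)) / 4) * max g 0 ^ q
      ≤ δ * (4 * π * ((R * s) ^ 2 * rho k ℓ L0 y (R * s))) ∧
    δ * (4 * π * ((R * s) ^ 2 * rho k ℓ L0 y (R * s))) ≤
      (4 * π * (cConst ℓ * L0 ^ (ℓ + 2)) * (jBase k (ℓ + 1 / 2) * (3 ^ 2 * 4 ^ (ℓ + 1 / 2)))
        * 2 ^ q) * max g 0 ^ q ∧
    R * (4 * π * (R * s) * pres k ℓ L0 y (R * s)) ≤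
      (4 * π * (cConst ℓ / (2 * ℓ + 3) * L0 ^ (ℓ + 2)) *
        (jBase k (ℓ + 3 / 2) * (3 ^ 0 * 4 ^ (ℓ + 3 / 2))) * 2 ^ (q + 1)) * max g 0 ^ (q + 1) := by
  have hs0 : 0 < s := by linarith
  have hr : 0 < R * s := by positivity
  have hα1 : 0 ≤ ℓ + 1 / 2 := by linarith
  have hα2 : 0 ≤ ℓ + 3 / 2 := by linarith
  have hq1 : 1 ≤ q := by linarith
  have hc := cConst_pos_s1 hl
  have hπ := Real.pi_pos
  have h23 : 0 < 2 * ℓ + 3 := by linarith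
  rw [rho_eq_s1 hk hl hL y hr, pres_eq hk hl hL y hr]
  set z := zFn L0 y (R * s) with hz
  have hz0 : 0 ≤ z := zFn_nonneg _ _ _
  set m := max g 0 with hm
  have hm0 : 0 ≤ m := le_max_right _ _
  have hmδ : max (δ * g) 0 = δ * m := by
    rw [hm, mul_max_of_nonneg _ _ hδ.le, mul_zero]
  have hzl : δ * m ≤ z := by have := le_zFn L0 y (R * s); rwa [hg, hmδ] at this
  have hzu : z ≤ 2 * (δ * m) := by
    have := zFn_le (L0 := L0) (y := y) (r := R * s) (by rw [hg]; exact hg1)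
    rwa [hg, hmδ] at this
  have hz2 : z ≤ 2 := by
    have : δ * m ≤ 1 := by rw [← hmδ]; exact max_le hg1 zero_le_one
    linarith
  have e1 : k + (ℓ + 1 / 2) + 1 = q := by rw [hq]; ring
  have e2 : k + (ℓ + 3 / 2) + 1 = q + 1 := by rw [hq]; ring
  have g1 := gInt_ge hk hα1 2 hz0 hz2
  have g2 := gInt_le hk hα1 2 hz0 hz2
  have g3 := gInt_le hk hα2 0 hz0 hz2
  rw [e1] at g1 g2
  rw [e2] at g3
  have hJ1 := jBase_pos hk hα1
  have hJ2 := jBase_pos hk hα2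
  have p1 : δ ^ q * m ^ q ≤ z ^ q := by
    rw [← Real.mul_rpow hδ.le hm0]
    exact Real.rpow_le_rpow (by positivity) hzl (by linarith)
  have p2 : z ^ q ≤ 2 ^ q * (δ ^ q * m ^ q) := by
    rw [← Real.mul_rpow hδ.le hm0, ← Real.mul_rpow (by norm_num) (by positivity)]
    exact Real.rpow_le_rpow hz0 hzu (by linarith)
  have p3 : z ^ (q + 1) ≤ 2 ^ (q + 1) * (R ^ 2 * m ^ (q + 1)) := by
    rw [← hδq, ← Real.mul_rpow hδ.le hm0, ← Real.mul_rpow (by norm_num) (by positivity)]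
    exact Real.rpow_le_rpow hz0 hzu (by linarith)
  have hδ' : δ * δ ^ q = R ^ 2 := by
    rw [← hδq, Real.rpow_add hδ, Real.rpow_one]; ring
  set C := cConst ℓ * L0 ^ (ℓ + 2) with hC
  have hCp : 0 < C := by positivity
  have hmass : ∀ X : ℝ, δ * (4 * π * ((R * s) ^ 2 * (C / (R * s) ^ 4 * X))) =
      4 * π * C * δ / (R ^ 2 * s ^ 2) * X := fun X => by
    field_simp
  have hss : s ^ 2 ≤ 4 := by nlinarith
  have hss1 : 1 ≤ s ^ 2 := by nlinarith
  have hss3 : 1 ≤ s ^ 3 := one_le_pow₀ hs1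
  refine ⟨?_, ?_, ?_⟩
  · rw [hmass]
    calc (4 * π * C * (((3 : ℝ) ^ k)⁻¹ * jBase k (ℓ + 1 / 2)) / 4) * m ^ q
        ≤ (4 * π * C * (((3 : ℝ) ^ k)⁻¹ * jBase k (ℓ + 1 / 2)) / s ^ 2) * m ^ q := by
          gcongr
      _ = 4 * π * C * δ / (R ^ 2 * s ^ 2) *
          ((δ ^ q * m ^ q) * (((3 : ℝ) ^ k)⁻¹ * jBase k (ℓ + 1 / 2))) := by
          rw [← hδ']; field_simp
      _ ≤ 4 * π * C * δ / (R ^ 2 * s ^ 2) *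
          (z ^ q * (((3 : ℝ) ^ k)⁻¹ * jBase k (ℓ + 1 / 2))) := by gcongr
      _ ≤ _ := by gcongr
  · rw [hmass]
    calc 4 * π * C * δ / (R ^ 2 * s ^ 2) * gInt k (ℓ + 1 / 2) 2 z
        ≤ 4 * π * C * δ / (R ^ 2 * s ^ 2) *
          (z ^ q * (jBase k (ℓ + 1 / 2) * (3 ^ 2 * 4 ^ (ℓ + 1 / 2)))) := by gcongr
      _ ≤ 4 * π * C * δ / (R ^ 2 * s ^ 2) *
          ((2 ^ q * (δ ^ q * m ^ q)) * (jBase k (ℓ + 1 / 2) * (3 ^ 2 * 4 ^ (ℓ + 1 / 2)))) := by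
          gcongr
      _ = (4 * π * C * (jBase k (ℓ + 1 / 2) * (3 ^ 2 * 4 ^ (ℓ + 1 / 2)))
        * 2 ^ q) * m ^ q / s ^ 2 := by rw [← hδ']; field_simp
      _ ≤ _ := div_le_self (by positivity) hss1
  · set C' := cConst ℓ / (2 * ℓ + 3) * L0 ^ (ℓ + 2) with hC'
    have hCp' : 0 < C' := by positivity
    calc R * (4 * π * (R * s) * (C' / (R * s) ^ 4 * gInt k (ℓ + 3 / 2) 0 z))
        = 4 * π * C' / (R ^ 2 * s ^ 3) * gInt k (ℓ + 3 / 2) 0 z := by field_simp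
      _ ≤ 4 * π * C' / (R ^ 2 * s ^ 3) *
          (z ^ (q + 1) * (jBase k (ℓ + 3 / 2) * (3 ^ 0 * 4 ^ (ℓ + 3 / 2)))) := by gcongr
      _ ≤ 4 * π * C' / (R ^ 2 * s ^ 3) *
          ((2 ^ (q + 1) * (R ^ 2 * m ^ (q + 1))) *
            (jBase k (ℓ + 3 / 2) * (3 ^ 0 * 4 ^ (ℓ + 3 / 2)))) := by gcongr
      _ = (4 * π * C' * (jBase k (ℓ + 3 / 2) * (3 ^ 0 * 4 ^ (ℓ + 3 / 2)))
        * 2 ^ (q + 1)) * m ^ (q + 1) / s ^ 3 := by field_simp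
      _ ≤ _ := div_le_self (by positivity) hss3

/-- Matter is supported beyond `R₀(1+B₀R₀^{2/(q+1)})` and vanishes
at some radius `r₁ ≤ R₀(1+B₂R₀^{1/(q+1)})/(1-B₁R₀^{2/(q+1)})`, for quasi shell
solutions with small inner radius satisfying the Buchdahl bound. -/
theorem shell_support (k ℓ L0 : ℝ) (hk : 0 ≤ k) (hl : -(1 / 2) ≤ ℓ) (hL : 0 < L0) :
    ∃ B0 B1 B2 ε : ℝ, 0 < B0 ∧ 0 < B1 ∧ 0 < B2 ∧ 0 < ε ∧
      ∀ y : ℝ → ℝ, QuasiShell k ℓ L0 y →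
        (∀ r > (0 : ℝ), 2 * hawkingMass k ℓ L0 y r / r ≤ 8 / 9) →
        0 < innerRadius L0 y → innerRadius L0 y ≤ ε →
        ((∀ r, innerRadius L0 y < r →
            r ≤ innerRadius L0 y *
              (1 + B0 * innerRadius L0 y ^ (2 / (k + ℓ + 3 / 2 + 1))) →
            0 < rho k ℓ L0 y r) ∧
          ∃ r1 : ℝ,
            innerRadius L0 y *
              (1 + B0 * innerRadius L0 y ^ (2 / (k + ℓ + 3 / 2 + 1))) < r1 ∧
            r1 ≤ innerRadius L0 y *
                (1 + B2 * innerRadius L0 y ^ (1 / (k + ℓ + 3 / 2 + 1))) /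
                (1 - B1 * innerRadius L0 y ^ (2 / (k + ℓ + 3 / 2 + 1))) ∧
            charFn L0 y r1 ≤ 0 ∧ rho k ℓ L0 y r1 = 0 ∧ pres k ℓ L0 y r1 = 0) := by
  set q : ℝ := k + ℓ + 3 / 2 with hq
  have hq1 : 1 ≤ q := by linarith
  have hc := cConst_pos_s1 hl
  have hπ := Real.pi_pos
  have h23 : 0 < 2 * ℓ + 3 := by linarith
  have hJ1 := jBase_pos hk (show 0 ≤ ℓ + 1 / 2 by linarith)
  have hJ2 := jBase_pos hk (show 0 ≤ ℓ + 3 / 2 by linarith)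
  obtain ⟨t0, T, δ0, ht0, hT, hδ0, hδT, hode⟩ := ode_lemma q
    (4 * π * (cConst ℓ * L0 ^ (ℓ + 2)) * (((3 : ℝ) ^ k)⁻¹ * jBase k (ℓ + 1 / 2)) / 4)
    (4 * π * (cConst ℓ * L0 ^ (ℓ + 2)) * (jBase k (ℓ + 1 / 2) * (3 ^ 2 * 4 ^ (ℓ + 1 / 2)))
        * 2 ^ q)
    (4 * π * (cConst ℓ / (2 * ℓ + 3) * L0 ^ (ℓ + 2)) *
        (jBase k (ℓ + 3 / 2) * (3 ^ 0 * 4 ^ (ℓ + 3 / 2))) * 2 ^ (q + 1))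
    hq1 (by positivity) (by positivity) (by positivity)
  have hTp : 0 < T := ht0.trans hT
  set δ1 : ℝ := min δ0 (1 / 2) with hδ1
  have hδ1p : 0 < δ1 := by positivity
  refine ⟨t0, 1, T, δ1 ^ ((q + 1) / 2), ht0, one_pos, hTp, by positivity, ?_⟩
  intro y hy hbuch hR hRε
  set R := innerRadius L0 y with hRdef
  set δ : ℝ := R ^ (2 / (q + 1)) with hδ
  have hδp : 0 < δ := by positivity
  have hδle : δ ≤ δ1 := by
    have h1 : δ ≤ (δ1 ^ ((q + 1) / 2)) ^ (2 / (q + 1)) :=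
      Real.rpow_le_rpow hR.le hRε (by positivity)
    rw [← Real.rpow_mul hδ1p.le, show (q + 1) / 2 * (2 / (q + 1)) = 1 by field_simp,
      Real.rpow_one] at h1
    exact h1
  have hδ0' : δ ≤ δ0 := hδle.trans (min_le_left _ _)
  have hδh : δ ≤ 1 / 2 := hδle.trans (min_le_right _ _)
  have hδq : δ ^ (q + 1) = R ^ 2 := by
    rw [hδ, ← Real.rpow_mul hR.le, show 2 / (q + 1) * (q + 1) = ((2 : ℕ) : ℝ) by
      push_cast; field_simp, Real.rpow_natCast]
  have hδσ : δ ≤ R ^ (1 / (q + 1)) := by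
    have hR1 : R ≤ 1 := by
      refine hRε.trans (Real.rpow_le_one hδ1p.le ?_ (by positivity))
      exact (min_le_right _ _).trans (by norm_num)
    exact Real.rpow_le_rpow_of_exponent_ge hR hR1 (by gcongr; norm_num)
  have hs : ∀ t ∈ Icc 0 T, 1 ≤ 1 + t * δ ∧ 1 + t * δ ≤ 2 := fun t ht => by
    have h1 := mul_nonneg ht.1 hδp.le
    have h2 : δ * t ≤ δ0 * T := mul_le_mul hδ0' ht.2 ht.1 hδ0.le
    constructor <;> linarith
  have hlin : ∀ t, HasDerivAt (fun t => R * (1 + t * δ)) (R * δ) t := fun t => by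
    have := (((hasDerivAt_id t).mul_const δ).const_add 1).const_mul R
    simpa using this
  have hbounds : ∀ t ∈ Icc 0 T, charFn L0 y (R * (1 + t * δ)) / δ ≤ t → _ := fun t ht hGt =>
    matter_bounds hk hl hL y (R := R) (δ := δ) (s := 1 + t * δ)
      (g := charFn L0 y (R * (1 + t * δ)) / δ) (q := q) hq hR hδp hδq (hs t ht).1 (hs t ht).2
      (by field_simp) (by
        have h1 : δ * (charFn L0 y (R * (1 + t * δ)) / δ) ≤ δ * t :=
          mul_le_mul_of_nonneg_left hGt hδp.le
        have h2 : δ * t ≤ δ0 * T := mul_le_mul hδ0' ht.2 ht.1 hδ0.le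
        linarith)
  have hrp : ∀ t ∈ Icc 0 T, 0 < R * (1 + t * δ) := fun t ht =>
    mul_pos hR (by linarith [(hs t ht).1])
  obtain ⟨hpos, t1, ht01, ht1T, hG1⟩ := hode δ hδp hδ0'
    (fun t => charFn L0 y (R * (1 + t * δ)) / δ)
    (fun t => hawkingMass k ℓ L0 y (R * (1 + t * δ)) / R)
    (fun t => δ * (4 * π * ((R * (1 + t * δ)) ^ 2 * rho k ℓ L0 y (R * (1 + t * δ)))))
    (fun t => R * (4 * π * (R * (1 + t * δ)) * pres k ℓ L0 y (R * (1 + t * δ))))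
    (by simp only [zero_mul, add_zero, mul_one]; rw [char_inner hk hl hL hy hR, zero_div])
    (by simp only [zero_mul, add_zero, mul_one]; rw [mass_inner hk hl hL hy le_rfl, zero_div])
    (fun t ht => by
      have hr := hrp t ht
      have hsp : 0 < 1 + t * δ := by linarith [(hs t ht).1]
      have h1 := ((char_deriv hL hr (hy.2 _ hr).2).comp t (hlin t)).div_const δ
      convert! h1 using 1
      have e : 2 * (hawkingMass k ℓ L0 y (R * (1 + t * δ)) / R) / (1 + t * δ) =
        2 * hawkingMass k ℓ L0 y (R * (1 + t * δ)) / (R * (1 + t * δ)) := by field_simp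
      simp only [e]
      generalize (1 - 2 * hawkingMass k ℓ L0 y (R * (1 + t * δ)) / (R * (1 + t * δ)))⁻¹ = D
      field_simp
      ring)
    (fun t ht => by
      have hr := hrp t ht
      have h1 := ((mass_deriv hk hl hL hy hR hr).comp t (hlin t)).div_const R
      convert! h1 using 1
      field_simp)
    (fun t ht => by
      have hr := hrp t ht
      have := pres_nonneg hk hl hL y hr
      positivity)
    (fun t ht => by
      have hr := hrp t ht
      have := rho_nonneg hk hl hL y hr
      positivity)
    (fun t ht => div_nonneg (mass_nonneg hk hl hL y _) hR.le)
    (fun t ht => by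
      have hr := hrp t ht
      have := hbuch _ hr
      rw [div_le_iff₀ hr] at this
      rw [div_le_iff₀ hR]
      linarith)
    hbounds
  refine ⟨fun r hRr hrle => ?_, R * (1 + t1 * δ), ?_, ?_, ?_⟩
  · have hr : 0 < r := hR.trans hRr
    have hrt : r = R * (1 + (r / R - 1) / δ * δ) := by field_simp; ring
    have h1 : 0 < (r / R - 1) / δ := by
      have : 1 < r / R := by rwa [lt_div_iff₀ hR, one_mul]
      exact div_pos (by linarith) hδp
    have h2 : (r / R - 1) / δ ≤ t0 := by
      rw [div_le_iff₀ hδp, sub_le_iff_le_add, div_le_iff₀ hR]; linarith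
    have h3 := hpos _ h1 h2
    rw [← hrt] at h3
    have h4 : 0 < charFn L0 y r := by
      have := mul_pos h3 hδp
      rwa [div_mul_cancel₀ _ hδp.ne'] at this
    have hz : 0 < zFn L0 y r := lt_of_lt_of_le h4 ((le_max_left _ _).trans (le_zFn L0 y r))
    rw [rho_eq_s1 hk hl hL y hr]
    have hj := lt_of_lt_of_le hJ1 (jInt_ge hk (show 0 ≤ ℓ + 1 / 2 by linarith) 2 hz.le)
    unfold gInt
    positivity
  · gcongr
  · have h1 : R * (1 + t1 * δ) ≤ R * (1 + T * R ^ (1 / (q + 1))) := by gcongr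
    refine h1.trans ?_
    rw [le_div_iff₀ (by linarith)]
    have h2 : 0 ≤ R * (1 + T * R ^ (1 / (q + 1))) := by positivity
    nlinarith
  · have hr := hrp t1 ⟨by linarith, ht1T⟩
    have h1 : charFn L0 y (R * (1 + t1 * δ)) ≤ 0 := by
      rw [div_le_iff₀ hδp, zero_mul] at hG1
      exact hG1
    exact ⟨h1, rho_zero hk hl hL hr h1, pres_zero hk hl hL hr h1⟩
end

section
/- For every y₀ ∈ ℝ and every choice of parameters k ≥ 0, ℓ ≥ −1/2, L₀ > 0, there exists a unique C¹ function y : [0,∞) → ℝ with y(0) = y₀ which is a quasi shell solution, i.e. with ϱ, p, m defined from y by the ansatz formulas one has 2m(r)/r < 1 and y′(r) = −(1 − 2m(r)/r)^{−1}[4πr p(r) + m(r)/r²] for all r > 0; moreover ϱ and p vanish on (0, R₀]. -/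
open MeasureTheory Real Set Filter

lemma rpow_sub_le {p x y : ℝ} (hp : 1 ≤ p) (hx : 0 ≤ x) (hxy : x ≤ y) (hy : y ≤ 1) :
    y ^ p - x ^ p ≤ p * (y - x) := by
  rcases eq_or_lt_of_le (hx.trans hxy) with h | h
  · have : x = 0 := by linarith
    subst h; subst this; simp
  have h1 := one_add_mul_self_le_rpow_one_add (s := x / y - 1)
    (by have := div_nonneg hx h.le; linarith) hp
  rw [show 1 + (x / y - 1) = x / y by ring, Real.div_rpow hx h.le, le_div_iff₀ (by positivity)] at h1
  have h2 : y ^ p = y ^ (p - 1) * y := by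
    rw [← Real.rpow_add_one h.ne']; ring_nf
  have h3 : y ^ (p - 1) ≤ 1 := Real.rpow_le_one h.le hy (by linarith)
  have h4 : (1 + p * (x / y - 1)) * y ^ p = y ^ p + p * y ^ (p-1) * (x - y) := by
    rw [h2]; field_simp
  nlinarith [mul_nonneg (by linarith : 0 ≤ p) (by linarith : 0 ≤ y - x)]

/-- generic profile -/
noncomputable def prof (k s : ℝ) (j : ℕ) (a : ℝ) : ℝ :=
  ∫ t in Set.Ioc a 1, (1 - t) ^ k * t ^ j * (t ^ 2 - a ^ 2) ^ s

lemma prof_zero {k s a : ℝ} {j : ℕ} (h : 1 ≤ a) : prof k s j a = 0 := by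
  simp [prof, Set.Ioc_eq_empty (not_lt.2 h)]

lemma prof_cont {k s : ℝ} {j : ℕ} (hk : 0 ≤ k) (hs : 0 ≤ s) (a : ℝ) :
    Continuous (fun t : ℝ => (1 - t) ^ k * t ^ j * (t ^ 2 - a ^ 2) ^ s) := by
  refine ((Continuous.rpow_const (by fun_prop) (fun _ => Or.inr hk)).mul (by fun_prop)).mul
    (Continuous.rpow_const (by fun_prop) (fun _ => Or.inr hs))

lemma prof_nonneg {k s a : ℝ} {j : ℕ} (ha : 0 ≤ a) : 0 ≤ prof k s j a := by
  refine setIntegral_nonneg measurableSet_Ioc fun t ht => ?_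
  have h1 : 0 ≤ 1 - t := by linarith [ht.2]
  have h2 : 0 ≤ t := by linarith [ht.1]
  have h3 : 0 ≤ t ^ 2 - a ^ 2 := by nlinarith [ht.1]
  positivity

lemma rpow_int {s b c : ℝ} (hs : 0 ≤ s) :
    ∫ t in b..1, t * (t ^ 2 - c ^ 2) ^ s =
      (1 - c ^ 2) ^ (s + 1) / (2 * (s + 1)) - (b ^ 2 - c ^ 2) ^ (s + 1) / (2 * (s + 1)) := by
  have := intervalIntegral.integral_eq_sub_of_hasDerivAt (a := b) (b := 1)
    (f := fun t : ℝ => (t ^ 2 - c ^ 2) ^ (s + 1) / (2 * (s + 1)))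
    (f' := fun t => t * (t ^ 2 - c ^ 2) ^ s) ?_ ?_
  · simpa using this
  · intro t _
    have h1 : HasDerivAt (fun t : ℝ => t ^ 2 - c ^ 2) (2 * t) t := by
      simpa using (hasDerivAt_pow 2 t).sub_const (c ^ 2)
    have h2 := (h1.rpow_const (p := s + 1) (Or.inr (by linarith))).div_const (2 * (s + 1))
    refine h2.congr_deriv ?_
    have : s + 1 ≠ 0 := by positivity
    rw [add_sub_cancel_right]; field_simp
  · exact (continuous_id.mul (Continuous.rpow_const (by fun_prop)
      (fun _ => Or.inr hs))).intervalIntegrable _ _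

/-- the key estimate -/
lemma diff_int_le {k s a b : ℝ} {j : ℕ} (hk : 0 ≤ k) (hs : 0 ≤ s) (hjs : 1 ≤ j ∨ 1 ≤ s)
    (ha : 0 ≤ a) (hab : a ≤ b) (hb : b ≤ 1) :
    |∫ t in b..1, ((1 - t) ^ k * t ^ j * (t ^ 2 - a ^ 2) ^ s -
        (1 - t) ^ k * t ^ j * (t ^ 2 - b ^ 2) ^ s)| ≤ (1 + s) * (b ^ 2 - a ^ 2) := by
  have hq : ∀ t ∈ Icc b 1, 0 ≤ (1 - t) ^ k * t ^ j ∧ (1 - t) ^ k * t ^ j ≤ 1 ∧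
      (1 ≤ j → (1 - t) ^ k * t ^ j ≤ t) ∧ 0 ≤ (t ^ 2 - b ^ 2) ∧ t ^ 2 - b ^ 2 ≤ t ^ 2 - a ^ 2 ∧
      t ^ 2 - a ^ 2 ≤ 1 ∧ 0 ≤ (t ^ 2 - a ^ 2) ^ s - (t ^ 2 - b ^ 2) ^ s := by
    intro t ht
    have h0 : 0 ≤ t := by linarith [ht.1]
    have h1 : 0 ≤ 1 - t := by linarith [ht.2]
    have h2 : (1 - t) ^ k ≤ 1 := Real.rpow_le_one h1 (by linarith) hk
    have h20 : 0 ≤ (1 - t) ^ k := by positivity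
    have h3 : t ^ j ≤ 1 := pow_le_one₀ h0 ht.2
    have h30 : 0 ≤ t ^ j := by positivity
    have h4 : 0 ≤ (t ^ 2 - b ^ 2) := by nlinarith [ht.1]
    have h5 : t ^ 2 - b ^ 2 ≤ t ^ 2 - a ^ 2 := by nlinarith
    refine ⟨by positivity, mul_le_one₀ h2 h30 h3, fun hj => ?_, h4, h5, by nlinarith [ht.2], ?_⟩
    · have : t ^ j ≤ t ^ 1 := pow_le_pow_of_le_one h0 ht.2 hj
      rw [pow_one] at this
      nlinarith
    · exact sub_nonneg.2 (Real.rpow_le_rpow h4 h5 hs)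
  have hba : 0 ≤ b ^ 2 - a ^ 2 := by nlinarith
  rw [abs_of_nonneg]
  swap
  · refine intervalIntegral.integral_nonneg hb fun t ht => ?_
    obtain ⟨h1, h2, h3, h4, h5, h6, h7⟩ := hq t ht
    rw [← mul_sub]; positivity
  have hci := ((prof_cont (j := j) hk hs a).sub (prof_cont (j := j) hk hs b)).intervalIntegrable
    (μ := volume) b 1
  rcases hjs with hj | hs1
  · have hc : ∀ c : ℝ, Continuous (fun t : ℝ => t * (t ^ 2 - c ^ 2) ^ s) := fun c =>
      continuous_id.mul (Continuous.rpow_const (by fun_prop) (fun _ => Or.inr hs))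
    have : ∫ t in b..1, ((1 - t) ^ k * t ^ j * (t ^ 2 - a ^ 2) ^ s -
        (1 - t) ^ k * t ^ j * (t ^ 2 - b ^ 2) ^ s) ≤
        ∫ t in b..1, (t * (t ^ 2 - a ^ 2) ^ s - t * (t ^ 2 - b ^ 2) ^ s) := by
      refine intervalIntegral.integral_mono_on hb hci
        (((hc a).sub (hc b)).intervalIntegrable _ _) fun t ht => ?_
      obtain ⟨h1, h2, h3, h4, h5, h6, h7⟩ := hq t ht
      rw [← mul_sub, ← mul_sub]
      exact mul_le_mul_of_nonneg_right (h3 hj) h7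
    refine this.trans ?_
    rw [intervalIntegral.integral_sub ((hc a).intervalIntegrable _ _)
      ((hc b).intervalIntegrable _ _), rpow_int hs, rpow_int hs]
    have h1 := rpow_sub_le (p := s + 1) (x := 1 - b ^ 2) (y := 1 - a ^ 2) (by linarith)
      (by nlinarith) (by linarith) (by nlinarith)
    have h2 : 0 ≤ (b ^ 2 - a ^ 2) ^ (s + 1) := by positivity
    rw [sub_self, Real.zero_rpow (by linarith : s + 1 ≠ 0)]
    rw [← sub_div, ← sub_div, ← sub_div, div_le_iff₀ (by positivity)]
    nlinarith [mul_nonneg hs hba, mul_nonneg hs (mul_nonneg hs hba)]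
  · have : ∫ t in b..1, ((1 - t) ^ k * t ^ j * (t ^ 2 - a ^ 2) ^ s -
        (1 - t) ^ k * t ^ j * (t ^ 2 - b ^ 2) ^ s) ≤
        ∫ t in b..1, s * (b ^ 2 - a ^ 2) := by
      refine intervalIntegral.integral_mono_on hb hci (by simp) fun t ht => ?_
      obtain ⟨h1, h2, h3, h4, h5, h6, h7⟩ := hq t ht
      have := rpow_sub_le hs1 h4 h5 h6
      rw [← mul_sub]
      nlinarith
    refine this.trans ?_
    simp only [intervalIntegral.integral_const, smul_eq_mul]
    have : 0 ≤ s * (b ^ 2 - a ^ 2) := by positivity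
    nlinarith

lemma prof_lip_aux {k s a b : ℝ} {j : ℕ} (hk : 0 ≤ k) (hs : 0 ≤ s) (hjs : 1 ≤ j ∨ 1 ≤ s)
    (ha : 0 ≤ a) (hab : a ≤ b) (hb : b ≤ 1) :
    |prof k s j a - prof k s j b| ≤ (3 + 2 * s) * (b - a) := by
  have h1 : ∀ c : ℝ, c ≤ 1 → prof k s j c =
      ∫ t in c..1, (1 - t) ^ k * t ^ j * (t ^ 2 - c ^ 2) ^ s := fun c hc => by
    rw [intervalIntegral.integral_of_le hc]; rfl
  have hca := fun u v => (prof_cont (j := j) hk hs a).intervalIntegrable (μ := volume) u v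
  have hcb := fun u v => (prof_cont (j := j) hk hs b).intervalIntegrable (μ := volume) u v
  rw [h1 a (hab.trans hb), h1 b hb, ← intervalIntegral.integral_add_adjacent_intervals (hca a b)
    (hca b 1), add_sub_assoc, ← intervalIntegral.integral_sub (hca _ _) (hcb _ _)]
  have h2 := diff_int_le hk hs hjs ha hab hb
  have h3 : |∫ t in a..b, (1 - t) ^ k * t ^ j * (t ^ 2 - a ^ 2) ^ s| ≤ 1 * |b - a| := by
    rw [← Real.norm_eq_abs]
    refine intervalIntegral.norm_integral_le_of_norm_le_const fun t ht => ?_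
    rw [uIoc_of_le hab] at ht
    have h0 : 0 ≤ t := by linarith [ht.1]
    have h1 : 0 ≤ 1 - t := by linarith [ht.2]
    have h2 : (1 - t) ^ k ≤ 1 := Real.rpow_le_one h1 (by linarith) hk
    have h20 : 0 ≤ (1 - t) ^ k := by positivity
    have h3 : t ^ j ≤ 1 := pow_le_one₀ h0 (by linarith)
    have h30 : 0 ≤ t ^ j := by positivity
    have h4 : 0 ≤ (t ^ 2 - a ^ 2) := by nlinarith [ht.1]
    have h5 : (t ^ 2 - a ^ 2) ^ s ≤ 1 := Real.rpow_le_one h4 (by nlinarith) hs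
    rw [Real.norm_of_nonneg (by positivity)]
    exact mul_le_one₀ (mul_le_one₀ h2 h30 h3) (by positivity) h5
  rw [abs_of_nonneg (by linarith : 0 ≤ b - a)] at h3
  refine (abs_add_le _ _).trans ?_
  have : (1 + s) * (b ^ 2 - a ^ 2) ≤ (1 + s) * (2 * (b - a)) := by
    apply mul_le_mul_of_nonneg_left _ (by linarith)
    nlinarith
  linarith

lemma prof_lip {k s a b : ℝ} {j : ℕ} (hk : 0 ≤ k) (hs : 0 ≤ s) (hjs : 1 ≤ j ∨ 1 ≤ s)
    (ha : 0 ≤ a) (hb : 0 ≤ b) :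
    |prof k s j a - prof k s j b| ≤ (3 + 2 * s) * |a - b| := by
  wlog hab : a ≤ b generalizing a b
  · rw [abs_sub_comm, abs_sub_comm a b]; exact this hb ha (by linarith)
  rw [abs_sub_comm a b, abs_of_nonneg (by linarith : 0 ≤ b - a)]
  rcases le_total b 1 with h | h
  · exact prof_lip_aux hk hs hjs ha hab h
  rcases le_total a 1 with h' | h'
  · rw [prof_zero h, ← prof_zero (k := k) (s := s) (j := j) le_rfl]
    refine (prof_lip_aux hk hs hjs ha h' le_rfl).trans ?_
    apply mul_le_mul_of_nonneg_left _ (by linarith)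
    linarith
  · rw [prof_zero h, prof_zero h']; simp only [sub_self, abs_zero]
    exact mul_nonneg (by linarith) (by linarith)

/-- substitution -/
lemma prof_subst {k s d y : ℝ} {j : ℕ} (hd : 0 ≤ d) :
    ∫ ε in Ioc d (exp y), (1 - ε * exp (-y)) ^ k * ε ^ j * (ε ^ 2 - d ^ 2) ^ s =
      exp ((2 * s + j + 1) * y) * prof k s j (d * exp (-y)) := by
  have he : exp y * exp (-y) = 1 := by rw [← exp_add]; simp
  rcases le_or_gt (exp y) d with h | h
  · rw [Ioc_eq_empty (not_lt.2 h), prof_zero]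
    · simp
    · rw [← he]; gcongr
  have h1 : d * exp (-y) ≤ 1 := by rw [← he]; gcongr
  rw [prof, ← intervalIntegral.integral_of_le h.le, ← intervalIntegral.integral_of_le h1]
  have h2 := intervalIntegral.smul_integral_comp_mul_left (a := d * exp (-y)) (b := 1)
    (fun ε => (1 - ε * exp (-y)) ^ k * ε ^ j * (ε ^ 2 - d ^ 2) ^ s) (exp y)
  rw [show exp y * (d * exp (-y)) = d by rw [mul_left_comm, he, mul_one], mul_one] at h2
  rw [← h2, smul_eq_mul, ← intervalIntegral.integral_const_mul,
    ← intervalIntegral.integral_const_mul]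
  refine intervalIntegral.integral_congr fun t ht => ?_
  rw [uIcc_of_le h1] at ht
  have h3 : 0 ≤ d * exp (-y) := by positivity
  have h4 : 0 ≤ t ^ 2 - (d * exp (-y)) ^ 2 := by nlinarith [ht.1]
  have h5 : (exp y * t) ^ 2 - d ^ 2 = exp y ^ 2 * (t ^ 2 - (d * exp (-y)) ^ 2) := by
    have : d = d * exp (-y) * exp y := by rw [mul_assoc, mul_comm (exp (-y)), he, mul_one]
    conv_lhs => rw [this]
    ring
  rw [h5, Real.mul_rpow (by positivity) h4, show exp y * t * exp (-y) = t by
    rw [mul_right_comm, he, one_mul], mul_pow, ← Real.exp_nat_mul, ← Real.exp_nat_mul, ← Real.exp_mul]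
  rw [show (2 * s + j + 1) * y = y + j * y + ((2 : ℕ) : ℝ) * y * s by push_cast; ring, exp_add, exp_add]
  ring
/-- Abstract properties of a matter quantity `G r y`. -/
structure Matter (S : ℝ) (G : ℝ → ℝ → ℝ) : Prop where
  cont : ContinuousOn (fun x : ℝ × ℝ => G x.1 x.2) (Ioi 0 ×ˢ univ)
  nonneg : ∀ r y, 0 < r → 0 ≤ G r y
  zero : ∀ r y, 0 < r → exp y ≤ S / r → G r y = 0
  lip : ∀ a b lo hi : ℝ, 0 < a → ∃ K : ℝ, 0 ≤ K ∧ ∀ r ∈ Icc a b, ∀ y ∈ Icc lo hi, ∀ w ∈ Icc lo hi,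
    |G r y - G r w| ≤ K * |y - w|

/-- Solutions of the first order system on `[a, T]`. -/
structure IsSol (G P : ℝ → ℝ → ℝ) (a y0 T : ℝ) (y m : ℝ → ℝ) : Prop where
  y_init : y a = y0
  m_init : m a = 0
  lt : ∀ r ∈ Icc a T, 2 * m r / r < 1
  dy : ∀ r ∈ Icc a T, HasDerivWithinAt y
    (-(1 - 2 * m r / r)⁻¹ * (4 * π * r * P r (y r) + m r / r ^ 2)) (Icc a T) r
  dm : ∀ r ∈ Icc a T, HasDerivWithinAt m (4 * π * (r ^ 2 * G r (y r))) (Icc a T) r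

/-- clamping -/
noncomputable def clp (lo hi y : ℝ) : ℝ := max lo (min y hi)

lemma clp_mem {lo hi y : ℝ} (h : lo ≤ hi) : clp lo hi y ∈ Icc lo hi :=
  ⟨le_max_left _ _, max_le h (min_le_right _ _)⟩

lemma clp_eq {lo hi y : ℝ} (h : y ∈ Icc lo hi) : clp lo hi y = y := by
  rw [clp, min_eq_left h.2, max_eq_right h.1]

lemma clp_lip (lo hi y y' : ℝ) : |clp lo hi y - clp lo hi y'| ≤ |y - y'| := by
  have h1 := abs_max_sub_max_le_max lo (min y hi) lo (min y' hi)
  have h2 := abs_min_sub_min_le_max y hi y' hi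
  simp only [sub_self, abs_zero] at h1 h2
  rw [max_eq_right (abs_nonneg (min y hi - min y' hi))] at h1
  rw [max_eq_left (abs_nonneg (y - y'))] at h2
  exact h1.trans h2

/-- truncated field -/
noncomputable def fld (G P : ℝ → ℝ → ℝ) (lo hi δ r : ℝ) (x : ℝ × ℝ) : ℝ × ℝ :=
  (-(1 - 2 * clp 0 (r * (1 - δ) / 2) x.2 / r)⁻¹ *
    (4 * π * r * P r (clp lo hi x.1) + clp 0 (r * (1 - δ) / 2) x.2 / r ^ 2),
   4 * π * (r ^ 2 * G r (clp lo hi x.1)))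

lemma Matter.bound {S : ℝ} {G : ℝ → ℝ → ℝ} (hG : Matter S G) {a : ℝ} (T lo hi : ℝ) (ha : 0 < a) :
    ∃ B, 0 ≤ B ∧ ∀ r ∈ Icc a T, ∀ y ∈ Icc lo hi, |G r y| ≤ B := by
  have hc : IsCompact (Icc a T ×ˢ Icc lo hi) := isCompact_Icc.prod isCompact_Icc
  obtain ⟨B, hB⟩ := hc.exists_bound_of_continuousOn
    (hG.cont.mono (prod_mono (fun r hr => lt_of_lt_of_le ha hr.1) (subset_univ _)))
  exact ⟨max B 0, le_max_right _ _, fun r hr y hy =>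
    (hB (r, y) ⟨hr, hy⟩).trans (le_max_left _ _)⟩

lemma fld_est {S : ℝ} {G P : ℝ → ℝ → ℝ} (hG : Matter S G) (hP : Matter S P) {a T lo hi δ : ℝ}
    (ha : 0 < a) (haT : a ≤ T) (hlh : lo ≤ hi) (hδ : 0 < δ) (hδ1 : δ ≤ 1) :
    ∃ K L : NNReal, ∀ r ∈ Icc a T, LipschitzWith K (fld G P lo hi δ r) ∧
      ∀ x, ‖fld G P lo hi δ r x‖ ≤ L := by
  obtain ⟨BG, hBG0, hBG⟩ := hG.bound T lo hi ha
  obtain ⟨BP, hBP0, hBP⟩ := hP.bound T lo hi ha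
  obtain ⟨KG, hKG0, hKG⟩ := hG.lip a T lo hi ha
  obtain ⟨KP, hKP0, hKP⟩ := hP.lip a T lo hi ha
  have hT : 0 < T := ha.trans_le haT
  have hpi := Real.pi_pos
  set A0 : ℝ := 4 * π * T * BP + T / a ^ 2 with hA0
  have hA0n : 0 ≤ A0 := by positivity
  set K1 : ℝ := δ⁻¹ * (4 * π * T * KP + 1 / a ^ 2) + (δ⁻¹ * δ⁻¹ * (2 / a)) * A0 with hK1
  have hK1n : 0 ≤ K1 := by positivity
  set K2 : ℝ := 4 * π * (T ^ 2 * KG) with hK2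
  have hK2n : 0 ≤ K2 := by positivity
  have hM : ∀ r ∈ Icc a T, ∀ m, 0 ≤ clp 0 (r * (1 - δ) / 2) m ∧ clp 0 (r * (1 - δ) / 2) m ≤ T ∧
      δ ≤ 1 - 2 * clp 0 (r * (1 - δ) / 2) m / r := by
    intro r hr m
    have hr0 : 0 < r := ha.trans_le hr.1
    have h := clp_mem (lo := 0) (hi := r * (1 - δ) / 2) (y := m)
      (by have : 0 ≤ r * (1 - δ) := mul_nonneg hr0.le (by linarith)
          linarith)
    refine ⟨h.1, ?_, ?_⟩
    · have := h.2
      nlinarith [hr.2]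
    · have : 2 * clp 0 (r * (1 - δ) / 2) m / r ≤ 1 - δ := by
        rw [div_le_iff₀ hr0]; linarith [h.2]
      linarith
  have hA : ∀ r ∈ Icc a T, ∀ x : ℝ × ℝ,
      |4 * π * r * P r (clp lo hi x.1) + clp 0 (r * (1 - δ) / 2) x.2 / r ^ 2| ≤ A0 := by
    intro r hr x
    have hr0 : 0 < r := ha.trans_le hr.1
    obtain ⟨h1, h2, h3⟩ := hM r hr x.2
    have h4 := hBP r hr _ (clp_mem hlh (y := x.1))
    refine (abs_add_le _ _).trans (add_le_add ?_ ?_)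
    · rw [abs_mul, abs_of_nonneg (by positivity : 0 ≤ 4 * π * r)]
      have := hr.2
      gcongr
    · rw [abs_of_nonneg (by positivity)]
      have := hr.1
      gcongr
  have hW : ∀ r ∈ Icc a T, ∀ m, 0 ≤ (1 - 2 * clp 0 (r * (1 - δ) / 2) m / r)⁻¹ ∧
      (1 - 2 * clp 0 (r * (1 - δ) / 2) m / r)⁻¹ ≤ δ⁻¹ := by
    intro r hr m
    obtain ⟨h1, h2, h3⟩ := hM r hr m
    exact ⟨inv_nonneg.2 (by linarith), inv_anti₀ hδ h3⟩
  refine ⟨(max K1 K2).toNNReal, (max (δ⁻¹ * A0) (4 * π * (T ^ 2 * BG))).toNNReal, ?_⟩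
  intro r hr
  have hr0 : 0 < r := ha.trans_le hr.1
  constructor
  · refine LipschitzWith.of_dist_le_mul fun x x' => ?_
    rw [Real.coe_toNNReal _ (hK1n.trans (le_max_left _ _))]
    set d := dist x x' with hd
    have hd0 : 0 ≤ d := dist_nonneg
    have hd1 : |x.1 - x'.1| ≤ d := by rw [hd, Prod.dist_eq]; exact le_max_left _ _
    have hd2 : |x.2 - x'.2| ≤ d := by rw [hd, Prod.dist_eq]; exact le_max_right _ _
    have e1 := (clp_lip lo hi x.1 x'.1).trans hd1
    have e2 := (clp_lip 0 (r * (1 - δ) / 2) x.2 x'.2).trans hd2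
    have eP := (hKP r hr _ (clp_mem hlh (y := x.1)) _ (clp_mem hlh (y := x'.1))).trans
      (mul_le_mul_of_nonneg_left e1 hKP0)
    have eG := (hKG r hr _ (clp_mem hlh (y := x.1)) _ (clp_mem hlh (y := x'.1))).trans
      (mul_le_mul_of_nonneg_left e1 hKG0)
    have a1 := hA r hr x'
    have w1 := hW r hr x.2
    have w2 := hW r hr x'.2
    have m1 := hM r hr x.2
    have m2 := hM r hr x'.2
    rw [Prod.dist_eq]
    refine max_le ?_ ?_
    · refine le_trans ?_ (mul_le_mul_of_nonneg_right (le_max_left K1 K2) hd0)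
      simp only [fld, Real.dist_eq]
      set M := clp 0 (r * (1 - δ) / 2) x.2
      set M' := clp 0 (r * (1 - δ) / 2) x'.2
      set p := P r (clp lo hi x.1)
      set p' := P r (clp lo hi x'.1)
      set W := 1 - 2 * M / r with hWd
      set W' := 1 - 2 * M' / r with hWd'
      have hW0 : 0 < W := hδ.trans_le m1.2.2
      have hW0' : 0 < W' := hδ.trans_le m2.2.2
      have key : -W⁻¹ * (4 * π * r * p + M / r ^ 2) - -W'⁻¹ * (4 * π * r * p' + M' / r ^ 2) =
          -(W⁻¹ * (4 * π * r * (p - p') + (M - M') / r ^ 2)) +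
          -((W⁻¹ * W'⁻¹ * (2 * (M - M') / r)) * (4 * π * r * p' + M' / r ^ 2)) := by
        have : W⁻¹ - W'⁻¹ = W⁻¹ * W'⁻¹ * (2 * (M - M') / r) := by
          rw [inv_sub_inv hW0.ne' hW0'.ne', hWd, hWd']
          field_simp
          ring
        rw [← this]; ring
      rw [key]
      refine (abs_add_le _ _).trans ?_
      rw [abs_neg, abs_neg, hK1, add_mul]
      refine add_le_add ?_ ?_
      · rw [abs_mul, abs_of_nonneg w1.1, mul_assoc δ⁻¹]
        refine mul_le_mul w1.2 ?_ (abs_nonneg _) (by positivity)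
        refine (abs_add_le _ _).trans ?_
        rw [add_mul]
        refine add_le_add ?_ ?_
        · rw [abs_mul, abs_of_nonneg (by positivity : 0 ≤ 4 * π * r), mul_assoc _ KP]
          refine mul_le_mul ?_ eP (abs_nonneg _) (by positivity)
          have := hr.2
          gcongr
        · rw [abs_div, abs_of_nonneg (by positivity : 0 ≤ r ^ 2), div_mul_eq_mul_div, one_mul]
          have := hr.1
          gcongr
      · rw [abs_mul, mul_right_comm _ A0 d]
        refine mul_le_mul ?_ a1 (abs_nonneg _) (by positivity)
        rw [abs_mul, abs_of_nonneg (mul_nonneg w1.1 w2.1), mul_assoc (δ⁻¹ * δ⁻¹)]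
        refine mul_le_mul (mul_le_mul w1.2 w2.2 w2.1 (by positivity)) ?_ (abs_nonneg _) (by positivity)
        rw [abs_div, abs_of_nonneg hr0.le, abs_mul, abs_of_nonneg (by norm_num : (0 : ℝ) ≤ 2),
          div_mul_eq_mul_div]
        have := hr.1
        gcongr
    · refine le_trans ?_ (mul_le_mul_of_nonneg_right (le_max_right K1 K2) hd0)
      simp only [fld, Real.dist_eq]
      rw [← mul_sub, ← mul_sub, abs_mul, abs_of_nonneg (by positivity : 0 ≤ 4 * π), abs_mul,
        abs_of_nonneg (by positivity : 0 ≤ r ^ 2), hK2, mul_assoc (4 * π), mul_assoc (T ^ 2)]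
      have := hr.2
      gcongr
  · intro x
    rw [Real.coe_toNNReal _ (le_max_of_le_left (by positivity)), Prod.norm_def]
    refine max_le_max ?_ ?_
    · simp only [fld, Real.norm_eq_abs]
      rw [abs_mul, abs_neg, abs_of_nonneg (hW r hr x.2).1]
      exact mul_le_mul (hW r hr x.2).2 (hA r hr x) (abs_nonneg _) (by positivity)
    · simp only [fld, Real.norm_eq_abs]
      have h4 := hBG r hr _ (clp_mem hlh (y := x.1))
      rw [abs_mul, abs_of_nonneg (by positivity : 0 ≤ 4 * π), abs_mul,
        abs_of_nonneg (by positivity : 0 ≤ r ^ 2)]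
      have := hr.2
      gcongr

lemma fld_cont {S : ℝ} {G P : ℝ → ℝ → ℝ} (hG : Matter S G) (hP : Matter S P) {a T lo hi δ : ℝ}
    (ha : 0 < a) (hδ : 0 < δ) (hδ1 : δ ≤ 1) (x : ℝ × ℝ) :
    ContinuousOn (fun r => fld G P lo hi δ r x) (Icc a T) := by
  have h0 : ∀ r ∈ Icc a T, 0 < r := fun r hr => ha.trans_le hr.1
  have h0' : ∀ r ∈ Icc a T, r ≠ 0 := fun r hr => (h0 r hr).ne'
  have hg : ∀ {G : ℝ → ℝ → ℝ} (hG : Matter S G) (y : ℝ), ContinuousOn (fun r => G r y) (Icc a T) := by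
    intro G hG y
    exact hG.cont.comp (f := fun r : ℝ => (r, y)) (by fun_prop) (fun r hr => ⟨h0 r hr, trivial⟩)
  have hg1 := hg hG (clp lo hi x.1)
  have hg2 := hg hP (clp lo hi x.1)
  have hc : ContinuousOn (fun r : ℝ => clp 0 (r * (1 - δ) / 2) x.2) (Icc a T) := by
    unfold clp; fun_prop
  have hne : ∀ r ∈ Icc a T, 1 - 2 * clp 0 (r * (1 - δ) / 2) x.2 / r ≠ 0 := by
    intro r hr
    have hr0 := h0 r hr
    have h := clp_mem (lo := 0) (hi := r * (1 - δ) / 2) (y := x.2)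
      (by have : 0 ≤ r * (1 - δ) := mul_nonneg hr0.le (by linarith)
          linarith)
    have : 2 * clp 0 (r * (1 - δ) / 2) x.2 / r ≤ 1 - δ := by
        rw [div_le_iff₀ hr0]; linarith [h.2]
    linarith
  unfold fld
  refine ContinuousOn.prodMk ?_ (by fun_prop)
  refine ContinuousOn.mul (ContinuousOn.neg (ContinuousOn.inv₀ ?_ hne)) (ContinuousOn.add (by fun_prop) ?_)
  · exact continuousOn_const.sub ((continuousOn_const.mul hc).div continuousOn_id h0')
  · exact hc.div (by fun_prop) (fun r hr => pow_ne_zero 2 (h0' r hr))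

lemma clp_matter {S : ℝ} {G : ℝ → ℝ → ℝ} (hG : Matter S G) (hS : 0 < S) {r T y hi : ℝ} (hr : 0 < r)
    (hrT : r ≤ T) (hy : y ≤ hi) : G r (clp (log (S / T)) hi y) = G r y := by
  rw [clp, min_eq_left hy]
  have hT : 0 < T := hr.trans_le hrT
  rcases le_total (log (S / T)) y with h | h
  · rw [max_eq_right h]
  · rw [max_eq_left h]
    have h1 : exp (log (S / T)) ≤ S / r := by
      rw [exp_log (by positivity)]; gcongr
    rw [hG.zero r _ hr h1, hG.zero r y hr ((exp_le_exp.2 h).trans h1)]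

lemma deriv_Ici {f : ℝ → ℝ} {f' a T r : ℝ} (hr : r ∈ Ico a T)
    (h : HasDerivWithinAt f f' (Icc a T) r) : HasDerivWithinAt f f' (Ici r) r :=
  h.mono_of_mem_nhdsWithin (Icc_mem_nhdsGE_of_mem hr)

set_option maxHeartbeats 1000000 in
lemma exists_sol_s2 {S : ℝ} {G P : ℝ → ℝ → ℝ} (hG : Matter S G) (hP : Matter S P) (hS : 0 < S)
    {a y0 T : ℝ} (ha : a = S * exp (-y0)) (haT : a ≤ T) : ∃ y m, IsSol G P a y0 T y m := by
  have ha0 : 0 < a := by rw [ha]; positivity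
  have hT : 0 < T := ha0.trans_le haT
  have hpi := Real.pi_pos
  set lo := log (S / T) with hlo
  have helo : exp lo = S / T := exp_log (by positivity)
  have hlh : lo ≤ y0 := by
    rw [← exp_le_exp, helo, div_le_iff₀ hT]
    have : S = a * exp y0 := by rw [ha, mul_assoc, ← exp_add]; simp
    rw [this, mul_comm]; gcongr
  obtain ⟨B, hB0, hB⟩ := hG.bound T lo y0 ha0
  set C := 8 * π * T * B with hC
  have hC0 : 0 ≤ C := by positivity
  set A := 2 * T * C * exp (-lo) with hA
  have hA0 : 0 ≤ A := by positivity
  set δ := exp (-A * exp y0 - (C + 1) * (T - a)) with hδ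
  have hδ0 : 0 < δ := exp_pos _
  have hδ1 : δ ≤ 1 := by
    rw [hδ, exp_le_one_iff]
    have h1 : 0 ≤ A * exp y0 := by positivity
    have h2 : 0 ≤ (C + 1) * (T - a) := mul_nonneg (by linarith) (by linarith)
    linarith
  obtain ⟨K, L, hKL⟩ := fld_est hG hP ha0 haT hlh hδ0 hδ1
  have hpl : IsPicardLindelof (fld G P lo y0 δ) (⟨a, left_mem_Icc.2 haT⟩ : Icc a T)
      (y0, (0 : ℝ)) (L * (T - a).toNNReal) 0 L K :=
    { lipschitzOnWith := fun t ht => (hKL t ht).1.lipschitzOnWith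
      continuousOn := fun x _ => fld_cont hG hP ha0 hδ0 hδ1 x
      norm_le := fun t ht x _ => (hKL t ht).2 x
      mul_max_le := by
        simp [Real.coe_toNNReal _ (sub_nonneg.2 haT), haT] }
  obtain ⟨α, hα0, hα⟩ := hpl.exists_eq_forall_mem_Icc_hasDerivWithinAt₀
  simp only at hα0
  set y : ℝ → ℝ := fun r => (α r).1 with hy
  set m : ℝ → ℝ := fun r => (α r).2 with hm
  have dy : ∀ r ∈ Icc a T, HasDerivWithinAt y (fld G P lo y0 δ r (α r)).1 (Icc a T) r :=
    fun r hr => (hasFDerivAt_fst (p := α r)).comp_hasDerivWithinAt r (hα r hr)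
  have dm : ∀ r ∈ Icc a T, HasDerivWithinAt m (fld G P lo y0 δ r (α r)).2 (Icc a T) r :=
    fun r hr => (hasFDerivAt_snd (p := α r)).comp_hasDerivWithinAt r (hα r hr)
  have cy : ContinuousOn y (Icc a T) := fun r hr => (dy r hr).continuousWithinAt
  have cm : ContinuousOn m (Icc a T) := fun r hr => (dm r hr).continuousWithinAt
  have hya : y a = y0 := by simp [hy, hα0]
  have hma : m a = 0 := by simp [hm, hα0]
  have hpos : ∀ r ∈ Icc a T, 0 < r := fun r hr => ha0.trans_le hr.1
  have haI : a ∈ Icc a T := left_mem_Icc.2 haT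
  have hm0 : ∀ r ∈ Icc a T, 0 ≤ m r := by
    have hmono : MonotoneOn m (Icc a T) := by
      refine monotoneOn_of_hasDerivWithinAt_nonneg (convex_Icc a T) cm
        (fun r hr => (dm r (interior_subset hr)).mono interior_subset) fun r hr => ?_
      have hr0 := hpos r (interior_subset hr)
      have := hG.nonneg r (clp lo y0 (α r).1) hr0
      simp only [fld]; positivity
    intro r hr
    rw [← hma]; exact hmono haI hr hr.1
  have hMc : ∀ r ∈ Icc a T, 0 ≤ clp 0 (r * (1 - δ) / 2) (m r) ∧
      δ ≤ 1 - 2 * clp 0 (r * (1 - δ) / 2) (m r) / r := by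
    intro r hr
    have hr0 : 0 < r := hpos r hr
    have h := clp_mem (lo := 0) (hi := r * (1 - δ) / 2) (y := m r)
      (by have : 0 ≤ r * (1 - δ) := mul_nonneg hr0.le (by linarith)
          linarith)
    refine ⟨h.1, ?_⟩
    have : 2 * clp 0 (r * (1 - δ) / 2) (m r) / r ≤ 1 - δ := by
      rw [div_le_iff₀ hr0]; linarith [h.2]
    linarith
  have hy0 : ∀ r ∈ Icc a T, y r ≤ y0 := by
    have hmono : AntitoneOn y (Icc a T) := by
      refine antitoneOn_of_hasDerivWithinAt_nonpos (convex_Icc a T) cy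
        (fun r hr => (dy r (interior_subset hr)).mono interior_subset) fun r hr => ?_
      have hr' := interior_subset hr
      have hr0 := hpos r hr'
      have h1 := hP.nonneg r (clp lo y0 (α r).1) hr0
      have h2 := hMc r hr'
      have h3 : 0 ≤ (1 - 2 * clp 0 (r * (1 - δ) / 2) (m r) / r)⁻¹ := inv_nonneg.2 (by linarith [h2.2])
      have h4 := h2.1
      simp only [fld]
      rw [neg_mul]
      exact neg_nonpos.2 (mul_nonneg h3 (by positivity))
    intro r hr
    rw [← hya]; exact hmono haI hr hr.1
  have hGe : ∀ r ∈ Icc a T, G r (clp lo y0 (α r).1) = G r (y r) := fun r hr =>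
    clp_matter hG hS (hpos r hr) hr.2 (hy0 r hr)
  have hPe : ∀ r ∈ Icc a T, P r (clp lo y0 (α r).1) = P r (y r) := fun r hr =>
    clp_matter hP hS (hpos r hr) hr.2 (hy0 r hr)
  have hcl : ∀ r ∈ Icc a T, δ ≤ 1 - 2 * m r / r → clp 0 (r * (1 - δ) / 2) (m r) = m r := by
    intro r hr h
    have hr0 := hpos r hr
    refine clp_eq ⟨hm0 r hr, ?_⟩
    have : 2 * m r / r ≤ 1 - δ := by linarith
    rw [div_le_iff₀ hr0] at this; linarith
  set b : ℝ → ℝ := fun r => exp (A * exp (y r) - A * exp y0 - (C + 1) * (r - a)) with hb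
  have hbδ : ∀ r ∈ Icc a T, δ ≤ b r := by
    intro r hr
    rw [hδ, hb, exp_le_exp]
    have h1 : 0 ≤ A * exp (y r) := by positivity
    have h2 : (C + 1) * (r - a) ≤ (C + 1) * (T - a) :=
      mul_le_mul_of_nonneg_left (by linarith [hr.2]) (by linarith)
    linarith
  have hbar : ∀ ⦃r⦄, r ∈ Icc a T → b r ≤ 1 - 2 * m r / r := by
    refine image_le_of_deriv_right_lt_deriv_boundary'
      (f' := fun r => b r * (A * (exp (y r) * (fld G P lo y0 δ r (α r)).1) - (C + 1)))
      (B := fun r => 1 - 2 * m r / r)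
      (B' := fun r => - ((2 * (fld G P lo y0 δ r (α r)).2 * r - 2 * m r * 1) / r ^ 2))
      ?_ ?_ ?_ ?_ ?_ ?_
    · simp only [hb]; fun_prop
    · intro r hr
      have h1 := deriv_Ici hr (dy r (Ico_subset_Icc_self hr))
      have h2 := (((h1.exp.const_mul A).sub_const (A * exp y0)).sub
        ((((hasDerivWithinAt_id r (Ici r)).sub_const a).const_mul (C + 1)))).exp
      simpa [hb] using h2
    · simp [hb, hya, hma]
    · exact continuousOn_const.sub ((continuousOn_const.mul cm).div continuousOn_id
        fun r hr => (hpos r hr).ne')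
    · intro r hr
      have hr0 := hpos r (Ico_subset_Icc_self hr)
      have h1 := deriv_Ici hr (dm r (Ico_subset_Icc_self hr))
      exact ((h1.const_mul 2).div (hasDerivWithinAt_id r (Ici r)) hr0.ne').const_sub 1
    · intro r hr' heq
      have hr := Ico_subset_Icc_self hr'
      have hr0 := hpos r hr
      have hw := hbδ r hr
      have hc := hcl r hr (heq ▸ hw)
      have hw0 : 0 < b r := hδ0.trans_le hw
      simp only [fld]
      have hc' : clp 0 (r * (1 - δ) / 2) (α r).2 = m r := hc
      rw [hc', hPe r hr, hGe r hr, ← heq]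
      have hPn := hP.nonneg r (y r) hr0
      have hGn := hG.nonneg r (y r) hr0
      have hmn := hm0 r hr
      have e1 : b r * (A * (exp (y r) * (-(b r)⁻¹ * (4 * π * r * P r (y r) + m r / r ^ 2))) - (C + 1))
          = -(A * exp (y r) * (4 * π * r * P r (y r))) - A * exp (y r) * (m r / r ^ 2)
            - (C + 1) * b r := by
        field_simp; ring
      have e2 : -((2 * (4 * π * (r ^ 2 * G r (y r))) * r - 2 * m r * 1) / r ^ 2) =
          2 * (m r / r ^ 2) - 8 * π * r * G r (y r) := by
        field_simp; ring
      rw [e1, e2]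
      have h1 : 0 ≤ A * exp (y r) * (4 * π * r * P r (y r)) := by positivity
      have h2 : 0 ≤ m r / r ^ 2 := by positivity
      have h3 : 0 ≤ C * b r := by positivity
      rcases le_or_gt (y r) lo with h | h
      · have : G r (y r) = 0 := hG.zero r _ hr0
          ((exp_le_exp.2 h).trans (by rw [helo]; have := hr.2; gcongr))
        rw [this]
        have h4 : 0 ≤ A * exp (y r) * (m r / r ^ 2) := by positivity
        linarith
      · have h5 : 8 * π * r * G r (y r) ≤ C := by
          have := (le_abs_self _).trans (hB r hr (y r) ⟨h.le, hy0 r hr⟩)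
          have := hr.2
          rw [hC]; gcongr
        have h6 : 2 * T * C ≤ A * exp (y r) := by
          rw [hA, mul_assoc (2 * T * C), ← exp_add]
          have : 1 ≤ exp (-lo + y r) := by rw [one_le_exp_iff]; linarith
          have h0 : 0 ≤ 2 * T * C := by positivity
          nlinarith
        have h7 : (1 - b r) / (2 * T) ≤ m r / r ^ 2 := by
          have hmm : m r = (1 - b r) * r / 2 := by rw [heq]; field_simp; ring
          have h8 : 0 ≤ 1 - b r := by rw [heq]; have : 0 ≤ 2 * m r / r := by positivity
                                      linarith
          have : m r / r ^ 2 = (1 - b r) / (2 * r) := by rw [hmm]; field_simp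
          rw [this]
          have := hr.2
          gcongr
        have h9 : C * (1 - b r) ≤ A * exp (y r) * (m r / r ^ 2) := by
          have h10 : 2 * T * C * (m r / r ^ 2) ≤ A * exp (y r) * (m r / r ^ 2) := by gcongr
          have h11 : 2 * T * C * ((1 - b r) / (2 * T)) ≤ 2 * T * C * (m r / r ^ 2) := by gcongr
          have h12 : 2 * T * C * ((1 - b r) / (2 * T)) = C * (1 - b r) := by field_simp
          linarith
        linarith
  have hwδ : ∀ r ∈ Icc a T, δ ≤ 1 - 2 * m r / r := fun r hr => (hbδ r hr).trans (hbar hr)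
  refine ⟨y, m, hya, hma, fun r hr => by linarith [hwδ r hr], fun r hr => ?_, fun r hr => ?_⟩
  · have := dy r hr
    simp only [fld] at this
    rw [hPe r hr, show clp 0 (r * (1 - δ) / 2) (α r).2 = m r from hcl r hr (hwδ r hr)] at this
    exact this
  · have := dm r hr
    simp only [fld] at this
    rw [hGe r hr] at this
    exact this

lemma IsSol.facts {S : ℝ} {G P : ℝ → ℝ → ℝ} (hG : Matter S G) (hP : Matter S P)
    {a y0 T : ℝ} (ha0 : 0 < a) (haT : a ≤ T) {y m : ℝ → ℝ} (h : IsSol G P a y0 T y m) :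
    ContinuousOn y (Icc a T) ∧ ContinuousOn m (Icc a T) ∧ (∀ r ∈ Icc a T, y r ≤ y0) ∧
      (∀ r ∈ Icc a T, 0 ≤ m r) ∧ ∃ δ > 0, ∀ r ∈ Icc a T, δ ≤ 1 - 2 * m r / r := by
  have cy : ContinuousOn y (Icc a T) := fun r hr => (h.dy r hr).continuousWithinAt
  have cm : ContinuousOn m (Icc a T) := fun r hr => (h.dm r hr).continuousWithinAt
  have hpos : ∀ r ∈ Icc a T, 0 < r := fun r hr => ha0.trans_le hr.1
  have haI : a ∈ Icc a T := left_mem_Icc.2 haT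
  have hpi := Real.pi_pos
  have hm0 : ∀ r ∈ Icc a T, 0 ≤ m r := by
    have hmono : MonotoneOn m (Icc a T) := by
      refine monotoneOn_of_hasDerivWithinAt_nonneg (convex_Icc a T) cm
        (fun r hr => (h.dm r (interior_subset hr)).mono interior_subset) fun r hr => ?_
      have hr0 := hpos r (interior_subset hr)
      have := hG.nonneg r (y r) hr0
      positivity
    intro r hr
    rw [← h.m_init]; exact hmono haI hr hr.1
  refine ⟨cy, cm, ?_, hm0, ?_⟩
  · have hmono : AntitoneOn y (Icc a T) := by
      refine antitoneOn_of_hasDerivWithinAt_nonpos (convex_Icc a T) cy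
        (fun r hr => (h.dy r (interior_subset hr)).mono interior_subset) fun r hr => ?_
      have hr' := interior_subset hr
      have hr0 := hpos r hr'
      have h1 := hP.nonneg r (y r) hr0
      have h3 : 0 ≤ (1 - 2 * m r / r)⁻¹ := inv_nonneg.2 (by linarith [h.lt r hr'])
      have h4 := hm0 r hr'
      rw [neg_mul]
      exact neg_nonpos.2 (mul_nonneg h3 (by positivity))
    intro r hr
    rw [← h.y_init]; exact hmono haI hr hr.1
  · have cw : ContinuousOn (fun r => 1 - 2 * m r / r) (Icc a T) :=
      continuousOn_const.sub ((continuousOn_const.mul cm).div continuousOn_id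
        fun r hr => (hpos r hr).ne')
    obtain ⟨r0, hr0, hmin⟩ := isCompact_Icc.exists_isMinOn ⟨a, haI⟩ cw
    exact ⟨1 - 2 * m r0 / r0, by linarith [h.lt r0 hr0], fun r hr => hmin hr⟩

lemma IsSol.unique {S : ℝ} {G P : ℝ → ℝ → ℝ} (hG : Matter S G) (hP : Matter S P) (hS : 0 < S)
    {a y0 T : ℝ} (ha : a = S * exp (-y0)) (haT : a ≤ T) {y m z n : ℝ → ℝ}
    (h : IsSol G P a y0 T y m) (h' : IsSol G P a y0 T z n) :
    ∀ r ∈ Icc a T, y r = z r ∧ m r = n r := by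
  have ha0 : 0 < a := by rw [ha]; positivity
  have hT : 0 < T := ha0.trans_le haT
  have hpos : ∀ r ∈ Icc a T, 0 < r := fun r hr => ha0.trans_le hr.1
  have hlh : log (S / T) ≤ y0 := by
    rw [← exp_le_exp, exp_log (by positivity), div_le_iff₀ hT]
    have : S = a * exp y0 := by rw [ha, mul_assoc, ← exp_add]; simp
    rw [this, mul_comm]; gcongr
  obtain ⟨cy, cm, hy0, hm0, δ1, hδ1, hw1⟩ := h.facts hG hP ha0 haT
  obtain ⟨cz, cn, hz0, hn0, δ2, hδ2, hw2⟩ := h'.facts hG hP ha0 haT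
  set δ := min 1 (min δ1 δ2)
  have hδ0 : 0 < δ := lt_min one_pos (lt_min hδ1 hδ2)
  have key : ∀ {y m : ℝ → ℝ}, IsSol G P a y0 T y m → (∀ r ∈ Icc a T, y r ≤ y0) →
      (∀ r ∈ Icc a T, 0 ≤ m r) → (∀ r ∈ Icc a T, δ ≤ 1 - 2 * m r / r) → ∀ r ∈ Ico a T,
      HasDerivWithinAt (fun r => (y r, m r)) (fld G P (log (S / T)) y0 δ r (y r, m r)) (Ici r) r := by
    intro y m h hy0 hm0 hw r hr'
    have hr := Ico_subset_Icc_self hr'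
    have hr0 := hpos r hr
    have hcl : clp 0 (r * (1 - δ) / 2) (m r) = m r := by
      refine clp_eq ⟨hm0 r hr, ?_⟩
      have : 2 * m r / r ≤ 1 - δ := by linarith [hw r hr]
      rw [div_le_iff₀ hr0] at this; linarith
    have e : fld G P (log (S / T)) y0 δ r (y r, m r) =
        (-(1 - 2 * m r / r)⁻¹ * (4 * π * r * P r (y r) + m r / r ^ 2),
          4 * π * (r ^ 2 * G r (y r))) := by
      simp only [fld]
      rw [hcl, clp_matter hG hS hr0 hr.2 (hy0 r hr), clp_matter hP hS hr0 hr.2 (hy0 r hr)]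
    rw [e]
    exact (deriv_Ici hr' (h.dy r hr)).prodMk (deriv_Ici hr' (h.dm r hr))
  obtain ⟨K, L, hKL⟩ := fld_est hG hP ha0 haT hlh hδ0 (min_le_left _ _)
  have := ODE_solution_unique_of_mem_Icc_right (s := fun _ => univ)
    (fun t ht => (hKL t (Ico_subset_Icc_self ht)).1.lipschitzOnWith)
    (cy.prodMk cm) (key h hy0 hm0 fun r hr =>
      ((min_le_right _ _).trans (min_le_left _ _)).trans (hw1 r hr)) (fun _ _ => trivial)
    (cz.prodMk cn) (key h' hz0 hn0 fun r hr =>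
      ((min_le_right _ _).trans (min_le_right _ _)).trans (hw2 r hr)) (fun _ _ => trivial)
    (by simp [h.y_init, h.m_init, h'.y_init, h'.m_init])
  intro r hr
  have := this hr
  simpa using this
/-- general form of the matter quantities -/
noncomputable def gm (S c e β k s : ℝ) (j : ℕ) (r y : ℝ) : ℝ :=
  c * r ^ e * (exp (β * y) * prof k s j (S / r * exp (-y)))

lemma prof_bound {k s a : ℝ} {j : ℕ} (hk : 0 ≤ k) (hs : 0 ≤ s) (hjs : 1 ≤ j ∨ 1 ≤ s)
    (ha : 0 ≤ a) : |prof k s j a| ≤ 3 + 2 * s := by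
  have := prof_lip (b := a + 1) hk hs hjs ha (by linarith)
  rw [prof_zero (a := a + 1) (by linarith)] at this
  simpa using this

lemma exp_lip (β lo hi : ℝ) : ∃ K : ℝ, 0 ≤ K ∧ ∀ y ∈ Icc lo hi, ∀ y' ∈ Icc lo hi,
    |exp (β * y) - exp (β * y')| ≤ K * |y - y'| := by
  have h : ContDiffOn ℝ 1 (fun y : ℝ => exp (β * y)) (Icc lo hi) := by fun_prop
  obtain ⟨K, hK⟩ := h.exists_lipschitzOnWith one_ne_zero (convex_Icc _ _) isCompact_Icc
  exact ⟨K, K.2, fun y hy y' hy' => hK.dist_le_mul y hy y' hy'⟩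

lemma gm_matter {S c e β k s : ℝ} {j : ℕ} (hS : 0 < S) (hc : 0 ≤ c) (hk : 0 ≤ k) (hs : 0 ≤ s)
    (hjs : 1 ≤ j ∨ 1 ≤ s) : Matter S (gm S c e β k s j) where
  cont := by
    have hp : ContinuousOn (prof k s j) (Ici 0) := by
      have : LipschitzOnWith (3 + 2 * s).toNNReal (prof k s j) (Ici 0) := by
        refine LipschitzOnWith.of_dist_le_mul fun x hx y hy => ?_
        rw [Real.coe_toNNReal _ (by positivity)]
        exact prof_lip hk hs hjs hx hy
      exact this.continuousOn
    have hne : ∀ x ∈ (Ioi (0:ℝ) ×ˢ (univ : Set ℝ)), x.1 ≠ 0 := fun x hx => ne_of_gt hx.1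
    unfold gm
    refine (continuousOn_const.mul (continuousOn_fst.rpow_const fun x hx => Or.inl (hne x hx))).mul
      (ContinuousOn.mul (by fun_prop) ?_)
    refine hp.comp (f := fun x : ℝ × ℝ => S / x.1 * exp (-x.2)) ?_ ?_
    · exact (continuousOn_const.div continuousOn_fst hne).mul (by fun_prop)
    · intro x hx
      have : 0 < x.1 := hx.1
      simp only [mem_Ici]; positivity
  nonneg r y hr := by
    have : 0 ≤ prof k s j (S / r * exp (-y)) := prof_nonneg (by positivity)
    unfold gm; positivity
  zero r y hr h := by
    have : 1 ≤ S / r * exp (-y) := by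
      have he : exp y * exp (-y) = 1 := by rw [← exp_add]; simp
      rw [← he]; gcongr
    rw [gm, prof_zero this]; simp
  lip a b lo hi ha := by
    obtain ⟨K1, hK1, h1⟩ := exp_lip β lo hi
    obtain ⟨K2, hK2, h2⟩ := exp_lip (-1) lo hi
    obtain ⟨B1, hB1⟩ := (isCompact_Icc (a := a) (b := b)).exists_bound_of_continuousOn
      (f := fun r : ℝ => r ^ e)
      (continuousOn_id.rpow_const fun x hx => Or.inl (ha.trans_le hx.1).ne')
    obtain ⟨B2, hB2⟩ := (isCompact_Icc (a := lo) (b := hi)).exists_bound_of_continuousOn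
      (f := fun y : ℝ => exp (β * y)) (by fun_prop)
    refine ⟨c * |B1| * (|B2| * ((3 + 2 * s) * (S / a * K2)) + K1 * (3 + 2 * s)), by positivity, ?_⟩
    intro r hr y hy y' hy'
    have hr0 : 0 < r := ha.trans_le hr.1
    have e1 := h1 y hy y' hy'
    have e2 := h2 y hy y' hy'
    have e3 := (hB1 r hr).trans (le_abs_self _)
    have e4 := (hB2 y hy).trans (le_abs_self _)
    simp only [Real.norm_eq_abs, neg_mul, one_mul] at e1 e2 e3 e4
    have e5 := prof_lip (a := S / r * exp (-y)) (b := S / r * exp (-y')) hk hs hjs (by positivity)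
      (by positivity)
    have e6 := prof_bound (a := S / r * exp (-y')) hk hs hjs (by positivity)
    have e7 : |S / r * exp (-y) - S / r * exp (-y')| ≤ S / a * K2 * |y - y'| := by
      rw [← mul_sub, abs_mul, abs_of_nonneg (by positivity : 0 ≤ S / r), mul_assoc]
      have := hr.1
      gcongr
    have e8 := e5.trans (mul_le_mul_of_nonneg_left e7 (by positivity))
    unfold gm
    set F := prof k s j (S / r * exp (-y))
    set F' := prof k s j (S / r * exp (-y'))
    set E := exp (β * y)
    set E' := exp (β * y')
    have key : c * r ^ e * (E * F) - c * r ^ e * (E' * F') =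
      c * r ^ e * (E * (F - F') + (E - E') * F') := by ring
    rw [key, abs_mul, abs_mul c, abs_of_nonneg hc, mul_assoc (c * |B1|)]
    refine mul_le_mul (by gcongr) ?_ (abs_nonneg _) (by positivity)
    refine (abs_add_le _ _).trans ?_
    rw [abs_mul, abs_mul, add_mul]
    refine add_le_add ?_ ?_
    · rw [mul_assoc]
      refine mul_le_mul e4 (by rw [mul_assoc (3 + 2 * s)]; exact e8) (abs_nonneg _) (abs_nonneg _)
    · rw [mul_right_comm]
      exact mul_le_mul e1 e6 (abs_nonneg _) (by positivity)

lemma cConst_nonneg (ℓ : ℝ) : 0 ≤ cConst ℓ := by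
  unfold cConst
  have := Real.pi_pos
  refine mul_nonneg (by positivity) (setIntegral_nonneg measurableSet_Ioc fun s hs => ?_)
  have := hs.1
  positivity

/-- density profile -/
noncomputable def gG (k ℓ L0 : ℝ) : ℝ → ℝ → ℝ :=
  gm (√L0) (cConst ℓ) (2 * ℓ) (2 * ℓ + 4) k (ℓ + 1 / 2) 2

/-- pressure profile -/
noncomputable def gP (k ℓ L0 : ℝ) : ℝ → ℝ → ℝ :=
  gm (√L0) (cConst ℓ / (2 * ℓ + 3)) (2 * ℓ) (2 * ℓ + 4) k (ℓ + 3 / 2) 0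

lemma rho_eq_s2 {k ℓ L0 : ℝ} (hL : 0 < L0) (y : ℝ → ℝ) {r : ℝ} (hr : 0 < r) :
    rho k ℓ L0 y r = gG k ℓ L0 r (y r) := by
  have h := prof_subst (k := k) (s := ℓ + 1 / 2) (d := √L0 / r) (y := y r) (j := 2) (by positivity)
  rw [div_pow, Real.sq_sqrt hL.le] at h
  rw [rho, h, gG, gm]
  congr 4
  push_cast; ring

lemma pres_eq_s2 {k ℓ L0 : ℝ} (hL : 0 < L0) (y : ℝ → ℝ) {r : ℝ} (hr : 0 < r) :
    pres k ℓ L0 y r = gP k ℓ L0 r (y r) := by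
  have h := prof_subst (k := k) (s := ℓ + 3 / 2) (d := √L0 / r) (y := y r) (j := 0) (by positivity)
  rw [div_pow, Real.sq_sqrt hL.le] at h
  simp only [pow_zero, mul_one] at h
  rw [pres, h, gP, gm]
  congr 4
  push_cast; ring

lemma gG_matter {k ℓ L0 : ℝ} (hk : 0 ≤ k) (hl : -(1 / 2) ≤ ℓ) (hL : 0 < L0) :
    Matter (√L0) (gG k ℓ L0) :=
  gm_matter (Real.sqrt_pos.2 hL) (cConst_nonneg ℓ) hk (by linarith) (Or.inl (by norm_num))

lemma gP_matter {k ℓ L0 : ℝ} (hk : 0 ≤ k) (hl : -(1 / 2) ≤ ℓ) (hL : 0 < L0) :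
    Matter (√L0) (gP k ℓ L0) :=
  gm_matter (Real.sqrt_pos.2 hL) (div_nonneg (cConst_nonneg ℓ) (by linarith)) hk (by linarith)
    (Or.inr (by linarith))

lemma Matter.cont_comp {S : ℝ} {G : ℝ → ℝ → ℝ} (hG : Matter S G) {y : ℝ → ℝ}
    (hy : ContinuousOn y (Ioi 0)) : ContinuousOn (fun r => G r (y r)) (Ioi 0) :=
  hG.cont.comp (f := fun r : ℝ => (r, y r)) (continuousOn_id.prodMk hy)
    (fun r hr => ⟨hr, trivial⟩)

lemma zero_cond {S a y0 r y : ℝ} (ha : a = S * exp (-y0)) (hr : 0 < r) (hra : r ≤ a)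
    (hy : y ≤ y0) : exp y ≤ S / r := by
  rw [le_div_iff₀ hr]
  have he : exp (-y0) * exp y0 = 1 := by rw [← exp_add]; simp
  have : S = a * exp y0 := by rw [ha, mul_assoc, he, mul_one]
  rw [this, mul_comm]
  have := hr.trans_le hra
  gcongr

/-- Hawking mass facts -/
lemma mass_facts {k ℓ L0 : ℝ} (hk : 0 ≤ k) (hl : -(1 / 2) ≤ ℓ) (hL : 0 < L0) {a y0 : ℝ}
    (ha : a = √L0 * exp (-y0)) {y : ℝ → ℝ} (hy : ContinuousOn y (Ioi 0))
    (hya : ∀ r, 0 < r → r ≤ a → y r ≤ y0) :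
    (∀ r, r ≤ a → hawkingMass k ℓ L0 y r = 0) ∧
    ∀ r, 0 < r → HasDerivAt (hawkingMass k ℓ L0 y) (4 * π * (r ^ 2 * gG k ℓ L0 r (y r))) r := by
  have hG := gG_matter hk hl hL
  have hS : 0 < √L0 := Real.sqrt_pos.2 hL
  have ha0 : 0 < a := by rw [ha]; positivity
  set f : ℝ → ℝ := fun s => s ^ 2 * rho k ℓ L0 y s with hf
  have hf0 : ∀ s ∈ Ioc 0 a, f s = 0 := by
    intro s hs
    simp only [hf]
    rw [rho_eq_s2 hL y hs.1, hG.zero s _ hs.1 (zero_cond ha hs.1 hs.2 (hya s hs.1 hs.2)), mul_zero]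
  have hfe : ∀ s ∈ Ioi (0 : ℝ), f s = s ^ 2 * gG k ℓ L0 s (y s) := fun s hs => by
    simp only [hf]; rw [rho_eq_s2 hL y hs]
  have hfc : ContinuousOn f (Ioi 0) :=
    ContinuousOn.congr ((continuousOn_id.pow 2).mul (hG.cont_comp hy)) hfe
  constructor
  · intro r hr
    rw [hawkingMass, setIntegral_congr_fun measurableSet_Ioc (g := fun _ => (0 : ℝ))
      (fun s hs => hf0 s ⟨hs.1, hs.2.trans hr⟩)]
    simp
  · intro r hr
    have hi1 : IntervalIntegrable f volume 0 a := by
      rw [intervalIntegrable_iff_integrableOn_Ioc_of_le ha0.le]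
      exact (integrableOn_zero (ε' := ℝ)).congr_fun (fun s hs => (hf0 s hs).symm) measurableSet_Ioc
    have hi2 : IntervalIntegrable f volume a r := by
      refine (hfc.mono fun s hs => ?_).intervalIntegrable
      exact lt_of_lt_of_le (lt_min ha0 hr) hs.1
    have h1 := intervalIntegral.integral_hasDerivAt_right (hi1.trans hi2)
      (hfc.stronglyMeasurableAtFilter isOpen_Ioi r hr) (hfc.continuousAt (Ioi_mem_nhds hr))
    have h2 := h1.const_mul (4 * π)
    rw [hfe r hr] at h2
    refine h2.congr_of_eventuallyEq ?_
    filter_upwards [Ioi_mem_nhds hr] with u hu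
    rw [hawkingMass, intervalIntegral.integral_of_le (le_of_lt hu)]
lemma IsSol.mono {G P : ℝ → ℝ → ℝ} {a y0 T T' : ℝ} {y m : ℝ → ℝ} (h : IsSol G P a y0 T y m)
    (hT : T' ≤ T) : IsSol G P a y0 T' y m where
  y_init := h.y_init
  m_init := h.m_init
  lt r hr := h.lt r ⟨hr.1, hr.2.trans hT⟩
  dy r hr := (h.dy r ⟨hr.1, hr.2.trans hT⟩).mono (Icc_subset_Icc_right hT)
  dm r hr := (h.dm r ⟨hr.1, hr.2.trans hT⟩).mono (Icc_subset_Icc_right hT)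

lemma IsSol.congr {G P : ℝ → ℝ → ℝ} {a y0 T : ℝ} {y m z n : ℝ → ℝ} (h : IsSol G P a y0 T y m)
    (haT : a ≤ T) (hz : ∀ r ∈ Icc a T, z r = y r ∧ n r = m r) : IsSol G P a y0 T z n where
  y_init := (hz a (left_mem_Icc.2 haT)).1.trans h.y_init
  m_init := (hz a (left_mem_Icc.2 haT)).2.trans h.m_init
  lt r hr := by rw [(hz r hr).2]; exact h.lt r hr
  dy r hr := by
    rw [(hz r hr).1, (hz r hr).2]
    exact (h.dy r hr).congr (fun s hs => (hz s hs).1) (hz r hr).1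
  dm r hr := by
    rw [(hz r hr).1]
    exact (h.dm r hr).congr (fun s hs => (hz s hs).2) (hz r hr).2

lemma global_sol {S : ℝ} {G P : ℝ → ℝ → ℝ} (hG : Matter S G) (hP : Matter S P) (hS : 0 < S)
    {a y0 : ℝ} (ha : a = S * exp (-y0)) : ∃ Y N : ℝ → ℝ, (∀ r ≤ a, Y r = y0 ∧ N r = 0) ∧
      ∀ T, a ≤ T → IsSol G P a y0 T Y N := by
  have hex : ∀ T, ∃ y m, a ≤ T → IsSol G P a y0 T y m := by
    intro T
    by_cases h : a ≤ T
    · obtain ⟨y, m, hs⟩ := exists_sol_s2 hG hP hS ha h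
      exact ⟨y, m, fun _ => hs⟩
    · exact ⟨0, 0, fun h' => absurd h' h⟩
  choose ys ms hs using hex
  refine ⟨fun r => if r ≤ a then y0 else ys (r + 1) r, fun r => if r ≤ a then 0 else ms (r + 1) r,
    fun r hr => by simp [hr], fun T hT => (hs T hT).congr hT fun r hr => ?_⟩
  rcases hr.1.eq_or_lt with h | h
  · subst h
    simp [(hs T hT).y_init, (hs T hT).m_init]
  · simp only [not_le.2 h, if_false]
    have h1 : r ≤ min T (r + 1) := le_min hr.2 (by linarith)
    exact IsSol.unique hG hP hS ha (hr.1.trans h1)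
      ((hs (r + 1) (by linarith)).mono (min_le_right _ _)) ((hs T hT).mono (min_le_left _ _)) r
      ⟨hr.1, h1⟩

/-- The right hand side of the equation. -/
noncomputable def rhs (P : ℝ → ℝ → ℝ) (y m : ℝ → ℝ) (r : ℝ) : ℝ :=
  -(1 - 2 * m r / r)⁻¹ * (4 * π * r * P r (y r) + m r / r ^ 2)

lemma global_deriv {S : ℝ} {G P : ℝ → ℝ → ℝ} (hP : Matter S P) (hS : 0 < S)
    {a y0 : ℝ} (ha : a = S * exp (-y0)) {Y N : ℝ → ℝ} (h0 : ∀ r ≤ a, Y r = y0 ∧ N r = 0)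
    (hs : ∀ T, a ≤ T → IsSol G P a y0 T Y N) : ∀ r, 0 < r → HasDerivAt Y (rhs P Y N r) r := by
  intro r hr
  have hD0 : r ≤ a → rhs P Y N r = 0 := fun h => by
    rw [rhs, (h0 r h).1, (h0 r h).2, hP.zero r y0 hr (zero_cond ha hr h le_rfl)]; simp
  rcases lt_trichotomy r a with h | h | h
  · rw [hD0 h.le]
    refine (hasDerivAt_const r y0).congr_of_eventuallyEq ?_
    filter_upwards [Iio_mem_nhds h] with s hs
    exact (h0 s (le_of_lt hs)).1
  · have h1 : HasDerivWithinAt Y (rhs P Y N r) (Iic r) r := by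
      rw [hD0 h.le]
      exact (hasDerivWithinAt_const r (Iic r) y0).congr (fun s hs => (h0 s (hs.trans h.le)).1)
        (h0 r h.le).1
    have h2 : HasDerivWithinAt Y (rhs P Y N r) (Ici r) r :=
      deriv_Ici ⟨h.ge, lt_add_one r⟩ ((hs (r + 1) (by linarith)).dy r ⟨h.ge, by linarith⟩)
    have := h1.union h2
    rwa [Iic_union_Ici, hasDerivWithinAt_univ] at this
  · exact ((hs (r + 1) (by linarith)).dy r ⟨h.le, by linarith⟩).hasDerivAt
      (Icc_mem_nhds h (by linarith))

lemma mass_eq {k ℓ L0 : ℝ} (hk : 0 ≤ k) (hl : -(1 / 2) ≤ ℓ) (hL : 0 < L0) {a y0 : ℝ}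
    (ha : a = √L0 * exp (-y0)) {Y N : ℝ → ℝ} (hY : ContinuousOn Y (Ioi 0))
    (h0 : ∀ r ≤ a, Y r = y0 ∧ N r = 0)
    (hs : ∀ T, a ≤ T → IsSol (gG k ℓ L0) (gP k ℓ L0) a y0 T Y N) :
    ∀ r, hawkingMass k ℓ L0 Y r = N r := by
  have hS : 0 < √L0 := Real.sqrt_pos.2 hL
  have ha0 : 0 < a := by rw [ha]; positivity
  obtain ⟨hm0, hmd⟩ := mass_facts hk hl hL ha hY fun r _ h => (h0 r h).1.le
  intro r
  rcases le_total r a with h | h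
  · rw [hm0 r h, (h0 r h).2]
  · have hd : ∀ s ∈ Icc a r,
        HasDerivWithinAt (fun s => hawkingMass k ℓ L0 Y s - N s) 0 (Icc a r) s := by
      intro s hsI
      have := ((hmd s (ha0.trans_le hsI.1)).hasDerivWithinAt (s := Icc a r)).sub
        ((hs r h).dm s hsI)
      rw [sub_self] at this
      exact this
    have := constant_of_has_deriv_right_zero (fun s hs => (hd s hs).continuousWithinAt)
      (fun s hs => deriv_Ici hs (hd s (Ico_subset_Icc_self hs))) r (right_mem_Icc.2 h)
    simp only [hm0 a le_rfl, (h0 a le_rfl).2] at this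
    linarith

lemma global_contDiff {S : ℝ} {P : ℝ → ℝ → ℝ} (hP : Matter S P)
    {a y0 : ℝ} (ha0 : 0 < a) {Y N : ℝ → ℝ} (h0 : ∀ r ≤ a, Y r = y0)
    (hY : ∀ r, 0 < r → HasDerivAt Y (rhs P Y N r) r) (hN : ContinuousOn N (Ioi 0))
    (hlt : ∀ r, 0 < r → 2 * N r / r < 1) : ContDiff ℝ 1 Y := by
  have hloc : ∀ r < a, HasDerivAt Y 0 r := fun r h => by
    refine (hasDerivAt_const r y0).congr_of_eventuallyEq ?_
    filter_upwards [Iio_mem_nhds h] with s hs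
    exact h0 s (le_of_lt hs)
  have hYc : ContinuousOn Y (Ioi 0) := fun r hr => (hY r hr).continuousAt.continuousWithinAt
  rw [contDiff_one_iff_deriv]
  constructor
  · intro r
    rcases lt_or_ge r a with h | h
    · exact (hloc r h).differentiableAt
    · exact (hY r (ha0.trans_le h)).differentiableAt
  · rw [continuous_iff_continuousAt]
    intro r
    rcases lt_or_ge r a with h | h
    · refine (continuousAt_const (y := (0 : ℝ))).congr ?_
      filter_upwards [Iio_mem_nhds h] with s hs
      exact (hloc s hs).deriv.symm
    · have hr := ha0.trans_le h
      have hc : ContinuousOn (rhs P Y N) (Ioi 0) := by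
        have hne : ∀ s ∈ Ioi (0 : ℝ), s ≠ 0 := fun s hs => ne_of_gt hs
        refine ((continuousOn_const.sub ((continuousOn_const.mul hN).div continuousOn_id
          hne)).inv₀ fun s hs => ?_).neg.mul (((continuousOn_const.mul continuousOn_id).mul
          (hP.cont_comp hYc)).add (hN.div (continuousOn_id.pow 2) fun s hs => ?_))
        · have := hlt s hs
          exact (sub_pos.2 this).ne'
        · exact pow_ne_zero 2 (hne s hs)
      refine (hc.continuousAt (Ioi_mem_nhds hr)).congr ?_
      filter_upwards [Ioi_mem_nhds hr] with s hs
      exact (hY s hs).deriv.symm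

lemma shell_isSol {k ℓ L0 : ℝ} (hk : 0 ≤ k) (hl : -(1 / 2) ≤ ℓ) (hL : 0 < L0) {a y0 : ℝ}
    (ha : a = √L0 * exp (-y0)) {z : ℝ → ℝ} (hz0 : z 0 = y0) (hz : QuasiShell k ℓ L0 z) :
    (∀ r, 0 ≤ r → r ≤ a → z r = y0) ∧
      ∀ T, a ≤ T → IsSol (gG k ℓ L0) (gP k ℓ L0) a y0 T z (hawkingMass k ℓ L0 z) := by
  have hG := gG_matter hk hl hL
  have hP := gP_matter hk hl hL
  have hpi := Real.pi_pos
  have hS : 0 < √L0 := Real.sqrt_pos.2 hL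
  have ha0 : 0 < a := by rw [ha]; positivity
  have hc : ContinuousOn z (Ici 0) := hz.1.continuousOn
  have hm : ∀ r, 0 ≤ hawkingMass k ℓ L0 z r := by
    intro r
    rw [hawkingMass]
    refine mul_nonneg (by positivity) (setIntegral_nonneg measurableSet_Ioc fun s hs => ?_)
    rw [rho_eq_s2 hL z hs.1]
    exact mul_nonneg (sq_nonneg _) (hG.nonneg _ _ hs.1)
  have hanti : AntitoneOn z (Ici 0) := by
    refine antitoneOn_of_hasDerivWithinAt_nonpos (convex_Ici 0) hc
      (fun r hr => (hz.2 r (by simpa using hr)).2.hasDerivWithinAt) fun r hr => ?_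
    have hr' : 0 < r := by simpa using hr
    rw [pres_eq_s2 hL z hr', neg_mul]
    have h1 := hm r
    have h2 := hP.nonneg r (z r) hr'
    have h3 : 0 ≤ 1 - 2 * hawkingMass k ℓ L0 z r / r := by linarith [(hz.2 r hr').1]
    exact neg_nonpos.2 (by positivity)
  have hle : ∀ r, 0 ≤ r → z r ≤ y0 := fun r hr => by
    rw [← hz0]; exact hanti (mem_Ici.2 le_rfl) hr hr
  obtain ⟨hm0, hmd⟩ := mass_facts hk hl hL ha (hc.mono Ioi_subset_Ici_self)
    fun r hr _ => hle r hr.le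
  have hmono : MonotoneOn z (Icc 0 a) := by
    refine monotoneOn_of_hasDerivWithinAt_nonneg (convex_Icc 0 a)
      (hc.mono Icc_subset_Ici_self)
      (fun r hr => (hz.2 r (by rw [interior_Icc] at hr; exact hr.1)).2.hasDerivWithinAt)
      fun r hr => ?_
    rw [interior_Icc] at hr
    rw [pres_eq_s2 hL z hr.1, hm0 r hr.2.le,
      hP.zero r _ hr.1 (zero_cond ha hr.1 hr.2.le (hle r hr.1.le))]
    simp
  have hza : ∀ r, 0 ≤ r → r ≤ a → z r = y0 := fun r h1 h2 => by
    refine le_antisymm (hle r h1) ?_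
    rw [← hz0]
    exact hmono ⟨le_rfl, ha0.le⟩ ⟨h1, h2⟩ h1
  refine ⟨hza, fun T hT => ⟨hza a ha0.le le_rfl, hm0 a le_rfl, fun r hr => ?_, fun r hr => ?_,
    fun r hr => (hmd r (ha0.trans_le hr.1)).hasDerivWithinAt⟩⟩
  · exact (hz.2 r (ha0.trans_le hr.1)).1
  · rw [← pres_eq_s2 hL z (ha0.trans_le hr.1)]
    exact (hz.2 r (ha0.trans_le hr.1)).2.hasDerivWithinAt

/-- For every initial value `y₀` there exists a unique quasi shell
solution `y` with `y(0) = y₀`; its matter quantities vanish on `(0, R₀]`. -/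
theorem quasi_shell_existence_uniqueness (k ℓ L0 : ℝ)
    (hk : 0 ≤ k) (hl : -(1 / 2) ≤ ℓ) (hL : 0 < L0) (y0 : ℝ) :
    ∃ y : ℝ → ℝ, y 0 = y0 ∧ QuasiShell k ℓ L0 y ∧
      (∀ r, 0 < r → r ≤ innerRadius L0 y → rho k ℓ L0 y r = 0 ∧ pres k ℓ L0 y r = 0) ∧
      ∀ z : ℝ → ℝ, z 0 = y0 → QuasiShell k ℓ L0 z → ∀ r ≥ (0 : ℝ), z r = y r := by
  have hG := gG_matter hk hl hL
  have hP := gP_matter hk hl hL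
  have hS : 0 < √L0 := Real.sqrt_pos.2 hL
  obtain ⟨a, ha⟩ : ∃ a, a = √L0 * exp (-y0) := ⟨_, rfl⟩
  have ha0 : 0 < a := by rw [ha]; positivity
  obtain ⟨Y, N, h0, hs⟩ := global_sol hG hP hS ha
  have hY := global_deriv hP hS ha h0 hs
  have hYc : ContinuousOn Y (Ioi 0) := fun r hr => (hY r hr).continuousAt.continuousWithinAt
  have hM := mass_eq hk hl hL ha hYc h0 hs
  have hM' : hawkingMass k ℓ L0 Y = N := funext hM
  obtain ⟨-, hmd⟩ := mass_facts hk hl hL ha hYc fun r _ h => (h0 r h).1.le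
  rw [hM'] at hmd
  have hN : ContinuousOn N (Ioi 0) := fun r hr => (hmd r hr).continuousAt.continuousWithinAt
  have hlt : ∀ r, 0 < r → 2 * N r / r < 1 := by
    intro r hr
    rcases le_total r a with h | h
    · rw [(h0 r h).2]; simp
    · exact (hs r h).lt r ⟨h, le_rfl⟩
  refine ⟨Y, (h0 0 ha0.le).1, ⟨(global_contDiff hP ha0 (fun r h => (h0 r h).1) hY hN
    hlt).contDiffOn, fun r hr => ?_⟩, fun r hr hra => ?_, fun z hz0 hz r hr => ?_⟩
  · rw [hM', pres_eq_s2 hL Y hr]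
    exact ⟨hlt r hr, hY r hr⟩
  · rw [innerRadius, (h0 0 ha0.le).1, ← ha] at hra
    have h1 := zero_cond ha hr hra (h0 r hra).1.le
    rw [rho_eq_s2 hL Y hr, pres_eq_s2 hL Y hr]
    exact ⟨hG.zero _ _ hr h1, hP.zero _ _ hr h1⟩
  · obtain ⟨hza, hzs⟩ := shell_isSol hk hl hL ha hz0 hz
    rcases le_total r a with h | h
    · rw [hza r hr h, (h0 r h).1]
    · exact (IsSol.unique hG hP hS ha h (hzs r h) (hs r h) r ⟨h, le_rfl⟩).1
end
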